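/- Let 𝒰 be a critical two-dimensional update family, i.e. some semicircle of S¹ has finite intersection with 𝒮(𝒰) and every open semicircle of S¹ has nonempty intersection with 𝒮(𝒰). Then there exist constants c₁ ≥ c₂ > 0 such that for all sufficiently large n, (log n)^{−c₁} ≤ p_c(ℤ²_n, 𝒰) ≤ (log n)^{−c₂}. -/

import Mathlib

/-!
The two bounds are independent, and each uses one half of criticality.

**Lower bound, with `c₁ = 3`.** Since every open semicircle meets the stable set, finitely many
stable directions are the outer normals of polygons, with a relation `∑ λ_u u = 0` between them
(`exists_weights`). Such polygons are closed under the dynamics, so the closure of a set stays inside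
any covering of the set by polygons that are far apart (`cl_subset_polys`). Starting with the sites
of a set `A`, merge nearby polygons: the size `∑ λ_u a_u` of the support values at most adds up, up
to a constant, so that a polygon of size `s` always contains of order `s` sites of `A`. Sizes at most
double at each step, hence the infection of a segment of length of order `L` forces a polygon of
size of order `L`, and so of order `L` sites of `A` within distance of order `L`
(`exists_dense_subset`). With `L` of order `log n`, a union bound over positions and shapes shows
that this has small probability for `p < (log n) ^ (-3)` (`percProb_lt_half`).

**Upper bound.** A semicircle with finitely many stable directions can be rotated to a rational
one (`exists_int_dir`), so that in suitable coordinates and for a suitable `Q`, each integer `p` has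
a rule inside both half-planes `Q y + p x ≤ 0` and `Q y + (p + 1) x ≤ 0` (`normal_form`): the stable
directions in the upper half-plane are at most the normals `(i, Q)`. A droplet with all the faces
`Q y + i x ≤ const` grows upwards by one row as soon as each new row meets a fully infected box of
constant size (`drop_grow`): from the box, infection spreads along the row in both directions. A
rectangle also grows sideways, one column per such box, at the cost of a height of order `M` per
column (`side_grow`). If boxes are found within
distance of order `M` of every site, droplets of scale of order `M` grow.

Constant-size boxes are infected with probability `p ^ b`, so help within distance `M` fails with
probability about `exp (-M p ^ b)`. One scale `M` does not suffice: help everywhere in the torus needs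
`M` larger than `log n`, and then the seed of `M ^ 2` sites is too rare. With two scales, a seed
of size of order `M₁`, with help at scale `M₁` only in its neighbourhood, grows to size of
order `M₂` (`phase_one`), and with help at scale `M₂`, available everywhere, it then infects the
torus (`phase_two`). Taking `y = (log n) ^ (1 / 8)`, `p ^ b = 1 / y`, `M₁ ≈ y ^ 2`, `M₂ ≈ y ^ 12`,
a seed has probability at least about `exp (-y ^ 5)`, and one of the order `n ^ (1 / 2)` far apart
locations has a seed with help (`seed_prob`, `percProb_ge`, `numeric`).
-/

open scoped BigOperators

/-- Points of the plane lattice ℤ². -/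
abbrev Pt : Type := ℤ × ℤ

noncomputable section

/-- Inner product of an integer point with a real vector. -/
def dotIR (x : Pt) (u : ℝ × ℝ) : ℝ := (x.1 : ℝ) * u.1 + (x.2 : ℝ) * u.2

/-- Inner product of two real vectors. -/
def dotRR (u v : ℝ × ℝ) : ℝ := u.1 * v.1 + u.2 * v.2

/-- The unit circle S¹ ⊆ ℝ². -/
def unitCircle : Set (ℝ × ℝ) := {u | u.1 ^ 2 + u.2 ^ 2 = 1}

/-- The discrete half-plane H_u = {x ∈ ℤ² : ⟨x,u⟩ < 0}. -/
def halfPlane (u : ℝ × ℝ) : Set Pt := {x | dotIR x u < 0}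

/-- An update family: a finite nonempty family of finite subsets of ℤ²∖{0}. -/
def UpdateFamily (𝒰 : Finset (Finset Pt)) : Prop :=
  𝒰.Nonempty ∧ ∀ X ∈ 𝒰, (0 : Pt) ∉ X

/-- One step of 𝒰-bootstrap percolation. -/
def bootStep (𝒰 : Finset (Finset Pt)) (A : Set Pt) : Set Pt :=
  A ∪ {x : Pt | ∃ X ∈ 𝒰, ∀ v ∈ X, x + v ∈ A}

/-- Iterates of 𝒰-bootstrap percolation. -/
def bootIter (𝒰 : Finset (Finset Pt)) : ℕ → Set Pt → Set Pt
  | 0, A => A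
  | n + 1, A => bootStep 𝒰 (bootIter 𝒰 n A)

/-- The 𝒰-bootstrap closure [A] = ⋃_t A_t. -/
def bootClosure (𝒰 : Finset (Finset Pt)) (A : Set Pt) : Set Pt :=
  ⋃ n : ℕ, bootIter 𝒰 n A

/-- The stable set 𝒮(𝒰) = {u ∈ S¹ : X ⊄ H_u for all X ∈ 𝒰}. -/
def stableSet (𝒰 : Finset (Finset Pt)) : Set (ℝ × ℝ) :=
  {u | u ∈ unitCircle ∧ ∀ X ∈ 𝒰, ¬((X : Set Pt) ⊆ halfPlane u)}

/-- A rational direction: u = z/‖z‖ for some z ∈ ℤ²∖{0}. -/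
def IsRationalDir (u : ℝ × ℝ) : Prop :=
  ∃ z : Pt, z ≠ 0 ∧
    u = ((z.1 : ℝ) / Real.sqrt ((z.1 : ℝ) ^ 2 + (z.2 : ℝ) ^ 2),
         (z.2 : ℝ) / Real.sqrt ((z.1 : ℝ) ^ 2 + (z.2 : ℝ) ^ 2))

/-- Critical family: some (closed) semicircle meets 𝒮(𝒰) in a finite set and every open
semicircle meets 𝒮(𝒰). -/
def Critical (𝒰 : Finset (Finset Pt)) : Prop :=
  (∃ u ∈ unitCircle, (stableSet 𝒰 ∩ {w | 0 ≤ dotRR u w}).Finite) ∧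
  ∀ u ∈ unitCircle, (stableSet 𝒰 ∩ {w | 0 < dotRR u w}).Nonempty

/-- Supercritical family: some open semicircle is disjoint from 𝒮(𝒰). -/
def Supercritical (𝒰 : Finset (Finset Pt)) : Prop :=
  ∃ u ∈ unitCircle, stableSet 𝒰 ∩ {w | 0 < dotRR u w} = ∅

/-- Subcritical family: every semicircle has infinite intersection with 𝒮(𝒰). -/
def Subcritical (𝒰 : Finset (Finset Pt)) : Prop :=
  ∀ u ∈ unitCircle, (stableSet 𝒰 ∩ {w | 0 ≤ dotRR u w}).Infinite

/-- The translated half-plane H_u + a. -/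
def translHalfPlane (u : ℝ × ℝ) (a : Pt) : Set Pt := {x | dotIR (x - a) u < 0}

/-- A 𝒯-droplet: a nonempty intersection ⋂_{u ∈ 𝒯} (H_u + a_u). -/
def IsDroplet (𝒯 : Finset (ℝ × ℝ)) (D : Set Pt) : Prop :=
  D.Nonempty ∧ ∃ a : (ℝ × ℝ) → Pt, D = ⋂ u ∈ 𝒯, translHalfPlane u (a u)

/-- Euclidean distance between two lattice points. -/
def edist2 (x y : Pt) : ℝ :=
  Real.sqrt (((x.1 : ℝ) - (y.1 : ℝ)) ^ 2 + ((x.2 : ℝ) - (y.2 : ℝ)) ^ 2)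

/-- Diameter of a set of lattice points (w.r.t. the Euclidean distance). -/
def diam (D : Set Pt) : ℝ :=
  sSup {d : ℝ | ∃ x ∈ D, ∃ y ∈ D, d = edist2 x y}

/-- Translate of a set of lattice points. -/
def translatePt (a : Pt) (D : Set Pt) : Set Pt := (fun x => a + x) '' D

/-- The initial collection of the covering algorithm: one copy of D̂ per element of A. -/
def initColl (Dhat : Set Pt) (A : Finset Pt) : Multiset (Set Pt) :=
  A.val.map (fun a => translatePt a Dhat)

/-- Two sets lie within Euclidean distance κ of each other. -/
def DropletsClose (κ : ℝ) (D E : Set Pt) : Prop :=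
  ∃ x ∈ D, ∃ y ∈ E, edist2 x y ≤ κ

/-- D is the smallest 𝒯-droplet containing S. -/
def SmallestDroplet (𝒯 : Finset (ℝ × ℝ)) (S : Set Pt) (D : Set Pt) : Prop :=
  IsDroplet 𝒯 D ∧ S ⊆ D ∧ ∀ D' : Set Pt, IsDroplet 𝒯 D' → S ⊆ D' → D ⊆ D'

/-- One merging step of the covering algorithm. -/
def MergeStep (κ : ℝ) (𝒯 : Finset (ℝ × ℝ)) (C C' : Multiset (Set Pt)) : Prop :=
  ∃ (D₁ D₂ D₃ : Set Pt) (C₀ : Multiset (Set Pt)),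
    C = D₁ ::ₘ D₂ ::ₘ C₀ ∧ DropletsClose κ D₁ D₂ ∧
    SmallestDroplet 𝒯 (D₁ ∪ D₂) D₃ ∧ C' = D₃ ::ₘ C₀

/-- A terminal collection: all pairwise distances exceed κ. -/
def TerminalColl (κ : ℝ) (C : Multiset (Set Pt)) : Prop :=
  ∀ (D₁ D₂ : Set Pt) (C₀ : Multiset (Set Pt)),
    C = D₁ ::ₘ D₂ ::ₘ C₀ → ¬ DropletsClose κ D₁ D₂

/-- D̂ is a valid base droplet for the covering algorithm with parameter κ:
a finite 𝒯-droplet containing 0 with κ/2 ≤ diam(D̂) ≤ κ. -/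
def GoodBase (κ : ℝ) (𝒯 : Finset (ℝ × ℝ)) (Dhat : Set Pt) : Prop :=
  IsDroplet 𝒯 Dhat ∧ Dhat.Finite ∧ (0 : Pt) ∈ Dhat ∧ κ / 2 ≤ diam Dhat ∧ diam Dhat ≤ κ

/-- The collection C is reachable by the covering algorithm started from A. -/
def Reachable (κ : ℝ) (𝒯 : Finset (ℝ × ℝ)) (Dhat : Set Pt) (A : Finset Pt)
    (C : Multiset (Set Pt)) : Prop :=
  Relation.ReflTransGen (MergeStep κ 𝒯) (initColl Dhat A) C

/-- A droplet is covered by A if it belongs to some collection arising during some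
execution of the covering algorithm. -/
def CoveredBy (κ : ℝ) (𝒯 : Finset (ℝ × ℝ)) (Dhat : Set Pt) (A : Finset Pt)
    (D : Set Pt) : Prop :=
  ∃ C : Multiset (Set Pt), Reachable κ 𝒯 Dhat A C ∧ D ∈ C

/-- The lattice line l_y = {x ∈ ℤ² : ⟨x,y⟩ = 0}. -/
def lineLat (y : ℝ × ℝ) : Set Pt := {x | dotIR x y = 0}

/-- w generates the rank-one lattice l_y. -/
def GeneratesLine (w : Pt) (y : ℝ × ℝ) : Prop :=
  lineLat y = Set.range (fun k : ℤ => ((k * w.1, k * w.2) : Pt))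

/-- The segment Y = {z₀ + j·w : 0 ≤ j < L} of L consecutive points of l_y. -/
def segmentY (z₀ w : Pt) (L : ℕ) : Finset Pt :=
  (Finset.range L).image (fun j : ℕ => ((z₀.1 + (j : ℤ) * w.1, z₀.2 + (j : ℤ) * w.2) : Pt))

open Classical in
/-- The configuration of ℤ² determined by η ∈ {+,−}^Y: state − (false) on H_y, the values of η
on Y, and + (true) elsewhere. -/
def sigmaCfg (y : ℝ × ℝ) (Y : Finset Pt) (η : Pt → Bool) (x : Pt) : Bool :=
  if x ∈ halfPlane y then false else if x ∈ Y then η x else true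

/-- r_v(η): the number of rules X ∈ 𝒰 such that every point of v + X has state opposite
to that of v (in the configuration σ_η). -/
def rval (𝒰 : Finset (Finset Pt)) (y : ℝ × ℝ) (Y : Finset Pt) (η : Pt → Bool) (v : Pt) : ℕ :=
  {X : Finset Pt | X ∈ 𝒰 ∧ ∀ p ∈ X, sigmaCfg y Y η (v + p) = !(sigmaCfg y Y η v)}.ncard

/-- η with the state at v flipped. -/
def flipAt (η : Pt → Bool) (v : Pt) : Pt → Bool := fun x => if x = v then !(η x) else η x

/-- The generator 𝕍 of the restricted 1-dimensional 𝒰-voter dynamics on Y. -/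
def genV (𝒰 : Finset (Finset Pt)) (y : ℝ × ℝ) (Y : Finset Pt)
    (g : (Pt → Bool) → ℝ) (η : Pt → Bool) : ℝ :=
  ∑ v ∈ Y, ((rval 𝒰 y Y η v : ℝ) / (𝒰.card : ℝ)) * (g (flipAt η v) - g η)

/-- The natural projection ℤ² → ℤ²_n. -/
def torusProj (n : ℕ) (v : Pt) : ZMod n × ZMod n := ((v.1 : ZMod n), (v.2 : ZMod n))

/-- One step of 𝒰-bootstrap percolation on the torus ℤ²_n. -/
def torusStep (n : ℕ) (𝒰 : Finset (Finset Pt)) (A : Set (ZMod n × ZMod n)) :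
    Set (ZMod n × ZMod n) :=
  A ∪ {x | ∃ X ∈ 𝒰, ∀ v ∈ X, x + torusProj n v ∈ A}

/-- Iterates of 𝒰-bootstrap percolation on the torus. -/
def torusIter (n : ℕ) (𝒰 : Finset (Finset Pt)) :
    ℕ → Set (ZMod n × ZMod n) → Set (ZMod n × ZMod n)
  | 0, A => A
  | t + 1, A => torusStep n 𝒰 (torusIter n 𝒰 t A)

/-- The 𝒰-bootstrap closure on the torus. -/
def torusClosure (n : ℕ) (𝒰 : Finset (Finset Pt)) (A : Set (ZMod n × ZMod n)) :
    Set (ZMod n × ZMod n) :=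
  ⋃ t : ℕ, torusIter n 𝒰 t A

open Classical in
/-- ℙ_p([A] = ℤ²_n) for a p-random subset A of ℤ²_n (Bernoulli product measure written as
a finite sum over configurations). -/
def percProb (n : ℕ) (𝒰 : Finset (Finset Pt)) (p : ℝ) : ℝ :=
  if h : n = 0 then 0 else
    haveI : NeZero n := ⟨h⟩
    ∑ ω : ZMod n × ZMod n → Bool,
      (if torusClosure n 𝒰 {x | ω x = true} = Set.univ then (1 : ℝ) else 0) *
        p ^ (Finset.univ.filter (fun x => ω x = true)).card *
        (1 - p) ^ (Finset.univ.filter (fun x => ω x = false)).card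

/-- The critical probability p_c(ℤ²_n, 𝒰). -/
def pCrit (n : ℕ) (𝒰 : Finset (Finset Pt)) : ℝ :=
  sInf {p : ℝ | p ∈ Set.Icc (0 : ℝ) 1 ∧ 1 / 2 ≤ percProb n 𝒰 p}

/-- The point of S¹ at angle θ. -/
def circlePt (θ : ℝ) : ℝ × ℝ := (Real.cos θ, Real.sin θ)

end

set_option linter.unusedSectionVars false

namespace PolyLog

/-! ### Product measure on configurations -/

section Prob

variable {α : Type*} [Fintype α] [DecidableEq α]

/-- Bernoulli weight of a configuration. -/
noncomputable def wt (p : ℝ) (ω : α → Bool) : ℝ := ∏ x, if ω x = true then p else 1 - p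

open Classical in
/-- Probability of an event under the product Bernoulli measure, as a finite sum. -/
noncomputable def pr (p : ℝ) (E : Set (α → Bool)) : ℝ := ∑ ω, if ω ∈ E then wt p ω else 0

/-- The event `E` is determined by the coordinates in `S`. -/
def Dep (S : Set α) (E : Set (α → Bool)) : Prop :=
  ∀ ω ω' : α → Bool, (∀ x ∈ S, ω x = ω' x) → (ω ∈ E ↔ ω' ∈ E)

lemma wt_nonneg {p : ℝ} (h0 : 0 ≤ p) (h1 : p ≤ 1) (ω : α → Bool) : 0 ≤ wt p ω := by
  unfold wt
  refine Finset.prod_nonneg fun x _ => ?_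
  split_ifs <;> linarith

lemma sum_wt (p : ℝ) : ∑ ω : α → Bool, wt p ω = 1 := by
  unfold wt
  have h := Finset.prod_univ_sum (R := ℝ) (fun _ : α => (Finset.univ : Finset Bool))
    (fun _ b => if b = true then p else 1 - p)
  rw [Fintype.piFinset_univ] at h
  rw [← h]
  simp

lemma pr_nonneg {p : ℝ} (h0 : 0 ≤ p) (h1 : p ≤ 1) (E : Set (α → Bool)) : 0 ≤ pr p E := by
  unfold pr
  refine Finset.sum_nonneg fun ω _ => ?_
  split_ifs
  · exact wt_nonneg h0 h1 ω
  · exact le_rfl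

lemma pr_mono {p : ℝ} (h0 : 0 ≤ p) (h1 : p ≤ 1) {E F : Set (α → Bool)} (h : E ⊆ F) :
    pr p E ≤ pr p F := by
  unfold pr
  refine Finset.sum_le_sum fun ω _ => ?_
  have := wt_nonneg h0 h1 ω
  by_cases h1 : ω ∈ E
  · simp [h1, h h1]
  · simp only [h1, if_false]; split_ifs <;> simp [this]

lemma pr_univ (p : ℝ) : pr p (Set.univ : Set (α → Bool)) = 1 := by
  simp [pr, sum_wt]

lemma pr_compl (p : ℝ) (E : Set (α → Bool)) : pr p Eᶜ = 1 - pr p E := by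
  rw [← sum_wt (α := α) p, pr, pr, ← Finset.sum_sub_distrib]
  refine Finset.sum_congr rfl fun ω _ => ?_
  by_cases h : ω ∈ E <;> simp [h]

lemma pr_le_one {p : ℝ} (h0 : 0 ≤ p) (h1 : p ≤ 1) (E : Set (α → Bool)) : pr p E ≤ 1 :=
  (pr_mono h0 h1 (Set.subset_univ E)).trans (pr_univ p).le

lemma pr_union_le {p : ℝ} (h0 : 0 ≤ p) (h1 : p ≤ 1) (E F : Set (α → Bool)) :
    pr p (E ∪ F) ≤ pr p E + pr p F := by
  unfold pr
  rw [← Finset.sum_add_distrib]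
  refine Finset.sum_le_sum fun ω _ => ?_
  have := wt_nonneg h0 h1 ω
  by_cases hE : ω ∈ E <;> by_cases hF : ω ∈ F <;> simp [hE, hF, this]

lemma pr_biUnion_le {p : ℝ} (h0 : 0 ≤ p) (h1 : p ≤ 1) {ι : Type*} (s : Finset ι)
    (E : ι → Set (α → Bool)) :
    pr p (⋃ i ∈ s, E i) ≤ ∑ i ∈ s, pr p (E i) := by
  classical
  induction s using Finset.induction_on with
  | empty => simp [pr]
  | insert a s ha ih =>
    rw [Finset.set_biUnion_insert, Finset.sum_insert ha]
    exact (pr_union_le h0 h1 _ _).trans (by linarith)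

lemma pr_biUnion_le' {p : ℝ} (h0 : 0 ≤ p) (h1 : p ≤ 1) {ι : Type*} (s : Finset ι)
    (E : ι → Set (α → Bool)) (b : ℝ) (hb : ∀ i ∈ s, pr p (E i) ≤ b) :
    pr p (⋃ i ∈ s, E i) ≤ s.card * b := by
  refine (pr_biUnion_le h0 h1 s E).trans ?_
  refine (Finset.sum_le_sum hb).trans ?_
  simp

lemma Dep.mono {S T : Set α} {E : Set (α → Bool)} (h : Dep S E) (hST : S ⊆ T) : Dep T E :=
  fun ω ω' hh => h ω ω' fun x hx => hh x (hST hx)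

lemma Dep.compl {S : Set α} {E : Set (α → Bool)} (h : Dep S E) : Dep S Eᶜ :=
  fun ω ω' hh => not_congr (h ω ω' hh)

lemma Dep.inter {S : Set α} {E F : Set (α → Bool)} (h : Dep S E) (h' : Dep S F) :
    Dep S (E ∩ F) :=
  fun ω ω' hh => and_congr (h ω ω' hh) (h' ω ω' hh)

lemma pr_inter_aux (p : ℝ) (S : Set α) {E F : Set (α → Bool)} (hE : Dep S E)
    (hF : Dep Sᶜ F) : pr p (E ∩ F) = pr p E * pr p F := by
  classical
  let e := Equiv.piEquivPiSubtypeProd (fun x => x ∈ S) (fun _ : α => Bool)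
  let w₁ : ({x // x ∈ S} → Bool) → ℝ := fun a => wt p a
  let w₂ : ({x // ¬ x ∈ S} → Bool) → ℝ := fun a => wt p a
  have hw : ∀ ab, wt p (e.symm ab) = w₁ ab.1 * w₂ ab.2 := by
    rintro ⟨a, b⟩
    simp only [w₁, w₂, wt]
    rw [← Fintype.prod_subtype_mul_prod_subtype (fun x => x ∈ S)]
    congr 1
    · refine Finset.prod_congr rfl fun x _ => ?_
      simp [e, Equiv.piEquivPiSubtypeProd, x.2]
    · refine Finset.prod_congr rfl fun x _ => ?_
      simp [e, Equiv.piEquivPiSubtypeProd, x.2]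
  let f₁ : ({x // x ∈ S} → Bool) → ℝ := fun a => if e.symm (a, fun _ => true) ∈ E then 1 else 0
  let f₂ : ({x // ¬ x ∈ S} → Bool) → ℝ := fun b => if e.symm (fun _ => true, b) ∈ F then 1 else 0
  have h1 : ∀ a b, (e.symm (a, b) ∈ E ↔ e.symm (a, fun _ => true) ∈ E) := by
    intro a b
    refine hE _ _ fun x hx => ?_
    simp [e, Equiv.piEquivPiSubtypeProd, hx]
  have h2 : ∀ a b, (e.symm (a, b) ∈ F ↔ e.symm (fun _ => true, b) ∈ F) := by
    intro a b
    refine hF _ _ fun x hx => ?_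
    have hx' : x ∉ S := hx
    simp [e, Equiv.piEquivPiSubtypeProd, hx']
  have key : ∀ G : Set (α → Bool), pr p G
      = ∑ ab : ({x // x ∈ S} → Bool) × ({x // ¬ x ∈ S} → Bool),
        if e.symm ab ∈ G then w₁ ab.1 * w₂ ab.2 else 0 := by
    intro G
    unfold pr
    rw [← Equiv.sum_comp e.symm]
    exact Finset.sum_congr rfl fun ab _ => by rw [hw]
  have s1 : ∑ a, w₁ a = 1 := sum_wt p
  have s2 : ∑ b, w₂ b = 1 := sum_wt p
  have kE : pr p E = ∑ a, f₁ a * w₁ a := by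
    rw [key, Fintype.sum_prod_type]
    refine Finset.sum_congr rfl fun a _ => ?_
    have : ∀ b, (if e.symm (a, b) ∈ E then w₁ a * w₂ b else 0) = f₁ a * w₁ a * w₂ b := by
      intro b
      simp only [f₁, h1 a b]
      split_ifs <;> simp
    simp only [this, ← Finset.mul_sum, s2, mul_one]
  have kF : pr p F = ∑ b, f₂ b * w₂ b := by
    rw [key, Fintype.sum_prod_type_right]
    refine Finset.sum_congr rfl fun b _ => ?_
    have : ∀ a, (if e.symm (a, b) ∈ F then w₁ a * w₂ b else 0) = w₁ a * (f₂ b * w₂ b) := by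
      intro a
      simp only [f₂, h2 a b]
      split_ifs <;> simp
    simp only [this, ← Finset.sum_mul, s1, one_mul]
  rw [key, kE, kF, Fintype.sum_prod_type, Finset.sum_mul_sum]
  refine Finset.sum_congr rfl fun a _ => Finset.sum_congr rfl fun b _ => ?_
  simp only [Set.mem_inter_iff, f₁, f₂, h1 a b, h2 a b]
  by_cases hh1 : e.symm (a, fun _ => true) ∈ E <;> by_cases hh2 : e.symm (fun _ => true, b) ∈ F <;>
    simp [hh1, hh2]

/-- Events determined by disjoint sets of sites are independent. -/
lemma pr_inter (p : ℝ) {S T : Set α} (hST : Disjoint S T) {E F : Set (α → Bool)} (hE : Dep S E)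
    (hF : Dep T F) : pr p (E ∩ F) = pr p E * pr p F :=
  pr_inter_aux p S hE (hF.mono (Set.subset_compl_iff_disjoint_left.mpr hST))

lemma pr_all (p : ℝ) (S : Finset α) :
    pr p {ω : α → Bool | ∀ x ∈ S, ω x = true} = p ^ S.card := by
  have h := Finset.prod_univ_sum (R := ℝ) (fun _ : α => (Finset.univ : Finset Bool))
    (fun x b => if b = true then p else if x ∈ S then 0 else 1 - p)
  rw [Fintype.piFinset_univ] at h
  have hl : (∏ x : α, ∑ b : Bool, (if b = true then p else if x ∈ S then 0 else 1 - p))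
      = p ^ S.card := by
    have : ∀ x : α, ∑ b : Bool, (if b = true then p else if x ∈ S then 0 else 1 - p)
        = if x ∈ S then p else 1 := by
      intro x; by_cases hx : x ∈ S <;> simp [hx]
    simp only [this]
    rw [Finset.prod_ite]
    simp
  rw [← hl, h]
  unfold pr
  refine Finset.sum_congr rfl fun ω _ => ?_
  simp only [Set.mem_ofPred_eq]
  split_ifs with hω
  · refine Finset.prod_congr rfl fun x _ => ?_
    by_cases hx : x ∈ S
    · simp [hω x hx]
    · simp [hx]
  · push Not at hω
    obtain ⟨x, hx, hx'⟩ := hω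
    symm
    refine Finset.prod_eq_zero (Finset.mem_univ x) ?_
    simp [hx, hx']

lemma dep_all (S : Finset α) : Dep (S : Set α) {ω : α → Bool | ∀ x ∈ S, ω x = true} := by
  intro ω ω' h
  simp only [Set.mem_ofPred_eq]
  exact forall₂_congr fun x hx => by rw [h x (by simpa using hx)]

/-- Independent trials, each of success probability at least `q`, all fail with probability at
most `(1 - q) ^ M`. -/
lemma pr_none_le {p q : ℝ} (h0 : 0 ≤ p) (h1 : p ≤ 1) (M : ℕ) (S : ℕ → Set α)
    (E : ℕ → Set (α → Bool)) (hE : ∀ k < M, Dep (S k) (E k))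
    (hS : ∀ k < M, ∀ l < M, k ≠ l → Disjoint (S k) (S l)) (hq : ∀ k < M, q ≤ pr p (E k)) :
    pr p {ω | ∀ k < M, ω ∉ E k} ≤ (1 - q) ^ M := by
  induction M with
  | zero => simpa using pr_le_one h0 h1 _
  | succ M ih =>
    have ih' := ih (fun k hk => hE k (by omega)) (fun k hk l hl => hS k (by omega) l (by omega))
      (fun k hk => hq k (by omega))
    have heq : {ω : α → Bool | ∀ k < M + 1, ω ∉ E k} = {ω | ∀ k < M, ω ∉ E k} ∩ (E M)ᶜ := by
      ext ω
      simp only [Set.mem_ofPred_eq, Set.mem_inter_iff, Set.mem_compl_iff]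
      constructor
      · intro h; exact ⟨fun k hk => h k (by omega), h M (by omega)⟩
      · rintro ⟨h, h'⟩ k hk
        rcases Nat.lt_succ_iff_lt_or_eq.mp hk with h1 | h1
        · exact h k h1
        · rw [h1]; exact h'
    have hdis : Disjoint (⋃ k ∈ Finset.range M, S k) (S M) := by
      rw [Set.disjoint_left]
      intro x hx hx'
      simp only [Finset.mem_range, Set.mem_iUnion] at hx
      obtain ⟨k, hk, hx⟩ := hx
      exact Set.disjoint_left.mp (hS k (by omega) M (by omega) (by omega)) hx hx'
    rw [heq, pr_inter p hdis _ (hE M (by omega)).compl, pr_compl, pow_succ]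
    · have := hq M (by omega)
      have h2 := pr_le_one h0 h1 (E M)
      have h3 := pr_nonneg h0 h1 {ω : α → Bool | ∀ k < M, ω ∉ E k}
      exact mul_le_mul ih' (by linarith) (by linarith) (h3.trans ih')
    · intro ω ω' h
      simp only [Set.mem_ofPred_eq]
      refine forall₂_congr fun k hk => not_congr (hE k (by omega) ω ω' fun x hx => h x ?_)
      simp only [Finset.mem_range, Set.mem_iUnion]
      exact ⟨k, hk, hx⟩

/-- Filling a set of sites is positively correlated with every increasing event. -/
lemma pr_all_inter_ge {p : ℝ} (h0 : 0 ≤ p) (h1 : p ≤ 1) (S : Finset α) (F : Set (α → Bool))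
    (hF : ∀ ω ω' : α → Bool, (∀ x, ω x = true → ω' x = true) → ω ∈ F → ω' ∈ F) :
    p ^ S.card * pr p F ≤ pr p ({ω | ∀ x ∈ S, ω x = true} ∩ F) := by
  classical
  let φ : (α → Bool) → (α → Bool) := fun ω x => if x ∈ S then true else ω x
  have h2 : {ω : α → Bool | ∀ x ∈ S, ω x = true} ∩ F
      = {ω : α → Bool | ∀ x ∈ S, ω x = true} ∩ {ω | φ ω ∈ F} := by
    ext ω
    simp only [Set.mem_inter_iff, Set.mem_ofPred_eq]
    refine and_congr_right fun h => ?_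
    have : φ ω = ω := by
      funext x
      by_cases hx : x ∈ S
      · simp [φ, hx, h x hx]
      · simp [φ, hx]
    rw [this]
  have h3 : Dep ((S : Set α)ᶜ) {ω | φ ω ∈ F} := by
    intro ω ω' h
    have : φ ω = φ ω' := by
      funext x
      by_cases hx : x ∈ S
      · simp [φ, hx]
      · simp only [φ, hx, if_false]
        exact h x (by simpa using hx)
    simp only [Set.mem_ofPred_eq, this]
  rw [h2, pr_inter p disjoint_compl_right (dep_all S) h3, pr_all]
  refine mul_le_mul_of_nonneg_left (pr_mono h0 h1 ?_) (pow_nonneg h0 _)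
  intro ω hω
  refine hF ω _ (fun x hx => ?_) hω
  simp [φ, hx]

end Prob

lemma percProb_eq (n : ℕ) [NeZero n] (𝒰 : Finset (Finset Pt)) (p : ℝ) :
    percProb n 𝒰 p
      = pr p {ω : ZMod n × ZMod n → Bool | torusClosure n 𝒰 {x | ω x = true} = Set.univ} := by
  classical
  have hn : n ≠ 0 := NeZero.ne n
  unfold percProb pr
  rw [dif_neg hn]
  refine Finset.sum_congr rfl fun ω _ => ?_
  have hw : wt p ω = p ^ (Finset.univ.filter (fun x => ω x = true)).card *
        (1 - p) ^ (Finset.univ.filter (fun x => ω x = false)).card := by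
    unfold wt
    rw [Finset.prod_ite]
    simp
  simp only [Set.mem_ofPred_eq]
  rw [hw]
  split_ifs with h1
  · rw [one_mul]
  · ring

/-! ### Stable directions positively spanning the plane -/

lemma isCompact_unitCircle : IsCompact unitCircle := by
  refine Metric.isCompact_of_isClosed_isBounded ?_ ?_
  · have : unitCircle = (fun u : ℝ × ℝ => u.1 ^ 2 + u.2 ^ 2) ⁻¹' {1} := rfl
    rw [this]
    exact IsClosed.preimage (by fun_prop) isClosed_singleton
  · refine (Metric.isBounded_closedBall (x := (0 : ℝ × ℝ)) (r := 1)).subset ?_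
    intro u hu
    have hu : u.1 ^ 2 + u.2 ^ 2 = 1 := hu
    rw [mem_closedBall_zero_iff, Prod.norm_def, max_le_iff, Real.norm_eq_abs, Real.norm_eq_abs]
    exact ⟨abs_le_one_iff_mul_self_le_one.mpr (by nlinarith [sq_nonneg u.2]),
      abs_le_one_iff_mul_self_le_one.mpr (by nlinarith [sq_nonneg u.1])⟩

/-- If every open half-plane meets `S`, finitely many elements of `S` have as nonnegative
combinations all vectors of the plane: a ball around `0` lies in their convex hull, since otherwise
a separating functional would give an open half-plane nearly avoiding them. -/
lemma exists_finset_cone {S : Set (ℝ × ℝ)}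
    (h : ∀ u ∈ unitCircle, (S ∩ {w | 0 < dotRR u w}).Nonempty) :
    ∃ T : Finset (ℝ × ℝ), (T : Set (ℝ × ℝ)) ⊆ S ∧
      ∀ w : ℝ × ℝ, ∃ a : ℝ × ℝ → ℝ, (∀ u, 0 ≤ a u) ∧ ∑ u ∈ T, a u • u = w := by
  classical
  choose! s hs using h
  have hcont : ∀ v : ℝ × ℝ, Continuous fun d : ℝ × ℝ => dotRR d v := by
    intro v; unfold dotRR; fun_prop
  obtain ⟨t, ht⟩ := isCompact_unitCircle.elim_finite_subcover
    (fun u : unitCircle => {d | 0 < dotRR d (s u)})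
    (fun u => isOpen_lt continuous_const (hcont _))
    (fun d hd => Set.mem_iUnion.mpr ⟨⟨d, hd⟩, (hs d hd).2⟩)
  let T : Finset (ℝ × ℝ) := t.image fun u : unitCircle => s u.1
  have hTS : (T : Set (ℝ × ℝ)) ⊆ S := by
    intro u hu
    simp only [T, Finset.coe_image, Set.mem_image] at hu
    obtain ⟨v, -, rfl⟩ := hu
    exact (hs v v.2).1
  have hT : ∀ d ∈ unitCircle, ∃ v ∈ T, 0 < dotRR d v := by
    intro d hd
    have := ht hd
    simp only [Set.mem_iUnion] at this
    obtain ⟨u, hu, hpos⟩ := this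
    exact ⟨s u, Finset.mem_image_of_mem _ hu, hpos⟩
  have hne : T.Nonempty := by
    obtain ⟨v, hv, -⟩ := hT (1, 0) (by simp [unitCircle])
    exact ⟨v, hv⟩
  -- `δ` is the minimum over directions `d` of `max_{v ∈ T} ⟨d, v⟩`, so positive by compactness
  obtain ⟨d₀, hd₀, hmin⟩ := isCompact_unitCircle.exists_isMinOn
    (f := fun d => T.sup' hne fun v => dotRR d v) ⟨(1, 0), by simp [unitCircle]⟩
    (Continuous.finset_sup'_apply hne fun v _ => hcont v).continuousOn
  set δ := T.sup' hne fun v => dotRR d₀ v with hδ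
  have hδpos : 0 < δ := by
    obtain ⟨v, hv, hpos⟩ := hT d₀ hd₀
    exact hpos.trans_le (Finset.le_sup' (fun v => dotRR d₀ v) hv)
  have hδT : ∀ d ∈ unitCircle, ∃ v ∈ T, δ ≤ dotRR d v := by
    intro d hd
    obtain ⟨v, hv, hveq⟩ := T.exists_mem_eq_sup' hne fun v => dotRR d v
    exact ⟨v, hv, (hmin hd).trans hveq.le⟩
  refine ⟨T, hTS, fun w => ?_⟩
  set ε := δ / (2 * (|w.1| + |w.2| + 1)) with hε
  have hden : 0 < 2 * (|w.1| + |w.2| + 1) := by positivity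
  have hεpos : 0 < ε := div_pos hδpos hden
  have hmem : ε • w ∈ convexHull ℝ (T : Set (ℝ × ℝ)) := by
    by_contra hnot
    obtain ⟨f, c, hf1, hf2⟩ := geometric_hahn_banach_closed_point (convex_convexHull ℝ _)
      (T.finite_toSet.isClosed_convexHull ℝ) hnot
    have hf : ∀ x : ℝ × ℝ, f x = dotRR (f (1, 0), f (0, 1)) x := by
      intro x
      have : x = x.1 • ((1 : ℝ), (0 : ℝ)) + x.2 • ((0 : ℝ), (1 : ℝ)) := by ext <;> simp
      conv_lhs => rw [this]
      rw [map_add, map_smul, map_smul]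
      simp only [dotRR, smul_eq_mul]
      ring
    have hlt : ∀ v ∈ T, f v < f (ε • w) := fun v hv =>
      (hf1 v (subset_convexHull ℝ _ hv)).trans hf2
    set a := f (1, 0)
    set b := f (0, 1)
    set r := Real.sqrt (a ^ 2 + b ^ 2) with hr
    have hrsq : r ^ 2 = a ^ 2 + b ^ 2 := Real.sq_sqrt (by positivity)
    have hr0 : 0 ≤ r := Real.sqrt_nonneg _
    rcases hr0.eq_or_lt with h0 | hpos
    · rw [← h0] at hrsq
      have ha : a = 0 := by nlinarith [sq_nonneg a, sq_nonneg b]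
      have hb : b = 0 := by nlinarith [sq_nonneg a, sq_nonneg b]
      obtain ⟨v, hv⟩ := hne
      have := hlt v hv
      rw [hf, hf (ε • w)] at this
      simp [dotRR, ha, hb] at this
    · obtain ⟨v, hv, hvδ⟩ := hδT (a / r, b / r) (by
        simp only [unitCircle, Set.mem_ofPred_eq]
        field_simp
        exact hrsq.symm)
      have h1 := hlt v hv
      rw [hf, hf (ε • w)] at h1
      have h2 : dotRR (a, b) v = r * dotRR (a / r, b / r) v := by
        simp only [dotRR]; field_simp
      have har : |a| ≤ r := by
        rw [hr, ← Real.sqrt_sq_eq_abs]; exact Real.sqrt_le_sqrt (by nlinarith [sq_nonneg b])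
      have hbr : |b| ≤ r := by
        rw [hr, ← Real.sqrt_sq_eq_abs]; exact Real.sqrt_le_sqrt (by nlinarith [sq_nonneg a])
      have h3 : dotRR (a, b) (ε • w) ≤ r * (ε * (|w.1| + |w.2|)) := by
        have e1 : a * w.1 ≤ r * |w.1| := by
          calc a * w.1 ≤ |a * w.1| := le_abs_self _
            _ = |a| * |w.1| := abs_mul _ _
            _ ≤ r * |w.1| := by gcongr
        have e2 : b * w.2 ≤ r * |w.2| := by
          calc b * w.2 ≤ |b * w.2| := le_abs_self _
            _ = |b| * |w.2| := abs_mul _ _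
            _ ≤ r * |w.2| := by gcongr
        simp only [dotRR, Prod.smul_fst, Prod.smul_snd, smul_eq_mul]
        calc a * (ε * w.1) + b * (ε * w.2) = ε * (a * w.1 + b * w.2) := by ring
          _ ≤ ε * (r * |w.1| + r * |w.2|) := by gcongr
          _ = _ := by ring
      have h4 : ε * (|w.1| + |w.2|) < δ := by
        rw [hε, div_mul_eq_mul_div, div_lt_iff₀ hden]
        nlinarith [abs_nonneg w.1, abs_nonneg w.2]
      have h5 : r * δ ≤ r * dotRR (a / r, b / r) v := by gcongr
      have h6 : r * (ε * (|w.1| + |w.2|)) < r * δ := by gcongr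
      linarith
  rw [Finset.mem_convexHull'] at hmem
  obtain ⟨g, hg0, -, hg⟩ := hmem
  refine ⟨fun u => if u ∈ T then ε⁻¹ * g u else 0, fun u => ?_, ?_⟩
  · dsimp only
    split_ifs with hu
    · exact mul_nonneg (inv_nonneg.mpr hεpos.le) (hg0 u hu)
    · exact le_rfl
  · have : ∑ u ∈ T, (if u ∈ T then ε⁻¹ * g u else 0) • u = ∑ u ∈ T, ε⁻¹ • (g u • u) :=
      Finset.sum_congr rfl fun u hu => by rw [if_pos hu, smul_smul]
    rw [this, ← Finset.smul_sum, hg, smul_smul, inv_mul_cancel₀ hεpos.ne', one_smul]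

/-- A positive linear dependence `∑ λ_u u = 0` among finitely many directions of `S`, together
with a bound for a lattice vector in terms of its products with those directions. -/
lemma exists_weights {S : Set (ℝ × ℝ)}
    (h : ∀ u ∈ unitCircle, (S ∩ {w | 0 < dotRR u w}).Nonempty) :
    ∃ (T : Finset (ℝ × ℝ)) (lam : ℝ × ℝ → ℝ) (C : ℝ), (T : Set (ℝ × ℝ)) ⊆ S ∧
      (∀ u, 1 ≤ lam u) ∧ (∑ u ∈ T, lam u * u.1 = 0) ∧ (∑ u ∈ T, lam u * u.2 = 0) ∧ 0 ≤ C ∧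
      ∀ (z : Pt) (b : ℝ), (∀ u ∈ T, dotIR z u ≤ b) → 0 ≤ b →
        |(z.1 : ℝ)| ≤ C * b ∧ |(z.2 : ℝ)| ≤ C * b := by
  classical
  obtain ⟨T, hTS, hcone⟩ := exists_finset_cone h
  choose a ha0 ha using hcone
  have hfst : ∀ w, ∑ u ∈ T, a w u * u.1 = w.1 := by
    intro w
    have := congrArg Prod.fst (ha w)
    simpa [Prod.fst_sum] using this
  have hsnd : ∀ w, ∑ u ∈ T, a w u * u.2 = w.2 := by
    intro w
    have := congrArg Prod.snd (ha w)
    simpa [Prod.snd_sum] using this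
  let m : ℝ × ℝ → ℝ := fun w => ∑ u ∈ T, a w u
  have hm : ∀ w, 0 ≤ m w := fun w => Finset.sum_nonneg fun u _ => ha0 w u
  have hdot : ∀ (z : Pt) (b : ℝ) (w : ℝ × ℝ), (∀ u ∈ T, dotIR z u ≤ b) → dotIR z w ≤ m w * b := by
    intro z b w hz
    have : dotIR z w = ∑ u ∈ T, a w u * dotIR z u := by
      simp only [dotIR]
      rw [← hfst w, ← hsnd w, Finset.mul_sum, Finset.mul_sum, ← Finset.sum_add_distrib]
      exact Finset.sum_congr rfl fun u _ => by ring
    rw [this, Finset.sum_mul]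
    exact Finset.sum_le_sum fun u hu => mul_le_mul_of_nonneg_left (hz u hu) (ha0 w u)
  refine ⟨T, fun u => 1 + ∑ v ∈ T, a (-v) u, m (1, 0) + m (-1, 0) + m (0, 1) + m (0, -1), hTS,
    fun u => ?_, ?_, ?_, ?_, ?_⟩
  · have := Finset.sum_nonneg (s := T) (f := fun v => a (-v) u) fun v _ => ha0 (-v) u
    linarith
  · simp only [add_mul, one_mul, Finset.sum_add_distrib, Finset.sum_mul]
    rw [Finset.sum_comm]
    simp [hfst]
  · simp only [add_mul, one_mul, Finset.sum_add_distrib, Finset.sum_mul]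
    rw [Finset.sum_comm]
    simp [hsnd]
  · have := hm (1, 0); have := hm (-1, 0); have := hm (0, 1); have := hm (0, -1); linarith
  · intro z b hz hb
    have h1 := hdot z b (1, 0) hz
    have h2 := hdot z b (-1, 0) hz
    have h3 := hdot z b (0, 1) hz
    have h4 := hdot z b (0, -1) hz
    have i1 := mul_nonneg (hm (1, 0)) hb
    have i2 := mul_nonneg (hm (-1, 0)) hb
    have i3 := mul_nonneg (hm (0, 1)) hb
    have i4 := mul_nonneg (hm (0, -1)) hb
    simp only [dotIR] at h1 h2 h3 h4
    simp only [add_mul]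
    constructor <;> rw [abs_le] <;> constructor <;> linarith

/-! ### Clusters confined by stable polygons -/

/-- The closure of `A` under `𝒰` in the plane, as an inductive predicate. -/
inductive Cl (𝒰 : Finset (Finset Pt)) (A : Set Pt) : Pt → Prop
  | base (x : Pt) : x ∈ A → Cl 𝒰 A x
  | step (x : Pt) (X : Finset Pt) : X ∈ 𝒰 → (∀ v ∈ X, Cl 𝒰 A (x + v)) → Cl 𝒰 A x

lemma Cl.mono {𝒰 : Finset (Finset Pt)} {A B : Set Pt} (h : A ⊆ B) {x : Pt} (hx : Cl 𝒰 A x) :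
    Cl 𝒰 B x := by
  induction hx with
  | base x hx => exact .base x (h hx)
  | step x X hX _ ih => exact .step x X hX ih

lemma Cl.exists_finset {𝒰 : Finset (Finset Pt)} {A : Set Pt} {x : Pt} (hx : Cl 𝒰 A x) :
    ∃ F : Finset Pt, (F : Set Pt) ⊆ A ∧ Cl 𝒰 F x := by
  classical
  induction hx with
  | base x hx => exact ⟨{x}, by simpa using hx, .base x (by simp)⟩
  | step x X hX _ ih =>
    choose! F hF hF' using ih
    refine ⟨X.biUnion F, ?_, .step x X hX fun v hv => (hF' v hv).mono ?_⟩
    · intro y hy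
      simp only [Finset.coe_biUnion, Set.mem_iUnion] at hy
      obtain ⟨v, hv, hy⟩ := hy
      exact hF v hv hy
    · exact_mod_cast Finset.subset_biUnion_of_mem F hv

lemma exists_finset_of_forall_cl {𝒰 : Finset (Finset Pt)} {A : Set Pt} (G : Finset Pt)
    (h : ∀ x ∈ G, Cl 𝒰 A x) : ∃ F : Finset Pt, (F : Set Pt) ⊆ A ∧ ∀ x ∈ G, Cl 𝒰 F x := by
  classical
  choose! F hF hF' using fun x hx => (h x hx).exists_finset
  refine ⟨G.biUnion F, ?_, fun x hx => (hF' x hx).mono ?_⟩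
  · intro y hy
    simp only [Finset.coe_biUnion, Set.mem_iUnion] at hy
    obtain ⟨v, hv, hy⟩ := hy
    exact hF v hv hy
  · exact_mod_cast Finset.subset_biUnion_of_mem F hx

/-- The polygon with outer normals `u ∈ T` and support values `a u`. -/
def Poly (T : Finset (ℝ × ℝ)) (a : ℝ × ℝ → ℝ) : Set Pt := {x | ∀ u ∈ T, dotIR x u ≤ a u}

lemma dotIR_add (x y : Pt) (u : ℝ × ℝ) : dotIR (x + y) u = dotIR x u + dotIR y u := by
  simp only [dotIR, Prod.fst_add, Prod.snd_add, Int.cast_add]; ring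

lemma dotIR_sub (x y : Pt) (u : ℝ × ℝ) : dotIR (x - y) u = dotIR x u - dotIR y u := by
  simp only [dotIR, Prod.fst_sub, Prod.snd_sub, Int.cast_sub]; ring

/-- The size of a polygon: the weighted sum of its support values, invariant under translation
because the weighted normals add up to zero. -/
noncomputable def size (T : Finset (ℝ × ℝ)) (lam : ℝ × ℝ → ℝ) (a : ℝ × ℝ → ℝ) : ℝ :=
  ∑ u ∈ T, lam u * a u

section

variable {T : Finset (ℝ × ℝ)} {lam : ℝ × ℝ → ℝ}

lemma size_dot (h1 : ∑ u ∈ T, lam u * u.1 = 0) (h2 : ∑ u ∈ T, lam u * u.2 = 0) (x : Pt) :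
    size T lam (dotIR x) = 0 := by
  have : size T lam (dotIR x)
      = (x.1 : ℝ) * ∑ u ∈ T, lam u * u.1 + (x.2 : ℝ) * ∑ u ∈ T, lam u * u.2 := by
    simp only [size, dotIR]
    rw [Finset.mul_sum, Finset.mul_sum, ← Finset.sum_add_distrib]
    exact Finset.sum_congr rfl fun u _ => by ring
  rw [this, h1, h2]; ring

lemma sub_le_size (hlam : ∀ u, 1 ≤ lam u) (h1 : ∑ u ∈ T, lam u * u.1 = 0)
    (h2 : ∑ u ∈ T, lam u * u.2 = 0) {a : ℝ × ℝ → ℝ} {x y : Pt} (hx : x ∈ Poly T a)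
    (hy : y ∈ Poly T a) {u : ℝ × ℝ} (hu : u ∈ T) : dotIR (y - x) u ≤ size T lam a := by
  have h3 : size T lam a = ∑ v ∈ T, lam v * (a v - dotIR x v) := by
    have := size_dot h1 h2 x
    simp only [size] at this ⊢
    simp only [mul_sub, Finset.sum_sub_distrib, this, sub_zero]
  have h4 : lam u * (a u - dotIR x u) ≤ ∑ v ∈ T, lam v * (a v - dotIR x v) :=
    Finset.single_le_sum (f := fun v => lam v * (a v - dotIR x v))
      (fun v hv => mul_nonneg (zero_le_one.trans (hlam v)) (sub_nonneg.mpr (hx v hv))) hu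
  have h5 := hx u hu
  have h6 := hy u hu
  have h7 := hlam u
  rw [h3, dotIR_sub]
  nlinarith

lemma size_nonneg (hlam : ∀ u, 1 ≤ lam u) (h1 : ∑ u ∈ T, lam u * u.1 = 0)
    (h2 : ∑ u ∈ T, lam u * u.2 = 0) {a : ℝ × ℝ → ℝ} {x : Pt} (hx : x ∈ Poly T a) :
    0 ≤ size T lam a := by
  have h3 : size T lam a = ∑ v ∈ T, lam v * (a v - dotIR x v) := by
    have := size_dot h1 h2 x
    simp only [size] at this ⊢
    simp only [mul_sub, Finset.sum_sub_distrib, this, sub_zero]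
  rw [h3]
  exact Finset.sum_nonneg fun v hv =>
    mul_nonneg (zero_le_one.trans (hlam v)) (sub_nonneg.mpr (hx v hv))

/-- Two lattice points are within `κ` in both coordinates. -/
def Near (κ : ℝ) (x y : Pt) : Prop :=
  |(x.1 : ℝ) - y.1| ≤ κ ∧ |(x.2 : ℝ) - y.2| ≤ κ

/-- The cost of merging two polygons at distance at most `κ`. -/
noncomputable def mergeCost (T : Finset (ℝ × ℝ)) (lam : ℝ × ℝ → ℝ) (κ : ℝ) : ℝ :=
  ∑ u ∈ T, lam u * (κ * (|u.1| + |u.2|))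

lemma dotIR_near {κ : ℝ} {x y : Pt} (h : Near κ x y) (u : ℝ × ℝ) :
    dotIR x u ≤ dotIR y u + κ * (|u.1| + |u.2|) := by
  have e1 : ((x.1 : ℝ) - y.1) * u.1 ≤ κ * |u.1| := by
    calc _ ≤ |((x.1 : ℝ) - y.1) * u.1| := le_abs_self _
      _ = |(x.1 : ℝ) - y.1| * |u.1| := abs_mul _ _
      _ ≤ _ := mul_le_mul_of_nonneg_right h.1 (abs_nonneg _)
  have e2 : ((x.2 : ℝ) - y.2) * u.2 ≤ κ * |u.2| := by
    calc _ ≤ |((x.2 : ℝ) - y.2) * u.2| := le_abs_self _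
      _ = |(x.2 : ℝ) - y.2| * |u.2| := abs_mul _ _
      _ ≤ _ := mul_le_mul_of_nonneg_right h.2 (abs_nonneg _)
  simp only [dotIR]
  linarith

/-- Subadditivity of the size when nearby polygons are merged:
`max a b ≤ a + b - ⟨x, ·⟩ + O(κ)` for a point `x` of the first near a point of the second. -/
lemma size_max_le (hlam : ∀ u, 1 ≤ lam u) (h1 : ∑ u ∈ T, lam u * u.1 = 0)
    (h2 : ∑ u ∈ T, lam u * u.2 = 0) {κ : ℝ} (hκ : 0 ≤ κ) {a b : ℝ × ℝ → ℝ} {x y : Pt}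
    (hx : x ∈ Poly T a) (hy : y ∈ Poly T b) (hxy : Near κ x y) :
    size T lam (fun u => max (a u) (b u)) ≤ size T lam a + size T lam b + mergeCost T lam κ := by
  have h3 := size_dot h1 h2 x
  have h4 : size T lam a + size T lam b + mergeCost T lam κ
      = ∑ u ∈ T, lam u * (a u + b u - dotIR x u + κ * (|u.1| + |u.2|)) := by
    have : ∑ u ∈ T, lam u * (a u + b u - dotIR x u + κ * (|u.1| + |u.2|))
        = size T lam a + size T lam b - size T lam (dotIR x) + mergeCost T lam κ := by
      simp only [size, mergeCost]
      rw [← Finset.sum_add_distrib, ← Finset.sum_sub_distrib, ← Finset.sum_add_distrib]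
      exact Finset.sum_congr rfl fun u _ => by ring
    rw [this, h3, sub_zero]
  rw [h4]
  refine Finset.sum_le_sum fun u hu => mul_le_mul_of_nonneg_left ?_ (zero_le_one.trans (hlam u))
  have hk : 0 ≤ κ * (|u.1| + |u.2|) := by positivity
  have := dotIR_near hxy u
  have := hx u hu
  have := hy u hu
  rcases max_cases (a u) (b u) with ⟨h, -⟩ | ⟨h, -⟩ <;> linarith

/-- A set `c.1` of sites of `A` inside a polygon `c.2` whose size is at most `C (|c.1| - 1)`. -/
structure Good (T : Finset (ℝ × ℝ)) (lam : ℝ × ℝ → ℝ) (C : ℝ) (A : Finset Pt)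
    (c : Finset Pt × (ℝ × ℝ → ℝ)) : Prop where
  sub : c.1 ⊆ A
  poly : (c.1 : Set Pt) ⊆ Poly T c.2
  size_le : size T lam c.2 ≤ C * (c.1.card - 1)

/-- A disjoint covering of `A` by good clusters of size less than `L`. -/
structure GoodFamily (T : Finset (ℝ × ℝ)) (lam : ℝ × ℝ → ℝ) (C L : ℝ) (A : Finset Pt)
    (𝒞 : Finset (Finset Pt × (ℝ × ℝ → ℝ))) : Prop where
  good : ∀ c ∈ 𝒞, Good T lam C A c
  small : ∀ c ∈ 𝒞, size T lam c.2 < L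
  disj : ∀ c ∈ 𝒞, ∀ d ∈ 𝒞, c ≠ d → Disjoint c.1 d.1
  cover : ∀ x ∈ A, ∃ c ∈ 𝒞, x ∈ c.1

lemma Poly.mono {a b : ℝ × ℝ → ℝ} (h : ∀ u, a u ≤ b u) : Poly T a ⊆ Poly T b :=
  fun _ hx u hu => (hx u hu).trans (h u)

/-- Merging nearby clusters either produces a cluster of size between `L` and `2 L + C`, or ends
with all clusters of size below `L` and far apart from each other. -/
lemma merge_dichotomy (hlam : ∀ u, 1 ≤ lam u) (h1 : ∑ u ∈ T, lam u * u.1 = 0)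
    (h2 : ∑ u ∈ T, lam u * u.2 = 0) {κ : ℝ} (hκ : 0 ≤ κ) {C L : ℝ} (hC : mergeCost T lam κ ≤ C)
    (A : Finset Pt) (m : ℕ) :
    ∀ 𝒞 : Finset (Finset Pt × (ℝ × ℝ → ℝ)), 𝒞.card = m → GoodFamily T lam C L A 𝒞 →
    (∃ c, Good T lam C A c ∧ L ≤ size T lam c.2 ∧ size T lam c.2 ≤ 2 * L + C) ∨
    ∃ 𝒟, GoodFamily T lam C L A 𝒟 ∧ ∀ c ∈ 𝒟, ∀ d ∈ 𝒟, c ≠ d →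
      ∀ x ∈ Poly T c.2, ∀ y ∈ Poly T d.2, ¬ Near κ x y := by
  classical
  induction m using Nat.strong_induction_on with
  | _ m ih =>
  intro 𝒞 hm hfam
  by_cases hsep : ∀ c ∈ 𝒞, ∀ d ∈ 𝒞, c ≠ d → ∀ x ∈ Poly T c.2, ∀ y ∈ Poly T d.2, ¬ Near κ x y
  · exact Or.inr ⟨𝒞, hfam, hsep⟩
  push Not at hsep
  obtain ⟨c, hc, d, hd, hcd, x, hx, y, hy, hxy⟩ := hsep
  -- replace two nearby polygons by the smallest one containing both; unless it is large, this
  -- gives a smaller family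
  set e : Finset Pt × (ℝ × ℝ → ℝ) := (c.1 ∪ d.1, fun u => max (c.2 u) (d.2 u)) with he
  have hdis := hfam.disj c hc d hd hcd
  have hsize := size_max_le hlam h1 h2 hκ hx hy hxy
  have hgc := hfam.good c hc
  have hgd := hfam.good d hd
  have hge : Good T lam C A e := by
    refine ⟨Finset.union_subset hgc.sub hgd.sub, ?_, ?_⟩
    · intro z hz
      simp only [he, Finset.coe_union, Set.mem_union] at hz
      rcases hz with hz | hz
      · exact Poly.mono (fun u => le_max_left _ _) (hgc.poly hz)
      · exact Poly.mono (fun u => le_max_right _ _) (hgd.poly hz)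
    · have := hgc.size_le
      have := hgd.size_le
      simp only [he]
      rw [Finset.card_union_of_disjoint hdis]
      push_cast
      linarith
  have hsc := hfam.small c hc
  have hsd := hfam.small d hd
  by_cases hL : L ≤ size T lam e.2
  · refine Or.inl ⟨e, hge, hL, ?_⟩
    simp only [he]
    linarith
  push Not at hL
  set 𝒟 := insert e ((𝒞.erase c).erase d) with h𝒟
  have hdc : d ∈ 𝒞.erase c := Finset.mem_erase.mpr ⟨hcd.symm, hd⟩
  have hcard : 𝒟.card < m := by
    have a1 : 𝒟.card ≤ _ := Finset.card_insert_le e ((𝒞.erase c).erase d)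
    have a2 := Finset.card_erase_add_one hdc
    have a3 := Finset.card_erase_add_one hc
    omega
  have hmem : ∀ f ∈ 𝒟, f = e ∨ (f ∈ 𝒞 ∧ f ≠ c ∧ f ≠ d) := by
    intro f hf
    rcases Finset.mem_insert.mp hf with h | h
    · exact Or.inl h
    · have h' := Finset.mem_erase.mp h
      have h'' := Finset.mem_erase.mp h'.2
      exact Or.inr ⟨h''.2, h''.1, h'.1⟩
  have hde : ∀ f ∈ 𝒞, f ≠ c → f ≠ d → Disjoint e.1 f.1 := by
    intro f hf hfc hfd
    rw [Finset.disjoint_union_left]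
    exact ⟨hfam.disj c hc f hf hfc.symm, hfam.disj d hd f hf hfd.symm⟩
  refine ih 𝒟.card hcard 𝒟 rfl ⟨?_, ?_, ?_, ?_⟩
  · intro f hf
    rcases hmem f hf with rfl | ⟨h, -, -⟩
    · exact hge
    · exact hfam.good f h
  · intro f hf
    rcases hmem f hf with rfl | ⟨h, -, -⟩
    · exact hL
    · exact hfam.small f h
  · intro f hf g hg hfg
    rcases hmem f hf with rfl | ⟨h, hfc, hfd⟩ <;> rcases hmem g hg with rfl | ⟨h', hgc, hgd⟩
    · exact absurd rfl hfg
    · exact hde g h' hgc hgd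
    · exact (hde f h hfc hfd).symm
    · exact hfam.disj f h g h' hfg
  · intro z hz
    obtain ⟨f, hf, hzf⟩ := hfam.cover z hz
    by_cases hfc : f = c
    · exact ⟨e, Finset.mem_insert_self _ _, Finset.mem_union_left _ (hfc ▸ hzf)⟩
    by_cases hfd : f = d
    · exact ⟨e, Finset.mem_insert_self _ _, Finset.mem_union_right _ (hfd ▸ hzf)⟩
    · exact ⟨f, Finset.mem_insert_of_mem (Finset.mem_erase.mpr
        ⟨hfd, Finset.mem_erase.mpr ⟨hfc, hf⟩⟩), hzf⟩

lemma singletons_goodFamily (h1 : ∑ u ∈ T, lam u * u.1 = 0)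
    (h2 : ∑ u ∈ T, lam u * u.2 = 0) {C L : ℝ} (hL : 0 < L) (A : Finset Pt) :
    ∃ 𝒞, GoodFamily T lam C L A 𝒞 := by
  classical
  refine ⟨A.image fun x => ({x}, dotIR x), ?_, ?_, ?_, ?_⟩
  · intro c hc
    obtain ⟨x, hx, rfl⟩ := Finset.mem_image.mp hc
    refine ⟨by simpa using hx, ?_, ?_⟩
    · intro y hy
      have : y = x := by simpa using hy
      subst this
      exact fun u _ => le_rfl
    · rw [size_dot h1 h2]; simp
  · intro c hc
    obtain ⟨x, hx, rfl⟩ := Finset.mem_image.mp hc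
    rw [size_dot h1 h2]; exact hL
  · intro c hc d hd hcd
    obtain ⟨x, hx, rfl⟩ := Finset.mem_image.mp hc
    obtain ⟨y, hy, rfl⟩ := Finset.mem_image.mp hd
    simp only [Finset.disjoint_singleton]
    rintro rfl
    exact hcd rfl
  · intro x hx
    exact ⟨_, Finset.mem_image_of_mem _ hx, by simp⟩

/-- The closure of `A` stays inside pairwise distant stable polygons covering `A`. -/
lemma cl_subset_polys {𝒰 : Finset (Finset Pt)} {κ : ℝ}
    (hst : ∀ u ∈ T, ∀ X ∈ 𝒰, ∃ v ∈ X, 0 ≤ dotIR v u)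
    (hne : ∀ X ∈ 𝒰, X.Nonempty) (hκ : ∀ X ∈ 𝒰, ∀ v ∈ X, ∀ w ∈ X, Near κ v w)
    {C L : ℝ} {A : Finset Pt} {𝒟 : Finset (Finset Pt × (ℝ × ℝ → ℝ))}
    (hfam : GoodFamily T lam C L A 𝒟)
    (hsep : ∀ c ∈ 𝒟, ∀ d ∈ 𝒟, c ≠ d → ∀ x ∈ Poly T c.2, ∀ y ∈ Poly T d.2, ¬ Near κ x y)
    {x : Pt} (hx : Cl 𝒰 A x) : ∃ c ∈ 𝒟, x ∈ Poly T c.2 := by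
  induction hx with
  | base x hx =>
    obtain ⟨c, hc, hxc⟩ := hfam.cover x hx
    exact ⟨c, hc, (hfam.good c hc).poly hxc⟩
  | step x X hX _ ih =>
    obtain ⟨v₀, hv₀⟩ := hne X hX
    obtain ⟨c, hc, hxc⟩ := ih v₀ hv₀
    -- the polygons being far apart, `x + X` lies in a single one; by stability of each normal,
    -- `x` lies in it too
    have hall : ∀ v ∈ X, x + v ∈ Poly T c.2 := by
      intro v hv
      obtain ⟨d, hd, hxd⟩ := ih v hv
      by_cases hcd : c = d
      · rw [hcd]; exact hxd
      · exfalso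
        refine hsep c hc d hd hcd _ hxc _ hxd ?_
        have := hκ X hX v₀ hv₀ v hv
        simpa [Near] using this
    refine ⟨c, hc, fun u hu => ?_⟩
    obtain ⟨v, hv, hpos⟩ := hst u hu X hX
    have := hall v hv u hu
    rw [dotIR_add] at this
    linarith

end

/-- For a family satisfying the second half of criticality, any finite set whose closure contains a
long horizontal segment has a subset of at least order `L` sites within distance of order `L`. -/
lemma exists_dense_subset (𝒰 : Finset (Finset Pt))
    (h : ∀ u ∈ unitCircle, (stableSet 𝒰 ∩ {w | 0 < dotRR u w}).Nonempty) :
    ∃ C : ℕ, 1 ≤ C ∧ ∀ L : ℕ, 1 ≤ L → ∀ A : Finset Pt,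
      (∀ j : ℕ, j ≤ C * L → Cl 𝒰 A ((j : ℤ), 0)) →
      ∃ S ⊆ A, L ≤ C * S.card ∧ ∀ x ∈ S, ∀ y ∈ S,
        |x.1 - y.1| ≤ (C * L : ℕ) ∧ |x.2 - y.2| ≤ (C * L : ℕ) := by
  classical
  obtain ⟨T, lam, C₁, hTS, hlam, h1, h2, hC₁, hdiam⟩ := exists_weights h
  have hst : ∀ u ∈ T, ∀ X ∈ 𝒰, ∃ v ∈ X, 0 ≤ dotIR v u := by
    intro u hu X hX
    have := (hTS hu).2 X hX
    rw [Set.not_subset] at this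
    obtain ⟨v, hv, hv'⟩ := this
    exact ⟨v, hv, not_lt.mp hv'⟩
  have hTne : T.Nonempty := by
    rw [Finset.nonempty_iff_ne_empty]
    rintro rfl
    have := (hdiam (1, 0) 0 (by simp) le_rfl).1
    norm_num at this
  have hne : ∀ X ∈ 𝒰, X.Nonempty := by
    intro X hX
    obtain ⟨u, hu⟩ := hTne
    obtain ⟨v, hv, -⟩ := hst u hu X hX
    exact ⟨v, hv⟩
  -- `κ` bounds the diameter of all rules and the distance `1` between neighbouring sites
  let κ : ℝ := 1 + ∑ X ∈ 𝒰, ∑ v ∈ X, ∑ w ∈ X, (|(v.1 : ℝ) - w.1| + |(v.2 : ℝ) - w.2|)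
  have hnn : 0 ≤ ∑ X ∈ 𝒰, ∑ v ∈ X, ∑ w ∈ X, (|(v.1 : ℝ) - w.1| + |(v.2 : ℝ) - w.2|) := by
    positivity
  have hκ1 : 1 ≤ κ := by simp only [κ]; linarith
  have hκ : ∀ X ∈ 𝒰, ∀ v ∈ X, ∀ w ∈ X, Near κ v w := by
    intro X hX v hv w hw
    have b1 : |(v.1 : ℝ) - w.1| + |(v.2 : ℝ) - w.2|
        ≤ ∑ w ∈ X, (|(v.1 : ℝ) - w.1| + |(v.2 : ℝ) - w.2|) :=
      Finset.single_le_sum (f := fun w : Pt => |(v.1 : ℝ) - w.1| + |(v.2 : ℝ) - w.2|)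
        (fun _ _ => by positivity) hw
    have b2 : ∑ w ∈ X, (|(v.1 : ℝ) - w.1| + |(v.2 : ℝ) - w.2|)
        ≤ ∑ v ∈ X, ∑ w ∈ X, (|(v.1 : ℝ) - w.1| + |(v.2 : ℝ) - w.2|) :=
      Finset.single_le_sum
        (f := fun v : Pt => ∑ w ∈ X, (|(v.1 : ℝ) - w.1| + |(v.2 : ℝ) - w.2|))
        (fun _ _ => by positivity) hv
    have b3 : ∑ v ∈ X, ∑ w ∈ X, (|(v.1 : ℝ) - w.1| + |(v.2 : ℝ) - w.2|)
        ≤ ∑ X ∈ 𝒰, ∑ v ∈ X, ∑ w ∈ X, (|(v.1 : ℝ) - w.1| + |(v.2 : ℝ) - w.2|) :=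
      Finset.single_le_sum
        (f := fun X : Finset Pt => ∑ v ∈ X, ∑ w ∈ X, (|(v.1 : ℝ) - w.1| + |(v.2 : ℝ) - w.2|))
        (fun _ _ => by positivity) hX
    have c1 := abs_nonneg ((v.1 : ℝ) - w.1)
    have c2 := abs_nonneg ((v.2 : ℝ) - w.2)
    constructor <;> simp only [κ] <;> linarith
  obtain ⟨C₂, hC₂⟩ := exists_nat_ge (mergeCost T lam κ)
  obtain ⟨C₃, hC₃⟩ := exists_nat_ge C₁
  refine ⟨(C₃ + 1) * (C₂ + 2), by nlinarith [Nat.zero_le C₃, Nat.zero_le C₂], ?_⟩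
  intro L hL A hA
  have hLR : (1 : ℝ) ≤ L := by exact_mod_cast hL
  have hL0 : (0 : ℝ) < L := by linarith
  obtain ⟨𝒞, h𝒞⟩ := singletons_goodFamily (T := T) (lam := lam) (C := C₂) h1 h2 hL0 A
  have hC₁L : C₁ * L < (((C₃ + 1) * (C₂ + 2) * L : ℕ) : ℝ) := by
    push_cast
    have : (0 : ℝ) ≤ C₂ := Nat.cast_nonneg _
    have : (0 : ℝ) ≤ C₃ := Nat.cast_nonneg _
    nlinarith [mul_nonneg (mul_nonneg ‹(0 : ℝ) ≤ C₂› ‹(0 : ℝ) ≤ C₃›) hL0.le,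
      mul_nonneg ‹(0 : ℝ) ≤ C₃› hL0.le, mul_nonneg ‹(0 : ℝ) ≤ C₂› hL0.le,
      mul_le_mul_of_nonneg_right hC₃ hL0.le]
  rcases merge_dichotomy hlam h1 h2 (zero_le_one.trans hκ1) hC₂ A _ 𝒞 rfl h𝒞 with
    ⟨c, hc, hcL, hcL'⟩ | ⟨𝒟, h𝒟, hsep⟩
  · refine ⟨c.1, hc.sub, ?_, ?_⟩
    · have a1 := hc.size_le
      have a2 : (L : ℝ) ≤ C₂ * c.1.card := by
        have : (0 : ℝ) ≤ C₂ := Nat.cast_nonneg _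
        nlinarith
      have a3 : L ≤ C₂ * c.1.card := by exact_mod_cast a2
      calc L ≤ C₂ * c.1.card := a3
        _ ≤ (C₃ + 1) * (C₂ + 2) * c.1.card := by
          refine Nat.mul_le_mul_right _ ?_
          nlinarith [Nat.zero_le C₃, Nat.zero_le C₂, Nat.zero_le (C₃ * C₂)]
    · intro x hx y hy
      have hz : ∀ u ∈ T, dotIR (x - y) u ≤ size T lam c.2 := fun u hu =>
        sub_le_size hlam h1 h2 (hc.poly hy) (hc.poly hx) hu
      have hd := hdiam (x - y) _ hz (hL0.le.trans hcL)
      have hb : C₁ * size T lam c.2 ≤ (((C₃ + 1) * (C₂ + 2) * L : ℕ) : ℝ) := by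
        have i1 : C₁ * size T lam c.2 ≤ C₃ * (2 * L + C₂) :=
          mul_le_mul hC₃ hcL' (hL0.le.trans hcL) (Nat.cast_nonneg _)
        have : (0 : ℝ) ≤ C₂ := Nat.cast_nonneg _
        have : (0 : ℝ) ≤ C₃ := Nat.cast_nonneg _
        have i2 : (C₂ : ℝ) ≤ C₂ * L := by nlinarith
        have i3 : (C₃ : ℝ) * (2 * L + C₂) ≤ C₃ * (2 * L + C₂ * L) := by gcongr
        push_cast
        nlinarith [mul_nonneg ‹(0 : ℝ) ≤ C₂› hL0.le]
      simp only [Prod.fst_sub, Prod.snd_sub] at hd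
      refine ⟨?_, ?_⟩
      · have := hd.1.trans hb
        exact_mod_cast this
      · have := hd.2.trans hb
        exact_mod_cast this
  · -- otherwise the whole segment lies in a single polygon, which is too small to contain it
    exfalso
    set M := (C₃ + 1) * (C₂ + 2) * L with hM
    obtain ⟨c, hc, h0c⟩ := cl_subset_polys hst hne hκ h𝒟 hsep (hA 0 (Nat.zero_le _))
    have hall : ∀ j : ℕ, j ≤ M → ((j : ℤ), (0 : ℤ)) ∈ Poly T c.2 := by
      intro j
      induction j with
      | zero => intro _; exact h0c
      | succ j ih =>
        intro hj
        have hj' := ih (by omega)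
        obtain ⟨d, hd, hjd⟩ := cl_subset_polys hst hne hκ h𝒟 hsep (hA (j + 1) hj)
        by_cases hcd : c = d
        · rw [hcd]; exact hjd
        · exfalso
          refine hsep c hc d hd hcd _ hj' _ hjd ?_
          constructor
          · push_cast
            rw [show (j : ℝ) - (j + 1) = -1 by ring]
            simpa using hκ1
          · simp; linarith
    have hMmem := hall M le_rfl
    have hz : ∀ u ∈ T, dotIR ((((M : ℤ), (0 : ℤ)) : Pt) - ((((0 : ℕ) : ℤ), (0 : ℤ)) : Pt)) u ≤ size T lam c.2 :=
      fun u hu => sub_le_size hlam h1 h2 h0c hMmem hu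
    have hd := (hdiam _ _ hz (size_nonneg hlam h1 h2 h0c)).1
    have hs := h𝒟.small c hc
    simp only [Prod.fst_sub, Int.cast_natCast, Nat.cast_zero, sub_zero,
      Nat.abs_cast] at hd
    have : C₁ * size T lam c.2 ≤ C₁ * L := mul_le_mul_of_nonneg_left hs.le hC₁
    linarith

/-! ### The lower bound: dense sets of infected sites are unlikely -/

lemma torusProj_add (n : ℕ) (x y : Pt) : torusProj n (x + y) = torusProj n x + torusProj n y := by
  simp [torusProj]

lemma torusProj_surjective (n : ℕ) : Function.Surjective (torusProj n) := by
  rintro ⟨a, b⟩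
  obtain ⟨x, rfl⟩ := ZMod.intCast_surjective a
  obtain ⟨y, rfl⟩ := ZMod.intCast_surjective b
  exact ⟨(x, y), rfl⟩

/-- Every lift of a site infected on the torus is infected in the plane by the periodic lift. -/
lemma cl_of_mem_torusClosure {n : ℕ} {𝒰 : Finset (Finset Pt)} {A : Set (ZMod n × ZMod n)} {x : Pt}
    (hx : torusProj n x ∈ torusClosure n 𝒰 A) : Cl 𝒰 (torusProj n ⁻¹' A) x := by
  unfold torusClosure at hx
  obtain ⟨t, ht⟩ := Set.mem_iUnion.mp hx
  clear hx
  induction t generalizing x with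
  | zero => exact .base x ht
  | succ t ih =>
    rcases ht with ht | ⟨X, hX, ht⟩
    · exact ih ht
    · exact .step x X hX fun v hv => ih (by rw [torusProj_add]; exact ht v hv)

/-- The box `[-D, D]²`. -/
noncomputable def box (D : ℕ) : Finset Pt := Finset.Icc (-(D : ℤ)) D ×ˢ Finset.Icc (-(D : ℤ)) D

lemma mem_box {D : ℕ} {x : Pt} : x ∈ box D ↔ |x.1| ≤ D ∧ |x.2| ≤ D := by
  simp only [box, Finset.mem_product, Finset.mem_Icc, abs_le]

lemma card_box (D : ℕ) : (box D).card = (2 * D + 1) ^ 2 := by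
  have : ((D : ℤ) + 1 - -(D : ℤ)).toNat = 2 * D + 1 := by omega
  simp only [box, Finset.card_product, Int.card_Icc, this]
  ring

lemma int_eq_of_cast_eq {n : ℕ} {a b : ℤ} (h : (a : ZMod n) = b) (hab : |a - b| < n) : a = b := by
  have h1 := (ZMod.intCast_eq_intCast_iff_dvd_sub b a n).mp h.symm
  have := Int.eq_zero_of_abs_lt_dvd h1 hab
  omega

/-- Union bound over the positions and shapes of a dense cluster. -/
lemma percProb_le (𝒰 : Finset (Finset Pt)) (C : ℕ) (hC : 1 ≤ C)
    (hS : ∀ L : ℕ, 1 ≤ L → ∀ A : Finset Pt, (∀ j : ℕ, j ≤ C * L → Cl 𝒰 A ((j : ℤ), 0)) →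
      ∃ S ⊆ A, L ≤ C * S.card ∧
        ∀ x ∈ S, ∀ y ∈ S, |x.1 - y.1| ≤ (C * L : ℕ) ∧ |x.2 - y.2| ≤ (C * L : ℕ))
    (n L : ℕ) (hL : 1 ≤ L) (hn : 2 * (C * L) + 1 ≤ n) {p : ℝ} (h0 : 0 ≤ p) (h1 : p ≤ 1) :
    ∃ k : ℕ, L ≤ C * k ∧
      percProb n 𝒰 p ≤ (n : ℝ) ^ 2 * (((2 * (C * L) + 1 : ℕ) : ℝ) ^ 2 * p) ^ k := by
  classical
  have : NeZero n := ⟨by omega⟩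
  refine ⟨(L + C - 1) / C, ?_, ?_⟩
  · have := Nat.div_add_mod (L + C - 1) C
    have := Nat.mod_lt (L + C - 1) hC
    omega
  set k := (L + C - 1) / C with hk
  set D := C * L with hD
  have hkle : ∀ s, L ≤ C * s → k ≤ s := by
    intro s hs
    rw [hk, Nat.div_le_iff_le_mul_add_pred (by omega)]
    omega
  rw [percProb_eq]
  -- full infection forces `k` infected sites in some box of radius `D`
  have hsub : {ω : ZMod n × ZMod n → Bool | torusClosure n 𝒰 {x | ω x = true} = Set.univ} ⊆
      ⋃ i ∈ (Finset.univ : Finset (ZMod n × ZMod n)) ×ˢ (box D).powersetCard k,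
        {ω | ∀ t ∈ i.2.image fun w => i.1 + torusProj n w, ω t = true} := by
    intro ω hω
    have hω : torusClosure n 𝒰 {x | ω x = true} = Set.univ := hω
    have hall : ∀ x : Pt, Cl 𝒰 (torusProj n ⁻¹' {x | ω x = true}) x := fun x =>
      cl_of_mem_torusClosure (by rw [hω]; trivial)
    obtain ⟨F, hF, hF'⟩ := exists_finset_of_forall_cl (box D) (fun x _ => hall x)
    obtain ⟨S, hSF, hSL, hSd⟩ := hS L hL F fun j hj => hF' _ (mem_box.mpr (by
      constructor
      · simp only [Nat.abs_cast]; exact_mod_cast hj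
      · simp))
    have hSpos : 0 < S.card := by
      rcases Nat.eq_zero_or_pos S.card with h | h
      · rw [h] at hSL; omega
      · exact h
    obtain ⟨x₀, hx₀⟩ := Finset.card_pos.mp hSpos
    obtain ⟨S', hS'S, hS'k⟩ := Finset.exists_subset_card_eq (hkle _ hSL)
    simp only [Set.mem_iUnion]
    refine ⟨(torusProj n x₀, S'.image fun x => x - x₀), ?_, ?_⟩
    · simp only [Finset.mem_product, Finset.mem_univ, true_and, Finset.mem_powersetCard]
      constructor
      · intro w hw
        obtain ⟨x, hx, rfl⟩ := Finset.mem_image.mp hw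
        exact mem_box.mpr (hSd x (hS'S hx) x₀ hx₀)
      · rw [Finset.card_image_of_injective _ (fun a b h => sub_left_injective h), hS'k]
    · intro t ht
      obtain ⟨w, hw, rfl⟩ := Finset.mem_image.mp ht
      obtain ⟨x, hx, rfl⟩ := Finset.mem_image.mp hw
      have := hF (Finset.mem_coe.mpr (hSF (hS'S hx)))
      rw [← torusProj_add, add_sub_cancel]
      exact this
  refine (pr_mono h0 h1 hsub).trans ?_
  refine (pr_biUnion_le' h0 h1 _ _ (p ^ k) ?_).trans ?_
  · rintro ⟨z, W⟩ hi
    simp only [Finset.mem_product, Finset.mem_univ, true_and, Finset.mem_powersetCard] at hi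
    rw [pr_all, Finset.card_image_of_injOn, hi.2]
    intro a ha b hb hab
    have ha' := mem_box.mp (hi.1 ha)
    have hb' := mem_box.mp (hi.1 hb)
    have hab : z + torusProj n a = z + torusProj n b := hab
    have hab' := add_left_cancel hab
    simp only [torusProj, Prod.mk.injEq] at hab'
    simp only [abs_le] at ha' hb'
    refine Prod.ext (int_eq_of_cast_eq hab'.1 ?_) (int_eq_of_cast_eq hab'.2 ?_) <;>
    · rw [abs_lt]
      constructor <;> omega
  · rw [Finset.card_product, Finset.card_powersetCard, card_box]
    have hcard : (Finset.univ : Finset (ZMod n × ZMod n)).card = n ^ 2 := by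
      rw [Finset.card_univ, Fintype.card_prod, ZMod.card]; ring
    rw [hcard]
    have hch : ((((2 * D + 1) ^ 2).choose k : ℕ) : ℝ) ≤ (((2 * D + 1 : ℕ) : ℝ) ^ 2) ^ k := by
      exact_mod_cast Nat.choose_le_pow _ _
    rw [mul_pow, Nat.cast_mul, Nat.cast_pow, mul_assoc]
    gcongr

/-- Below `(log n) ^ (-3)` percolation is unlikely. -/
lemma percProb_lt_half (𝒰 : Finset (Finset Pt))
    (h : ∀ u ∈ unitCircle, (stableSet 𝒰 ∩ {w | 0 < dotRR u w}).Nonempty) :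
    ∃ N : ℕ, ∀ n : ℕ, N ≤ n → ∀ p : ℝ, 0 ≤ p → p ≤ 1 → p < (Real.log n) ^ (-3 : ℝ) →
      percProb n 𝒰 p < 1 / 2 := by
  obtain ⟨C, hC, hS⟩ := exists_dense_subset 𝒰 h
  have hlog : Filter.Tendsto (fun n : ℕ => Real.log n) Filter.atTop Filter.atTop :=
    Real.tendsto_log_atTop.comp tendsto_natCast_atTop_atTop
  have hC' : (1 : ℝ) ≤ C := by exact_mod_cast hC
  have e1 : ∀ᶠ n : ℕ in Filter.atTop, 9 * (C : ℝ) ^ 2 * Real.exp (4 * C) + 2 ≤ Real.log n :=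
    hlog.eventually_ge_atTop _
  have e2 : ∀ᶠ n : ℕ in Filter.atTop, Real.log n ≤ (1 / (3 * C)) * n := by
    have := (Real.isLittleO_log_id_atTop.comp_tendsto tendsto_natCast_atTop_atTop).def
      (show (0 : ℝ) < 1 / (3 * C) by positivity)
    filter_upwards [this] with n hn
    simp only [Function.comp, id, Real.norm_eq_abs, Nat.abs_cast] at hn
    exact (le_abs_self _).trans hn
  obtain ⟨N, hN⟩ := Filter.eventually_atTop.mp (e1.and e2)
  refine ⟨N, fun n hn p h0 h1 hp => ?_⟩
  obtain ⟨a1, a2⟩ := hN n hn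
  set l := Real.log n with hl
  have hE : 1 ≤ Real.exp (4 * C) := Real.one_le_exp (by positivity)
  have hbig : 0 ≤ 9 * (C : ℝ) ^ 2 * Real.exp (4 * C) := by positivity
  have hl2 : 2 ≤ l := by linarith
  set L := ⌊l⌋₊ with hL
  have hLl : (L : ℝ) ≤ l := Nat.floor_le (by linarith)
  have hlL : l < L + 1 := Nat.lt_floor_add_one l
  have hL2 : 2 ≤ L := Nat.le_floor (by exact_mod_cast hl2)
  have hL2' : (2 : ℝ) ≤ L := by exact_mod_cast hL2
  have hn3 : 2 * (C * L) + 1 ≤ n := by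
    have b1 : (C : ℝ) * l ≤ n / 3 := by
      have := mul_le_mul_of_nonneg_left a2 (by linarith : (0 : ℝ) ≤ C)
      calc (C : ℝ) * l ≤ C * (1 / (3 * C) * n) := this
        _ = n / 3 := by field_simp
    have b2 : 1 * (2 : ℝ) ≤ C * l := by gcongr
    have b3 : (C : ℝ) * L ≤ C * l := by gcongr
    have : (2 * (C * L) + 1 : ℝ) ≤ n := by linarith
    exact_mod_cast this
  obtain ⟨k, hk, hle⟩ := percProb_le 𝒰 C hC hS n L (by omega) hn3 h0 h1
  refine hle.trans_lt ?_
  have hk' : (L : ℝ) ≤ C * k := by exact_mod_cast hk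
  have hn0 : (0 : ℝ) < n := by
    have : 0 < n := by omega
    exact_mod_cast this
  have hbase : (((2 * (C * L) + 1 : ℕ) : ℝ) ^ 2 * p) ≤ Real.exp (-(4 * C)) := by
    have c1 : (((2 * (C * L) + 1 : ℕ) : ℝ)) ≤ 3 * (C * L) := by
      push_cast
      nlinarith
    have c2 : p * (L : ℝ) ^ 3 ≤ 1 := by
      have : l ^ (-3 : ℝ) = (l ^ 3)⁻¹ := by
        rw [Real.rpow_neg (by linarith)]
        norm_cast
      rw [this] at hp
      have hl3 : 0 < l ^ 3 := by positivity
      calc p * (L : ℝ) ^ 3 ≤ (l ^ 3)⁻¹ * l ^ 3 := by gcongr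
        _ = 1 := inv_mul_cancel₀ hl3.ne'
    have c3 : 9 * (C : ℝ) ^ 2 * Real.exp (4 * C) ≤ L := by linarith
    have c4 : (((2 * (C * L) + 1 : ℕ) : ℝ) ^ 2 * p) * L ≤ 9 * (C : ℝ) ^ 2 := by
      calc (((2 * (C * L) + 1 : ℕ) : ℝ) ^ 2 * p) * L ≤ ((3 * (C * L)) ^ 2 * p) * L := by gcongr
        _ = 9 * (C : ℝ) ^ 2 * (p * (L : ℝ) ^ 3) := by ring
        _ ≤ 9 * (C : ℝ) ^ 2 * 1 := by gcongr
        _ = _ := by ring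
    rw [Real.exp_neg, ← one_div, le_div_iff₀ (by positivity)]
    refine le_of_mul_le_mul_right ?_ (show (0 : ℝ) < 9 * (C : ℝ) ^ 2 by positivity)
    calc _ = (((2 * (C * L) + 1 : ℕ) : ℝ) ^ 2 * p) * (9 * (C : ℝ) ^ 2 * Real.exp (4 * C)) := by ring
      _ ≤ (((2 * (C * L) + 1 : ℕ) : ℝ) ^ 2 * p) * L := by gcongr
      _ ≤ _ := by linarith
  have hn2 : (n : ℝ) = Real.exp l := (Real.exp_log hn0).symm
  calc (n : ℝ) ^ 2 * (((2 * (C * L) + 1 : ℕ) : ℝ) ^ 2 * p) ^ k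
      ≤ (n : ℝ) ^ 2 * Real.exp (-(4 * C)) ^ k := by gcongr
    _ = Real.exp (2 * l - 4 * (C * k)) := by
      rw [hn2, ← Real.exp_nat_mul, ← Real.exp_nat_mul, ← Real.exp_add]
      congr 1
      push_cast
      ring
    _ ≤ Real.exp (-1) := by
      apply Real.exp_le_exp.mpr
      linarith
    _ < 1 / 2 := by
      rw [Real.exp_neg, ← one_div]
      have := Real.exp_one_gt_d9
      exact one_div_lt_one_div_of_lt (by norm_num) (by linarith)

/-! ### Coordinates adapted to the unstable half-circle -/

lemma dotRR_smul_left (c : ℝ) (u w : ℝ × ℝ) : dotRR (c * u.1, c * u.2) w = c * dotRR u w := by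
  unfold dotRR; ring

lemma continuous_dotIR (y : Pt) : Continuous fun w : ℝ × ℝ => dotIR y w := by
  unfold dotIR; fun_prop

/-- An endpoint `v` of the half-circle centred at `u` which is orthogonal to no lattice vector is
not stable: otherwise a whole arc around `v` would be stable, and half of it lies in the
half-circle. -/
lemma not_mem_stableSet_of_irrational {𝒰 : Finset (Finset Pt)} (hU : UpdateFamily 𝒰)
    {u v : ℝ × ℝ} (hu : u ∈ unitCircle) (hv : v ∈ unitCircle) (huv : dotRR u v = 0)
    (hirr : ∀ y : Pt, y ≠ 0 → dotIR y v ≠ 0)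
    (hfin : (stableSet 𝒰 ∩ {w | 0 ≤ dotRR u w}).Finite) : v ∉ stableSet 𝒰 := by
  intro hvS
  let w : ℝ → ℝ × ℝ := fun s => (s * u.1 + √(1 - s ^ 2) * v.1, s * u.2 + √(1 - s ^ 2) * v.2)
  have hw0 : w 0 = v := by simp [w]
  have hwc : Continuous w := by fun_prop
  have hO : ∀ᶠ s in nhds (0 : ℝ), ∀ X ∈ 𝒰, ∃ y ∈ X, 0 < dotIR y (w s) := by
    rw [Filter.eventually_all_finset]
    intro X hX
    have := hvS.2 X hX
    rw [Set.not_subset] at this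
    obtain ⟨y, hy, hyv⟩ := this
    have hy0 : y ≠ 0 := fun h0 => hU.2 X hX (h0 ▸ hy)
    have hpos : 0 < dotIR y (w 0) := by
      rw [hw0]
      have : 0 ≤ dotIR y v := not_lt.mp hyv
      exact lt_of_le_of_ne this (hirr y hy0).symm
    have := ((continuous_dotIR y).comp hwc).continuousAt.eventually (lt_mem_nhds hpos)
    filter_upwards [this] with s hs
    exact ⟨y, hy, hs⟩
  obtain ⟨δ, hδ, hball⟩ := Metric.eventually_nhds_iff.mp hO
  have himg := hfin.image (fun x => dotRR u x)
  refine Set.Ioo_infinite (lt_min hδ one_pos) (himg.subset ?_)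
  intro s hs
  have hs1 : s < 1 := hs.2.trans_le (min_le_right _ _)
  have hsd : s < δ := hs.2.trans_le (min_le_left _ _)
  have hs0 : 0 < s := hs.1
  have hsq : √(1 - s ^ 2) ^ 2 = 1 - s ^ 2 := Real.sq_sqrt (by nlinarith)
  have hu' : u.1 ^ 2 + u.2 ^ 2 = 1 := hu
  have hv' : v.1 ^ 2 + v.2 ^ 2 = 1 := hv
  have huv' : u.1 * v.1 + u.2 * v.2 = 0 := huv
  have hdot : dotRR u (w s) = s := by
    simp only [dotRR, w]
    linear_combination s * hu' + √(1 - s ^ 2) * huv'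
  refine ⟨w s, ⟨⟨?_, ?_⟩, ?_⟩, hdot⟩
  · change (w s).1 ^ 2 + (w s).2 ^ 2 = 1
    simp only [w]
    linear_combination s ^ 2 * hu' + √(1 - s ^ 2) ^ 2 * hv' + hsq +
      2 * s * √(1 - s ^ 2) * huv'
  · intro X hX hsub
    obtain ⟨y, hy, hpos⟩ := hball (y := s) (by
      rw [Real.dist_eq, sub_zero, abs_of_pos hs0]; exact hsd) X hX
    have : dotIR y (w s) < 0 := hsub hy
    linarith
  · change 0 ≤ dotRR u (w s)
    rw [hdot]; exact hs0.le

lemma abs_le_one_of_unitCircle {w : ℝ × ℝ} (hw : w ∈ unitCircle) : |w.1| ≤ 1 ∧ |w.2| ≤ 1 := by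
  have hw : w.1 ^ 2 + w.2 ^ 2 = 1 := hw
  exact ⟨abs_le_one_iff_mul_self_le_one.mpr (by nlinarith [sq_nonneg w.2]),
    abs_le_one_iff_mul_self_le_one.mpr (by nlinarith [sq_nonneg w.1])⟩

/-- The closed semicircle with finitely many stable directions may be taken with a rational
midpoint. -/
lemma exists_int_dir {𝒰 : Finset (Finset Pt)} (hU : UpdateFamily 𝒰)
    (h : ∃ u ∈ unitCircle, (stableSet 𝒰 ∩ {w | 0 ≤ dotRR u w}).Finite) :
    ∃ z : Pt, z ≠ 0 ∧ (stableSet 𝒰 ∩ {w | 0 ≤ dotIR z w}).Finite := by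
  obtain ⟨u, hu, hfin⟩ := h
  have hu' : u.1 ^ 2 + u.2 ^ 2 = 1 := hu
  by_cases hrat : ∃ y : Pt, y ≠ 0 ∧ dotIR y (u.2, -u.1) = 0
  · obtain ⟨y, hy0, hy⟩ := hrat
    simp only [dotIR] at hy
    set c := (y.1 : ℝ) * u.1 + y.2 * u.2 with hc
    have hy1 : (y.1 : ℝ) = c * u.1 := by rw [hc]; linear_combination -(y.1 : ℝ) * hu' + u.2 * hy
    have hy2 : (y.2 : ℝ) = c * u.2 := by rw [hc]; linear_combination -(y.2 : ℝ) * hu' - u.1 * hy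
    have hc0 : c ≠ 0 := by
      intro h0
      rw [h0, zero_mul] at hy1 hy2
      exact hy0 (Prod.ext (by exact_mod_cast hy1) (by exact_mod_cast hy2))
    have hdot : ∀ w, dotIR y w = c * dotRR u w := by
      intro w; simp only [dotIR, dotRR, hy1, hy2]; ring
    rcases lt_or_gt_of_ne hc0 with hneg | hpos
    · refine ⟨-y, neg_ne_zero.mpr hy0, hfin.subset ?_⟩
      rintro w ⟨hw, hw'⟩
      refine ⟨hw, ?_⟩
      have hw' : 0 ≤ dotIR (-y) w := hw'
      have e : dotIR (-y) w = (-c) * dotRR u w := by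
        rw [neg_mul, ← hdot]; simp only [dotIR, Prod.fst_neg, Prod.snd_neg]; push_cast; ring
      rw [e] at hw'
      exact nonneg_of_mul_nonneg_right hw' (by linarith)
    · refine ⟨y, hy0, hfin.subset ?_⟩
      rintro w ⟨hw, hw'⟩
      refine ⟨hw, ?_⟩
      have hw' : 0 ≤ dotIR y w := hw'
      rw [hdot] at hw'
      exact nonneg_of_mul_nonneg_right hw' hpos
  · push Not at hrat
    set v : ℝ × ℝ := (u.2, -u.1) with hv
    have hvc : v ∈ unitCircle := by
      change u.2 ^ 2 + (-u.1) ^ 2 = 1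
      linarith
    have hnvc : -v ∈ unitCircle := by
      change (-u.2) ^ 2 + (- -u.1) ^ 2 = 1
      linarith
    have hneg : ∀ y : Pt, dotIR y (-v) = - dotIR y v := by
      intro y; simp only [dotIR, Prod.fst_neg, Prod.snd_neg]; ring
    have hv1 : v ∉ stableSet 𝒰 := not_mem_stableSet_of_irrational hU hu hvc
      (by simp only [dotRR, hv]; ring) hrat hfin
    have hv2 : -v ∉ stableSet 𝒰 := not_mem_stableSet_of_irrational hU hu hnvc
      (by simp only [dotRR, hv, Prod.fst_neg, Prod.snd_neg]; ring)
      (fun y hy => by rw [hneg]; exact neg_ne_zero.mpr (hrat y hy)) hfin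
    have hopen : ∀ x ∈ unitCircle, x ∉ stableSet 𝒰 →
        ∃ O : Set (ℝ × ℝ), IsOpen O ∧ x ∈ O ∧ ∀ w ∈ O, w ∉ stableSet 𝒰 := by
      intro x hx hxS
      have : ∃ X ∈ 𝒰, (X : Set Pt) ⊆ halfPlane x := by
        by_contra hcon
        push Not at hcon
        exact hxS ⟨hx, hcon⟩
      obtain ⟨X, hX, hXx⟩ := this
      refine ⟨⋂ y ∈ X, {w | dotIR y w < 0}, ?_, ?_, ?_⟩
      · exact isOpen_biInter_finset fun y _ => isOpen_lt (continuous_dotIR y) continuous_const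
      · exact Set.mem_iInter₂.mpr fun y hy => hXx hy
      · intro w hw hwS
        exact hwS.2 X hX fun y hy => Set.mem_iInter₂.mp hw y hy
    obtain ⟨O₁, hO₁, hvO, hOS₁⟩ := hopen v hvc hv1
    obtain ⟨O₂, hO₂, hvO', hOS₂⟩ := hopen (-v) hnvc hv2
    have hcomp : IsCompact (unitCircle \ (O₁ ∪ O₂)) := isCompact_unitCircle.diff (hO₁.union hO₂)
    have hne0 : ∀ w ∈ unitCircle \ (O₁ ∪ O₂), 0 < |dotRR u w| := by
      rintro w ⟨hw, hwO⟩
      rw [abs_pos]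
      intro h0
      apply hwO
      have hw : w.1 ^ 2 + w.2 ^ 2 = 1 := hw
      have h0 : u.1 * w.1 + u.2 * w.2 = 0 := h0
      set c := u.2 * w.1 - u.1 * w.2 with hc
      have e1 : w.1 = c * u.2 := by rw [hc]; linear_combination -w.1 * hu' + u.1 * h0
      have e2 : w.2 = -(c * u.1) := by rw [hc]; linear_combination -w.2 * hu' + u.2 * h0
      have hc2 : c ^ 2 = 1 := by
        rw [e1, e2] at hw
        linear_combination hw - c ^ 2 * hu'
      rcases (show c = 1 ∨ c = -1 from by simpa using hc2) with h | h
      · left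
        have : w = v := Prod.ext (by rw [e1, h, hv]; simp) (by rw [e2, h, hv]; simp)
        rw [this]; exact hvO
      · right
        have : w = -v := Prod.ext (by rw [e1, h, hv]; simp) (by rw [e2, h, hv]; simp)
        rw [this]; exact hvO'
    have hε : ∃ ε : ℝ, 0 < ε ∧ ∀ w ∈ stableSet 𝒰, ε ≤ |dotRR u w| := by
      have hsub : ∀ w ∈ stableSet 𝒰, w ∈ unitCircle \ (O₁ ∪ O₂) := fun w hw =>
        ⟨hw.1, fun hO => hO.elim (fun h => hOS₁ w h hw) fun h => hOS₂ w h hw⟩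
      have hcont : Continuous fun w : ℝ × ℝ => |dotRR u w| := by unfold dotRR; fun_prop
      rcases (unitCircle \ (O₁ ∪ O₂)).eq_empty_or_nonempty with he | hne
      · exact ⟨1, one_pos, fun w hw => by have := hsub w hw; rw [he] at this; exact this.elim⟩
      · obtain ⟨w₀, hw₀, hmin⟩ := hcomp.exists_isMinOn hne hcont.continuousOn
        exact ⟨_, hne0 w₀ hw₀, fun w hw => hmin (hsub w hw)⟩
    obtain ⟨ε, hε, hεS⟩ := hε
    set M : ℝ := 1 / ε + 2 with hM
    have hMpos : 0 < M := by positivity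
    have hMε : 1 < M * ε := by
      rw [hM, add_mul, one_div, inv_mul_cancel₀ hε.ne']; linarith
    set z : Pt := (round (M * u.1), round (M * u.2)) with hz
    have happ : ∀ w ∈ unitCircle, |dotIR z w - M * dotRR u w| ≤ 1 := by
      intro w hw
      obtain ⟨w1, w2⟩ := abs_le_one_of_unitCircle hw
      have r1 := abs_sub_round (M * u.1)
      have r2 := abs_sub_round (M * u.2)
      have e : dotIR z w - M * dotRR u w
          = -((M * u.1 - round (M * u.1)) * w.1 + (M * u.2 - round (M * u.2)) * w.2) := by
        simp only [dotIR, dotRR, hz]; ring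
      rw [e, abs_neg]
      refine (abs_add_le _ _).trans ?_
      rw [abs_mul, abs_mul]
      have := mul_le_mul r1 w1 (abs_nonneg _) (by norm_num)
      have := mul_le_mul r2 w2 (abs_nonneg _) (by norm_num)
      linarith
    refine ⟨z, ?_, hfin.subset ?_⟩
    · intro h0
      have := happ u hu
      rw [h0] at this
      have e : dotIR 0 u - M * dotRR u u = -M := by
        simp only [dotIR, dotRR, Prod.fst_zero, Prod.snd_zero, Int.cast_zero]
        linear_combination -M * hu'
      rw [e, abs_neg, abs_of_pos hMpos] at this
      have : 0 < 1 / ε := by positivity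
      linarith
    · rintro w ⟨hw, hw'⟩
      refine ⟨hw, ?_⟩
      have hw' : 0 ≤ dotIR z w := hw'
      have h1 := (abs_le.mp (happ w hw.1)).2
      change 0 ≤ dotRR u w
      by_contra hlt
      push Not at hlt
      have h2 := hεS w hw
      rw [abs_of_neg hlt] at h2
      nlinarith

/-- In suitable unimodular coordinates `g`, for each integer `p` some update rule lies in the
closed half-planes below both lines of slope `-p / Q` and `-(p + 1) / Q` through the origin. -/
lemma normal_form {𝒰 : Finset (Finset Pt)} (hU : UpdateFamily 𝒰)
    (h : ∃ u ∈ unitCircle, (stableSet 𝒰 ∩ {w | 0 ≤ dotRR u w}).Finite) :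
    ∃ (g : Pt ≃+ Pt) (Q K : ℤ), 0 < Q ∧ 0 < K ∧ ∀ p : ℤ, ∃ X ∈ 𝒰, ∀ z ∈ X,
      g z ≠ 0 ∧ |(g z).1| ≤ K ∧ |(g z).2| ≤ K ∧ Q * (g z).2 + p * (g z).1 ≤ 0 ∧
        Q * (g z).2 + (p + 1) * (g z).1 ≤ 0 := by
  classical
  obtain ⟨z₀, hz₀, hfin₀⟩ := exists_int_dir hU h
  obtain ⟨a, b, e₁, e₂, hbez, hfin⟩ : ∃ a b e₁ e₂ : ℤ, a * e₁ + b * e₂ = 1 ∧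
      (stableSet 𝒰 ∩ {w | 0 ≤ dotIR (a, b) w}).Finite := by
    have hd : 0 < Int.gcd z₀.1 z₀.2 := by
      rw [Int.gcd_pos_iff]
      by_contra hcon
      push Not at hcon
      exact hz₀ (Prod.ext hcon.1 hcon.2)
    obtain ⟨a, b, hcop, ha, hb⟩ := Int.exists_gcd_one hd
    obtain ⟨e₁, e₂, hb'⟩ := Int.isCoprime_iff_gcd_eq_one.mpr hcop
    refine ⟨a, b, e₁, e₂, by linarith, hfin₀.subset ?_⟩
    rintro w ⟨hw, hw'⟩
    refine ⟨hw, ?_⟩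
    have hw' : 0 ≤ dotIR (a, b) w := hw'
    change 0 ≤ dotIR z₀ w
    have : dotIR z₀ w = (Int.gcd z₀.1 z₀.2 : ℝ) * dotIR (a, b) w := by
      have ha' : (z₀.1 : ℝ) = a * (Int.gcd z₀.1 z₀.2 : ℝ) := by exact_mod_cast ha
      have hb' : (z₀.2 : ℝ) = b * (Int.gcd z₀.1 z₀.2 : ℝ) := by exact_mod_cast hb
      simp only [dotIR]
      rw [ha', hb']
      ring
    rw [this]
    positivity
  let g : Pt ≃+ Pt :=
    { toFun := fun z => (z.1 * b - z.2 * a, z.1 * e₁ + z.2 * e₂)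
      invFun := fun y => (y.1 * e₂ + a * y.2, -e₁ * y.1 + b * y.2)
      left_inv := fun z => Prod.ext (by linear_combination z.1 * hbez)
        (by linear_combination z.2 * hbez)
      right_inv := fun y => Prod.ext (by linear_combination y.1 * hbez)
        (by linear_combination y.2 * hbez)
      map_add' := fun x y => Prod.ext (by simp only [Prod.fst_add, Prod.snd_add]; ring)
        (by simp only [Prod.fst_add, Prod.snd_add]; ring) }
  have hg1 : ∀ z, (g z).1 = z.1 * b - z.2 * a := fun z => rfl
  have hg2 : ∀ z, (g z).2 = z.1 * e₁ + z.2 * e₂ := fun z => rfl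
  have hbezR : (a : ℝ) * e₁ + b * e₂ = 1 := by exact_mod_cast hbez
  have hvv : (0 : ℝ) < (b : ℝ) ^ 2 + (a : ℝ) ^ 2 := by
    rcases eq_or_ne a 0 with ha | ha
    · have hb : b ≠ 0 := by rintro rfl; simp [ha] at hbez
      have : (b : ℝ) ≠ 0 := by exact_mod_cast hb
      positivity
    · have : (a : ℝ) ≠ 0 := by exact_mod_cast ha
      positivity
  -- all slopes `σ` outside a finite set are realised by some rule
  have hσ : {σ : ℝ | ¬ ∃ X ∈ 𝒰, ∀ z ∈ X, ((g z).2 : ℝ) + σ * (g z).1 < 0}.Finite := by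
    refine (hfin.image fun w => ((b * w.1 - a * w.2) / dotIR (a, b) w - (b * e₁ - a * e₂)) /
      ((b : ℝ) ^ 2 + (a : ℝ) ^ 2)).subset ?_
    intro σ hbad
    set x₁ : ℝ := e₁ + σ * b with hx₁
    set x₂ : ℝ := e₂ - σ * a with hx₂
    have hx : a * x₁ + b * x₂ = 1 := by rw [hx₁, hx₂]; linear_combination hbezR
    have hnorm : 0 < x₁ ^ 2 + x₂ ^ 2 := by
      rcases eq_or_ne x₁ 0 with h1 | h1
      · have h2 : x₂ ≠ 0 := by rintro h2; rw [h1, h2] at hx; simp at hx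
        positivity
      · positivity
    set ρ := √(x₁ ^ 2 + x₂ ^ 2) with hρ
    have hρ0 : 0 < ρ := Real.sqrt_pos.mpr hnorm
    have hρ2 : ρ ^ 2 = x₁ ^ 2 + x₂ ^ 2 := Real.sq_sqrt hnorm.le
    have hd : dotIR (a, b) (x₁ / ρ, x₂ / ρ) = 1 / ρ := by
      simp only [dotIR]; rw [← hx]; ring
    refine ⟨(x₁ / ρ, x₂ / ρ), ⟨⟨?_, ?_⟩, ?_⟩, ?_⟩
    · change (x₁ / ρ) ^ 2 + (x₂ / ρ) ^ 2 = 1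
      rw [div_pow, div_pow, ← add_div, ← hρ2, div_self (by positivity)]
    · intro X hX hsub
      refine hbad ⟨X, hX, fun z hz => ?_⟩
      have hz' : (z.1 : ℝ) * (x₁ / ρ) + z.2 * (x₂ / ρ) < 0 := hsub hz
      have : ((g z).2 : ℝ) + σ * (g z).1 = ρ * ((z.1 : ℝ) * (x₁ / ρ) + z.2 * (x₂ / ρ)) := by
        rw [hg1, hg2]
        push_cast
        field_simp
        rw [hx₁, hx₂]; ring
      rw [this]
      exact mul_neg_of_pos_of_neg hρ0 hz'
    · change 0 ≤ dotIR (a, b) (x₁ / ρ, x₂ / ρ)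
      rw [hd]; positivity
    · simp only [hd]
      rw [div_eq_iff hvv.ne']
      field_simp
      rw [hx₁, hx₂]; ring
  let Y : Finset Pt := 𝒰.biUnion id
  have hY : ∀ X ∈ 𝒰, ∀ z ∈ X, z ∈ Y := fun X hX z hz => Finset.mem_biUnion.mpr ⟨X, hX, hz⟩
  let f : Pt → ℤ := fun z => if (g z).1 = 0 then 1 else |(g z).1|
  have hfpos : ∀ z, 0 < f z := by
    intro z
    simp only [f]
    split_ifs with h0
    · exact one_pos
    · exact abs_pos.mpr h0
  set Q : ℤ := ∏ z ∈ Y, f z with hQ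
  have hQ0 : 0 < Q := Finset.prod_pos fun z _ => hfpos z
  set K : ℤ := 1 + ∑ z ∈ Y, (|(g z).1| + |(g z).2|) with hK
  have hKle : ∀ z ∈ Y, |(g z).1| + |(g z).2| ≤ K - 1 := by
    intro z hz
    have := Finset.single_le_sum (f := fun z => |(g z).1| + |(g z).2|)
      (fun z _ => add_nonneg (abs_nonneg _) (abs_nonneg _)) hz
    omega
  have hK0 : 0 < K := by
    have := Finset.sum_nonneg (s := Y) (f := fun z => |(g z).1| + |(g z).2|)
      (fun z _ => add_nonneg (abs_nonneg _) (abs_nonneg _))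
    omega
  refine ⟨g, Q, K, hQ0, hK0, fun p => ?_⟩
  have hQR : (0 : ℝ) < Q := by exact_mod_cast hQ0
  obtain ⟨σ, hσI, hσX⟩ := ((Set.Ioo_infinite (show (p : ℝ) / Q < (p + 1) / Q by
    gcongr; linarith)).sdiff hσ).nonempty
  have hσX : ∃ X ∈ 𝒰, ∀ z ∈ X, ((g z).2 : ℝ) + σ * (g z).1 < 0 := by
    by_contra hcon
    exact hσX hcon
  obtain ⟨X, hX, hXσ⟩ := hσX
  refine ⟨X, hX, fun z hz => ⟨?_, ?_, ?_, ?_⟩⟩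
  · intro h0
    have : z = 0 := (map_eq_zero_iff g g.injective).mp h0
    exact hU.2 X hX (this ▸ hz)
  · have := hKle z (hY X hX z hz)
    have := abs_nonneg (g z).2
    omega
  · have := hKle z (hY X hX z hz)
    have := abs_nonneg (g z).1
    omega
  have hlt := hXσ z hz
  have hdvd : f z ∣ Q := Finset.dvd_prod_of_mem f (hY X hX z hz)
  have hp1 : (p : ℝ) < Q * σ := by
    have := (div_lt_iff₀ hQR).mp hσI.1; linarith
  have hp2 : Q * σ < (p : ℝ) + 1 := by
    have := (lt_div_iff₀ hQR).mp hσI.2; linarith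
  have hQlt : (Q : ℝ) * (g z).2 + Q * σ * (g z).1 < 0 := by
    have := mul_neg_of_pos_of_neg hQR hlt
    linarith
  set x := (g z).1 with hx
  set y := (g z).2 with hy
  obtain ⟨q, hq⟩ := hdvd
  rcases lt_trichotomy x 0 with hx0 | hx0 | hx0
  · have hf : f z = -x := by
      simp only [f, ← hx]
      rw [if_neg hx0.ne, abs_of_neg hx0]
    have hxR : (x : ℝ) < 0 := by exact_mod_cast hx0
    have h1R : (Q : ℝ) * y + (p + 1) * x < 0 := by nlinarith
    have h1 : Q * y + (p + 1) * x < 0 := by exact_mod_cast h1R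
    refine ⟨?_, h1.le⟩
    have e : Q * y + (p + 1) * x = x * (-(q * y) + p + 1) := by rw [hq, hf]; ring
    rw [e] at h1
    have : 0 < -(q * y) + p + 1 := by
      by_contra hcon
      push Not at hcon
      nlinarith
    have e' : Q * y + p * x = x * (-(q * y) + p) := by rw [hq, hf]; ring
    rw [e']
    exact mul_nonpos_of_nonpos_of_nonneg hx0.le (by omega)
  · have : (Q : ℝ) * y < 0 := by rw [hx0] at hQlt; simpa using hQlt
    have h1 : Q * y < 0 := by exact_mod_cast this
    rw [hx0]
    constructor <;> linarith
  · have hf : f z = x := by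
      simp only [f, ← hx]
      rw [if_neg hx0.ne', abs_of_pos hx0]
    have hxR : (0 : ℝ) < x := by exact_mod_cast hx0
    have h1R : (Q : ℝ) * y + p * x < 0 := by nlinarith
    have h1 : Q * y + p * x < 0 := by exact_mod_cast h1R
    refine ⟨h1.le, ?_⟩
    have e : Q * y + p * x = x * (q * y + p) := by rw [hq, hf]; ring
    rw [e] at h1
    have : q * y + p < 0 := by
      by_contra hcon
      push Not at hcon
      nlinarith
    have e' : Q * y + (p + 1) * x = x * (q * y + p + 1) := by rw [hq, hf]; ring
    rw [e']
    exact mul_nonpos_of_nonneg_of_nonpos hx0.le (by omega)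

/-! ### Deterministic growth of a polygonal droplet -/

/-- `B` is closed under update rules which, for each `p`, only look at the cone of nonzero vectors
below both lines `Q y + p x = 0` and `Q y + (p + 1) x = 0`, within distance `K`. -/
def Gr (Q K : ℤ) (B : Set Pt) : Prop :=
  ∀ (p : ℤ) (z : Pt), (∀ y : Pt, y ≠ 0 → |y.1| ≤ K → |y.2| ≤ K → Q * y.2 + p * y.1 ≤ 0 →
    Q * y.2 + (p + 1) * y.1 ≤ 0 → (z.1 + y.1, z.2 + y.2) ∈ B) → z ∈ B

/-- Reflection in the vertical axis. -/
def refl (B : Set Pt) : Set Pt := {z | (-z.1, z.2) ∈ B}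

lemma mem_refl {B : Set Pt} {z : Pt} : z ∈ refl B ↔ (-z.1, z.2) ∈ B := Iff.rfl

lemma Gr.refl {Q K : ℤ} {B : Set Pt} (h : Gr Q K B) : Gr Q K (refl B) := by
  intro p z hz
  refine h (-p - 1) (-z.1, z.2) fun y hy0 h1 h2 h3 h4 => ?_
  have := hz (-y.1, y.2) (fun h0 => hy0 ?_) (by simpa using h1) h2 (by simp only; linarith)
    (by simp only; linarith)
  · rw [mem_refl] at this
    simp only [neg_add, neg_neg] at this
    exact this
  · have e1 := congrArg Prod.fst h0
    have e2 := congrArg Prod.snd h0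
    simp only [Prod.fst_zero, Prod.snd_zero] at e1 e2
    exact Prod.ext (by simpa using e1) e2

/-- The droplet with faces `Q y + j x ≤ e j + r j ^ 2` for `|j| ≤ A`, over the interval
`|x| ≤ r (2 A + 2)` and above the line `y = 0`. When all `e j` are equal to `T`, face `j` occupies
the abscissae between `r (2 j - 1)` and `r (2 j + 1)`. -/
def Dr (Q A r : ℤ) (e : ℤ → ℤ) : Set Pt :=
  {z | |z.1| ≤ r * (2 * A + 2) ∧ 0 ≤ z.2 ∧ ∀ j, |j| ≤ A → Q * z.2 + j * z.1 ≤ e j + r * j ^ 2}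

/-- A new row on face `i` fills up to the right of an infected window. -/
lemma right_fill {Q K A r T i x₀ : ℤ} {e : ℤ → ℤ} {B : Set Pt} (hQ : 0 < Q) (hK : 0 < K)
    (hA : A = Q * K + 1) (hr : K ≤ r) (hB : Gr Q K B) (hi : |i| ≤ A)
    (he : ∀ j, |j| ≤ A → T ≤ e j ∧ e j ≤ T + 1) (hei : e i = T)
    (hT : Q * K + A * (r * (2 * A + 2)) ≤ T) (hD : Dr Q A r e ⊆ B)
    (hx₀ : r * (2 * i - 1) + K ≤ x₀)
    (hwin : ∀ z : Pt, Q * z.2 + i * z.1 = T + 1 + r * i ^ 2 → |z.1 - x₀| ≤ K → z ∈ B) :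
    ∀ z : Pt, Q * z.2 + i * z.1 = T + 1 + r * i ^ 2 → x₀ ≤ z.1 → z.1 ≤ r * (2 * A + 2) →
      (∀ j, i < j → j ≤ A → Q * z.2 + j * z.1 ≤ e j + r * j ^ 2) → z ∈ B := by
  have hr0 : 0 < r := by omega
  have hA0 : 0 < A := by nlinarith
  have hi' := abs_le.mp hi
  have key : ∀ (m : ℕ) (z : Pt), z.1 = x₀ + m → Q * z.2 + i * z.1 = T + 1 + r * i ^ 2 →
      z.1 ≤ r * (2 * A + 2) → (∀ j, i < j → j ≤ A → Q * z.2 + j * z.1 ≤ e j + r * j ^ 2) →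
      z ∈ B := by
    intro m
    induction m using Nat.strong_induction_on with
    | _ m ih =>
    intro z hzm hrow hzx hzj
    by_cases hw : (m : ℤ) ≤ K
    · exact hwin z hrow (by rw [hzm, abs_le]; constructor <;> omega)
    push Not at hw
    refine hB i z fun y hy0 hy1 hy2 hy3 hy4 => ?_
    rw [abs_le] at hy1 hy2
    have hx₀z : x₀ + K ≤ z.1 := by omega
    -- the rules used on the last face do not look to the right
    have hyA : i = A → y.1 ≤ 0 := by
      intro hiA
      by_contra hpos
      push Not at hpos
      rw [hiA, hA] at hy3
      nlinarith
    rcases hy3.lt_or_eq with hlt | heq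
    · apply hD
      have hzi : i < A → z.1 ≤ r * (2 * i + 1) := by
        intro hiA
        have h1 := hzj (i + 1) (by omega) (by omega)
        have h2 := (he (i + 1) (abs_le.mpr ⟨by omega, by omega⟩)).2
        linarith
      refine ⟨?_, ?_, ?_⟩
      · simp only
        rw [abs_le]
        constructor
        · have : r * (2 * i - 1) ≥ r * (-(2 * A + 1)) :=
            mul_le_mul_of_nonneg_left (by omega) hr0.le
          linarith
        · rcases lt_or_eq_of_le hi'.2 with h | h
          · have h1 := hzi h
            have : r * (2 * i + 1) ≤ r * (2 * A - 1) :=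
              mul_le_mul_of_nonneg_left (by omega) hr0.le
            linarith
          · have := hyA h
            omega
      · simp only
        have h1 : i * z.1 ≤ A * (r * (2 * A + 2)) := by
          have hz1 : |z.1| ≤ r * (2 * A + 2) := by
            rw [abs_le]
            refine ⟨?_, hzx⟩
            have : r * (2 * i - 1) ≥ r * (-(2 * A + 1)) :=
              mul_le_mul_of_nonneg_left (by omega) hr0.le
            linarith
          calc i * z.1 ≤ |i * z.1| := le_abs_self _
            _ = |i| * |z.1| := abs_mul _ _
            _ ≤ A * (r * (2 * A + 2)) := mul_le_mul hi hz1 (abs_nonneg _) hA0.le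
        have h2 : Q * K < Q * z.2 := by linarith [mul_nonneg hr0.le (sq_nonneg i)]
        have h3 := lt_of_mul_lt_mul_left h2 hQ.le
        omega
      · intro j hj
        have hj' := abs_le.mp hj
        simp only
        rcases lt_trichotomy j i with hji | hji | hji
        · have h1 := (he j hj).1
          obtain ⟨m', rfl⟩ : ∃ m', j = i - m' := ⟨i - j, by ring⟩
          have hm' : 1 ≤ m' := by omega
          have h2 : r * (2 * i - m') ≤ z.1 + y.1 := by
            have := mul_le_mul_of_nonneg_left hm' hr0.le
            linarith
          have h3 := mul_le_mul_of_nonneg_left h2 (by omega : 0 ≤ m')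
          linarith
        · rw [hji, hei]
          linarith
        · have h1 := hzj j hji hj'.2
          by_cases hy : y.1 ≤ 0
          · have h2 : (j - i) * y.1 ≤ 0 := mul_nonpos_of_nonneg_of_nonpos (by omega) hy
            linarith
          rcases eq_or_lt_of_le (show i + 1 ≤ j by omega) with h | h
          · rw [← h] at h1 ⊢
            linarith
          · have h2 := hzi (by omega)
            have h3 := (he j hj).1
            obtain ⟨m', rfl⟩ : ∃ m', j = i + m' := ⟨j - i, by ring⟩
            have hm' : 2 ≤ m' := by omega
            have h4 : m' * (z.1 + y.1) ≤ m' * (r * (2 * i + 1) + K) :=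
              mul_le_mul_of_nonneg_left (by omega) (by omega)
            have h5 : m' * K ≤ m' * (r * (m' - 1)) := by
              refine mul_le_mul_of_nonneg_left ?_ (by omega)
              have := mul_le_mul_of_nonneg_left (show 1 ≤ m' - 1 by omega) hr0.le
              linarith
            linarith
    · have hyn : y.1 ≤ 0 := by linarith
      have hyn' : y.1 < 0 := by
        refine lt_of_le_of_ne hyn fun h0 => hy0 ?_
        rw [h0, mul_zero, add_zero] at heq
        exact Prod.ext h0 ((mul_eq_zero.mp heq).resolve_left hQ.ne')
      refine ih ((m : ℤ) + y.1).toNat (by omega) _ (by simp only; omega) ?_ (by simp only; omega) ?_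
      · simp only; linarith
      · intro j hij hjA
        have h1 := hzj j hij hjA
        have h2 : (j - i) * y.1 ≤ 0 := mul_nonpos_of_nonneg_of_nonpos (by omega) hyn
        simp only
        linarith
  intro z hrow hx hx' hj
  exact key (z.1 - x₀).toNat z (by omega) hrow hx' hj

/-- An infected window on a face makes the face advance by one row. -/
lemma face_grow {Q K A r T i x₀ : ℤ} {e : ℤ → ℤ} {B : Set Pt} (hQ : 0 < Q) (hK : 0 < K)
    (hA : A = Q * K + 1) (hr : K ≤ r) (hB : Gr Q K B) (hi : |i| ≤ A)
    (he : ∀ j, |j| ≤ A → T ≤ e j ∧ e j ≤ T + 1) (hei : e i = T)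
    (hT : Q * K + A * (r * (2 * A + 2)) ≤ T) (hD : Dr Q A r e ⊆ B)
    (hx₀ : r * (2 * i - 1) + K ≤ x₀) (hx₀' : x₀ ≤ r * (2 * i + 1) - K)
    (hwin : ∀ z : Pt, Q * z.2 + i * z.1 = T + 1 + r * i ^ 2 → |z.1 - x₀| ≤ K → z ∈ B) :
    Dr Q A r (Function.update e i (T + 1)) ⊆ B := by
  rintro z ⟨hzx, hz0, hz⟩
  have hne : ∀ j, |j| ≤ A → j ≠ i → Q * z.2 + j * z.1 ≤ e j + r * j ^ 2 := by
    intro j hj hji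
    have := hz j hj
    rwa [Function.update_of_ne hji] at this
  have hzi := hz i hi
  rw [Function.update_self] at hzi
  have hi' := abs_le.mp hi
  rcases hzi.lt_or_eq with hlt | heq
  · refine hD ⟨hzx, hz0, fun j hj => ?_⟩
    by_cases hji : j = i
    · rw [hji, hei]; omega
    · exact hne j hj hji
  rcases le_total x₀ z.1 with hle | hle
  · refine right_fill hQ hK hA hr hB hi he hei hT hD hx₀ hwin z heq hle (abs_le.mp hzx).2 ?_
    intro j hij hjA
    exact hne j (abs_le.mpr ⟨by omega, hjA⟩) hij.ne'
  · have hD' : Dr Q A r (fun j => e (-j)) ⊆ refl B := by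
      rintro w ⟨hw1, hw2, hw3⟩
      refine hD ⟨by simpa using hw1, hw2, fun j hj => ?_⟩
      have := hw3 (-j) (by simpa using hj)
      simp only [neg_neg] at this ⊢
      linarith
    have := right_fill (i := -i) (x₀ := -x₀) hQ hK hA hr hB.refl (by simpa using hi)
      (fun j hj => he (-j) (by simpa using hj)) (by simpa using hei) hT hD' (by linarith)
      (fun w hw hw' => hwin (-w.1, w.2) (by simp only; linarith) (by
        simp only
        rwa [← abs_neg, show -(-w.1 - x₀) = w.1 - -x₀ by ring]))
      (-z.1, z.2) (by simp only; linarith) (by simp only; omega)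
      (by have := (abs_le.mp hzx).1; simp only; omega) (by
        intro j hij hjA
        have := hne (-j) (abs_le.mpr ⟨by omega, by omega⟩) (by omega)
        simp only
        linarith)
    rw [mem_refl] at this
    simpa using this

/-- Within `M` steps of length `2 N + 1` from `z` in direction `d`, some box of radius `N` is
infected. -/
def Help (N : ℤ) (B : Set Pt) (M : ℕ) (d z : Pt) : Prop :=
  ∃ k : ℕ, k < M ∧ ∀ w : Pt, |w.1| ≤ N → |w.2| ≤ N →
    (z.1 + k * ((2 * N + 1) * d.1) + w.1, z.2 + k * ((2 * N + 1) * d.2) + w.2) ∈ B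

/-- The droplet grows by one row on all faces if each new row meets a helping box. -/
lemma drop_grow {Q K A N r T : ℤ} {M : ℕ} {B : Set Pt} (hQ : 0 < Q) (hK : 0 < K)
    (hA : A = Q * K + 1) (hN : N = A * K) (hr : Q + M * ((2 * N + 1) * Q) + K ≤ r) (hB : Gr Q K B)
    (hT : Q * K + A * (r * (2 * A + 2)) ≤ T) (hD : Dr Q A r (fun _ => T) ⊆ B)
    (hH : ∀ i, |i| ≤ A → ∀ z : Pt, |z.1| ≤ r * (2 * A + 2) →
      Q * z.2 + i * z.1 = T + 1 + r * i ^ 2 → Help N B M (Q, -i) z) :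
    Dr Q A r (fun _ => T + 1) ⊆ B := by
  have hA0 : 0 < A := by nlinarith
  have hKN : K ≤ N := by nlinarith
  have hN0 : 0 ≤ 2 * N + 1 := by omega
  have hM0 : 0 ≤ (M : ℤ) * ((2 * N + 1) * Q) := by positivity
  have hr0 : K + Q ≤ r := by omega
  have key : ∀ m : ℕ, (m : ℤ) ≤ 2 * A + 1 →
      Dr Q A r (fun j => if j < -A + m then T + 1 else T) ⊆ B := by
    intro m
    induction m with
    | zero =>
      intro _ z hz
      refine hD ⟨hz.1, hz.2.1, fun j hj => ?_⟩
      have := hz.2.2 j hj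
      have h' := (abs_le.mp hj).1
      simp only [Nat.cast_zero, add_zero] at this
      rwa [if_neg (by omega)] at this
    | succ m ih =>
      intro hm
      push_cast at hm
      have ihm := ih (by omega)
      set e : ℤ → ℤ := fun j => if j < -A + m then T + 1 else T with he
      set i : ℤ := -A + m with hi
      have hiA : |i| ≤ A := abs_le.mpr ⟨by omega, by omega⟩
      have hiA' := abs_le.mp hiA
      have hupd : (fun j => if j < -A + ((m + 1 : ℕ) : ℤ) then T + 1 else T)
          = Function.update e i (T + 1) := by
        funext j
        rcases lt_trichotomy j i with h | h | h
        · rw [Function.update_of_ne h.ne, if_pos (by push_cast; omega)]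
          simp only [he, if_pos h]
        · rw [h, Function.update_self, if_pos (by push_cast; omega)]
        · rw [Function.update_of_ne h.ne', if_neg (by push_cast; omega)]
          simp only [he, if_neg h.not_gt]
      rw [hupd]
      have hbd : ∀ j, |j| ≤ A → T ≤ e j ∧ e j ≤ T + 1 := by
        intro j _
        simp only [he]
        split_ifs <;> omega
      have hei : e i = T := by simp [he]
      have hrK : K ≤ r := by omega
      by_cases hex : ∃ z : Pt, Q * z.2 + i * z.1 = T + 1 + r * i ^ 2
      · obtain ⟨z, hz⟩ := hex
        -- slide along the row to the first lattice point in the middle of the face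
        set t := (z.1 - 2 * r * i) / Q with ht
        have h1 := Int.emod_add_mul_ediv (z.1 - 2 * r * i) Q
        rw [← ht] at h1
        have h2 := Int.emod_nonneg (z.1 - 2 * r * i) hQ.ne'
        have h3 := Int.emod_lt_of_pos (z.1 - 2 * r * i) hQ
        have hx1 : 2 * r * i ≤ z.1 - t * Q := by linarith
        have hx2 : z.1 - t * Q < 2 * r * i + Q := by linarith
        have hri : r * i ≤ r * A := mul_le_mul_of_nonneg_left hiA'.2 (by omega)
        have hri' : r * (-A) ≤ r * i := mul_le_mul_of_nonneg_left hiA'.1 (by omega)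
        obtain ⟨k, hk, hkB⟩ := hH i hiA (z.1 - t * Q, z.2 + t * i)
          (by simp only; rw [abs_le]; constructor <;> linarith)
          (by simp only; linarith)
        simp only at hkB
        have hkM : (k : ℤ) * ((2 * N + 1) * Q) ≤ M * ((2 * N + 1) * Q) := by
          gcongr
        have hk0 : 0 ≤ (k : ℤ) * ((2 * N + 1) * Q) := by positivity
        refine face_grow (x₀ := z.1 - t * Q + k * ((2 * N + 1) * Q)) hQ hK hA hrK hB hiA hbd hei
          hT ihm (by linarith) (by linarith) ?_
        intro w hw hwx
        have hw2 : Q * (w.2 - (z.2 + t * i + k * ((2 * N + 1) * -i)))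
            = -i * (w.1 - (z.1 - t * Q + k * ((2 * N + 1) * Q))) := by linarith
        have hb := hkB (w.1 - (z.1 - t * Q + k * ((2 * N + 1) * Q)),
          w.2 - (z.2 + t * i + k * ((2 * N + 1) * -i))) (hwx.trans hKN) (by
            simp only
            have h5 := congrArg abs hw2
            rw [abs_mul, abs_mul, abs_neg, abs_of_pos hQ] at h5
            have h6 := mul_le_mul hiA hwx (abs_nonneg _) hA0.le
            have h7 := abs_nonneg (w.2 - (z.2 + t * i + k * ((2 * N + 1) * -i)))
            have h8 := le_mul_of_one_le_left h7 (show 1 ≤ Q by omega)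
            linarith)
        simp only [add_sub_cancel] at hb
        exact hb
      · push Not at hex
        exact face_grow (x₀ := 2 * r * i) hQ hK hA hrK hB hiA hbd hei
          hT ihm (by linarith) (by linarith) fun z hz _ => (hex z hz).elim
  intro z hz
  refine key (2 * A + 1).toNat (by omega) ⟨hz.1, hz.2.1, fun j hj => ?_⟩
  have := (abs_le.mp hj).2
  have := (abs_le.mp hj).1
  simp only
  rw [if_pos (by omega)]
  exact hz.2.2 j hj

/-! ### Sideways growth, and the two phases of growth -/

lemma drop_grow_to {Q K A N r T : ℤ} {M : ℕ} {B : Set Pt} (hQ : 0 < Q) (hK : 0 < K)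
    (hA : A = Q * K + 1) (hN : N = A * K) (hr : Q + M * ((2 * N + 1) * Q) + K ≤ r) (hB : Gr Q K B)
    (hT : Q * K + A * (r * (2 * A + 2)) ≤ T) (hD : Dr Q A r (fun _ => T) ⊆ B) (n : ℕ)
    (hH : ∀ i, |i| ≤ A → ∀ z : Pt, |z.1| ≤ r * (2 * A + 2) →
      T ≤ Q * z.2 + i * z.1 - r * i ^ 2 → Q * z.2 + i * z.1 - r * i ^ 2 ≤ T + n →
      Help N B M (Q, -i) z) :
    Dr Q A r (fun _ => T + n) ⊆ B := by
  induction n with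
  | zero => simpa using hD
  | succ n ih =>
    have h1 := ih fun i hi z hz h2 h3 => hH i hi z hz h2 (by push_cast; omega)
    have h2 := drop_grow hQ hK hA hN hr hB (T := T + n) (by omega) h1 fun i hi z hz h2 =>
      hH i hi z hz (by omega) (by push_cast; omega)
    have e : (fun _ : ℤ => T + ((n + 1 : ℕ) : ℤ)) = fun _ : ℤ => T + (n : ℤ) + 1 := by
      funext; push_cast; ring
    rw [e]
    exact h2

/-- The rectangle `[a, b] × [lo, hi]`. -/
def Rect (a b lo hi : ℤ) : Set Pt := {z | a ≤ z.1 ∧ z.1 ≤ b ∧ lo ≤ z.2 ∧ z.2 ≤ hi}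

lemma side_step {Q K A N m a b lo hi : ℤ} {M : ℕ} {B : Set Pt} (hQ : 0 < Q) (hK : 0 < K)
    (hA : A = Q * K + 1) (hKN : K ≤ N) (hm : K + N + M * (2 * N + 1) ≤ m) (hB : Gr Q K B)
    (hab : K ≤ b - a) (hR : Rect a b lo hi ⊆ B) (hH : Help N B M (0, 1) (b + 1, lo + K + N)) :
    Rect a (b + 1) (lo + m) (hi - K) ⊆ B := by
  obtain ⟨k, hk, hkB⟩ := hH
  simp only [mul_zero, mul_one, add_zero] at hkB
  have hN0 : 0 ≤ 2 * N + 1 := by omega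
  have hkM : (k : ℤ) * (2 * N + 1) ≤ M * (2 * N + 1) := by gcongr
  have hk0 : 0 ≤ (k : ℤ) * (2 * N + 1) := by positivity
  set c := lo + K + N + k * (2 * N + 1) with hc
  have key : ∀ j : ℕ, c + j ≤ hi - K → (b + 1, c + (j : ℤ)) ∈ B := by
    intro j
    induction j using Nat.strong_induction_on with
    | _ j ih =>
    intro hj
    by_cases hjN : (j : ℤ) ≤ N
    · have := hkB (0, j) (by simpa using by omega) (by simpa using hjN)
      simpa using this
    refine hB A _ fun y hy0 hy1 hy2 hy3 hy4 => ?_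
    rw [abs_le] at hy1 hy2
    -- rules with `p = A` never look to the right
    have hyA : y.1 ≤ 0 := by
      by_contra hpos
      push Not at hpos
      rw [hA] at hy3
      have e1 : Q * -K ≤ Q * y.2 := mul_le_mul_of_nonneg_left hy2.1 hQ.le
      have e2 : Q * K * 1 ≤ Q * K * y.1 := mul_le_mul_of_nonneg_left hpos (by positivity)
      linarith
    simp only
    rcases hyA.lt_or_eq with h | h
    · refine hR ⟨?_, ?_, ?_, ?_⟩ <;> simp only <;> omega
    · have hy2' : y.2 < 0 := by
        rw [h] at hy3
        simp only [mul_zero, add_zero] at hy3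
        refine lt_of_le_of_ne (nonpos_of_mul_nonpos_right hy3 hQ) fun h2 => hy0 (Prod.ext h h2)
      have := ih ((j : ℤ) + y.2).toNat (by omega) (by omega)
      rw [h]
      convert this using 2 <;> omega
  rintro ⟨x, y⟩ ⟨h1, h2, h3, h4⟩
  simp only at h1 h2 h3 h4
  rcases h2.lt_or_eq with h | h
  · exact hR ⟨h1, by simp only; omega, by simp only; omega, by simp only; omega⟩
  · have := key (y - c).toNat (by omega)
    rw [h]
    convert this using 2
    omega

lemma side_grow {Q K A N m a b lo hi : ℤ} {M : ℕ} {B : Set Pt} (hQ : 0 < Q) (hK : 0 < K)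
    (hA : A = Q * K + 1) (hKN : K ≤ N) (hm : K + N + M * (2 * N + 1) ≤ m) (hB : Gr Q K B)
    (hab : K ≤ b - a) (hR : Rect a b lo hi ⊆ B) (l : ℕ)
    (hH : ∀ l' : ℕ, l' < l → Help N B M (0, 1) (b + l' + 1, lo + m * l' + K + N)) :
    Rect a (b + l) (lo + m * l) (hi - K * l) ⊆ B := by
  induction l with
  | zero => simpa using hR
  | succ l ih =>
    have h1 := ih fun l' hl' => hH l' (by omega)
    have h2 := side_step hQ hK hA hKN hm hB (by omega) h1 (hH l (by omega))
    have e1 : b + ((l + 1 : ℕ) : ℤ) = b + l + 1 := by push_cast; ring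
    have e2 : lo + m * ((l + 1 : ℕ) : ℤ) = lo + m * l + m := by push_cast; ring
    have e3 : hi - K * ((l + 1 : ℕ) : ℤ) = hi - K * l - K := by push_cast; ring
    rw [e1, e2, e3]
    exact h2

lemma Help.refl {N : ℤ} {B : Set Pt} {M : ℕ} {x y : ℤ} (h : Help N B M (0, 1) (-x, y)) :
    Help N (refl B) M (0, 1) (x, y) := by
  obtain ⟨k, hk, hkB⟩ := h
  refine ⟨k, hk, fun w h1 h2 => ?_⟩
  have := hkB (-w.1, w.2) (by simpa using h1) h2
  rw [mem_refl]
  simp only [mul_zero, add_zero] at this ⊢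
  rw [neg_add]
  exact this

lemma side_grow_left {Q K A N m a b lo hi : ℤ} {M : ℕ} {B : Set Pt} (hQ : 0 < Q) (hK : 0 < K)
    (hA : A = Q * K + 1) (hKN : K ≤ N) (hm : K + N + M * (2 * N + 1) ≤ m) (hB : Gr Q K B)
    (hab : K ≤ b - a) (hR : Rect a b lo hi ⊆ B) (l : ℕ)
    (hH : ∀ l' : ℕ, l' < l → Help N B M (0, 1) (a - l' - 1, lo + m * l' + K + N)) :
    Rect (a - l) b (lo + m * l) (hi - K * l) ⊆ B := by
  have h := side_grow (a := -b) (b := -a) (lo := lo) (hi := hi) hQ hK hA hKN hm hB.refl (by omega)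
    (fun z hz => hR ⟨by simp only; have := hz.2.1; omega, by simp only; have := hz.1; omega,
      hz.2.2.1, hz.2.2.2⟩) l
    (fun l' hl' => Help.refl (by
      have := hH l' hl'
      rwa [show -(-a + (l' : ℤ) + 1) = a - l' - 1 by ring]))
  intro z hz
  have := h (a := (-z.1, z.2)) ⟨by simp only; have := hz.2.1; omega,
    by simp only; have := hz.1; omega, hz.2.2.1, hz.2.2.2⟩
  rw [mem_refl] at this
  simpa using this

/-- Help in all the directions needed for growth. -/
def HelpAll (Q A N : ℤ) (B : Set Pt) (M : ℕ) (z : Pt) : Prop :=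
  Help N B M (0, 1) z ∧ ∀ i, |i| ≤ A → Help N B M (Q, -i) z

/-- Radius of a seed, in units of the scale `r` of the droplet it contains: the box of this radius
contains the droplet whose faces are at the smallest height `T` allowed in `drop_grow`. -/
def seedC (Q K A : ℤ) : ℤ := 2 * A + 2 + Q * K + A * (2 * A + 2)

/-- Ratio between the scale `r` of a droplet and the length `M` of its help. -/
def scaleC (Q K N : ℤ) : ℤ := Q + (2 * N + 1) * Q + K

section Phases

variable {Q K A N : ℤ} {B : Set Pt}

lemma scale_le (hQ : 0 < Q) (hK : 0 < K)
    (hA : A = Q * K + 1) (hN : N = A * K) {M : ℕ} (hM : 1 ≤ M) :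
    Q + M * ((2 * N + 1) * Q) + K ≤ scaleC Q K N * M := by
  have hM' : (1 : ℤ) ≤ M := by exact_mod_cast hM
  unfold scaleC
  nlinarith

lemma seed_drop (hQ : 0 < Q) (hK : 0 < K) (hA : A = Q * K + 1) {r : ℤ} (hr : 1 ≤ r)
    (hbox : ∀ z : Pt, |z.1| ≤ seedC Q K A * r → |z.2| ≤ seedC Q K A * r → z ∈ B) :
    Dr Q A r (fun _ => Q * K + A * (r * (2 * A + 2))) ⊆ B := by
  have hA0 : 0 < A := by rw [hA]; positivity
  rintro z ⟨h1, h2, h3⟩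
  have h0 := h3 0 (by simpa using hA0.le)
  simp only [zero_mul, add_zero, ne_eq, OfNat.ofNat_ne_zero, not_false_eq_true, zero_pow,
    mul_zero] at h0
  have hQK : Q * K ≤ Q * K * r := le_mul_of_one_le_right (by positivity) hr
  have p1 : 0 ≤ A * (r * (2 * A + 2)) := by positivity
  have p2 : 0 ≤ r * (2 * A + 2) := by positivity
  have p3 : 0 < Q * K := by positivity
  have e : seedC Q K A * r = r * (2 * A + 2) + Q * K * r + A * (r * (2 * A + 2)) := by
    unfold seedC; ring
  refine hbox z (by linarith) ?_
  rw [abs_of_nonneg h2]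
  have := le_mul_of_one_le_left h2 (show 1 ≤ Q by omega)
  linarith

lemma rect_sub_drop (hQ : 0 < Q) (hK : 0 < K) (hA : A = Q * K + 1) {r T H : ℤ} (hr : 1 ≤ r)
    (hT : Q * H + A * (r * (2 * A + 2)) ≤ T) :
    Rect (-(r * (2 * A + 2))) (r * (2 * A + 2)) 0 H ⊆ Dr Q A r (fun _ => T) := by
  have hA0 : 0 < A := by rw [hA]; positivity
  rintro z ⟨h1, h2, h3, h4⟩
  have hz : |z.1| ≤ r * (2 * A + 2) := abs_le.mpr ⟨h1, h2⟩
  refine ⟨hz, h3, fun j hj => ?_⟩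
  have e1 : j * z.1 ≤ A * (r * (2 * A + 2)) := by
    calc j * z.1 ≤ |j * z.1| := le_abs_self _
      _ = |j| * |z.1| := abs_mul _ _
      _ ≤ _ := mul_le_mul hj hz (abs_nonneg _) hA0.le
  have e2 : Q * z.2 ≤ Q * H := mul_le_mul_of_nonneg_left h4 hQ.le
  have e3 : 0 ≤ r * j ^ 2 := by positivity
  simp only
  linarith

/-- Given help everywhere and periodicity, a seed infects the whole plane. -/
lemma phase_two (hQ : 0 < Q) (hK : 0 < K)
    (hA : A = Q * K + 1) (hN : N = A * K) (hB : Gr Q K B)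
    {M n : ℕ} (hM : 1 ≤ M) (hn : 1 ≤ n)
    (hper : ∀ (z : Pt) (k l : ℤ), (z.1 + n * k, z.2 + n * l) ∈ B → z ∈ B)
    (hbox : ∀ z : Pt, |z.1| ≤ seedC Q K A * (scaleC Q K N * M) →
      |z.2| ≤ seedC Q K A * (scaleC Q K N * M) → z ∈ B)
    (hH : ∀ z, HelpAll Q A N B M z) : ∀ z, z ∈ B := by
  have hA0 : 0 < A := by rw [hA]; positivity
  have hN0 : 0 < N := by rw [hN]; positivity
  have hKN : K ≤ N := by nlinarith
  set r := scaleC Q K N * M with hr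
  have hrle : Q + M * ((2 * N + 1) * Q) + K ≤ r := scale_le hQ hK hA hN hM
  have hr1 : 1 ≤ r := by
    have : 0 ≤ (M : ℤ) * ((2 * N + 1) * Q) := by positivity
    omega
  have hn' : (1 : ℤ) ≤ n := by exact_mod_cast hn
  set X := r * (2 * A + 2) with hX
  -- the droplet grows up to any height, filling the strip above the seed
  have hup : ∀ H : ℕ, Rect (-X) X 0 H ⊆ B := by
    intro H
    have h1 := drop_grow_to hQ hK hA hN hrle hB le_rfl (seed_drop hQ hK hA hr1 hbox)
      (Q * H).toNat fun i hi z _ _ _ => (hH z).2 i hi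
    refine (rect_sub_drop hQ hK hA hr1 ?_).trans h1
    have : 0 ≤ Q * H := by positivity
    have : 0 < Q * K := by positivity
    omega
  -- by periodicity the strip is filled below the seed as well
  have hstrip : ∀ z : Pt, -X ≤ z.1 → z.1 ≤ X → z ∈ B := by
    intro z h1 h2
    have h3 : -(z.2) ≤ n * |z.2| := by
      have := neg_le_abs z.2
      have := le_mul_of_one_le_left (abs_nonneg z.2) hn'
      omega
    refine hper z 0 |z.2| (hup (z.2 + n * |z.2|).toNat ⟨?_, ?_, ?_, ?_⟩) <;> simp only [mul_zero]
    all_goals omega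
  have hright : ∀ z : Pt, -X ≤ z.1 → z ∈ B := by
    intro z h1
    rcases le_total z.1 X with h2 | h2
    · exact hstrip z h1 h2
    -- each column costs a height `m` below and `K` above, which the infinite strip affords
    set m := K + N + M * (2 * N + 1) with hm
    set l := (z.1 - X).toNat with hl
    have hl' : (l : ℤ) = z.1 - X := by omega
    have hXK : K ≤ X - -X := by
      have : r * 2 ≤ r * (2 * A + 2) := mul_le_mul_of_nonneg_left (by omega) (by omega)
      have : 0 ≤ (M : ℤ) * ((2 * N + 1) * Q) := by positivity
      omega
    have := side_grow hQ hK hA hKN hm.ge hB (a := -X) (b := X) (lo := z.2 - m * l)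
      (hi := z.2 + K * l) hXK (fun w hw => hstrip w hw.1 hw.2.1) l fun l' _ => (hH _).1
    exact this ⟨h1, by omega, by omega, by omega⟩
  -- the half-plane to the right of the strip is filled, hence by periodicity the plane
  intro z
  refine hper z |z.1| 0 (hright _ ?_)
  have h1 := neg_le_abs z.1
  have h2 := le_mul_of_one_le_left (abs_nonneg z.1) hn'
  have h3 : 0 ≤ X := by positivity
  simp only
  omega

/-- A seed at scale `M₁` grows to contain a seed at scale `M₂`, given help at scale `M₁` within
distance of order `M₁ M₂`. -/
lemma phase_one_aux (hQ : 0 < Q) (hK : 0 < K)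
    (hA : A = Q * K + 1) (hN : N = A * K) (hB : Gr Q K B)
    {M₁ : ℕ} (hM₁ : 1 ≤ M₁) {W m H R r : ℤ} (hW : 1 ≤ W)
    (hm : m = (M₁ + 1) * (2 * N + 1)) (hHdef : H = 2 * (m + K + 1) * W)
    (hr : r = scaleC Q K N * M₁)
    (hR : Q * H + 2 * (A * (r * (2 * A + 2))) + r * A ^ 2 + r * (2 * A + 2) + W + K + N ≤ R)
    (hbox : ∀ z : Pt, |z.1| ≤ seedC Q K A * r → |z.2| ≤ seedC Q K A * r → z ∈ B)
    (hH : ∀ z : Pt, |z.1| ≤ R → |z.2| ≤ R → HelpAll Q A N B M₁ z) :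
    ∃ c : Pt, ∀ z : Pt, |z.1 - c.1| ≤ W → |z.2 - c.2| ≤ W → z ∈ B := by
  have hA0 : 0 < A := by rw [hA]; positivity
  have hN0 : 0 < N := by rw [hN]; positivity
  have hKN : K ≤ N := by nlinarith
  have hrle : Q + M₁ * ((2 * N + 1) * Q) + K ≤ r := hr ▸ scale_le hQ hK hA hN hM₁
  have hr1 : K + Q ≤ r := by
    have : 0 ≤ (M₁ : ℤ) * ((2 * N + 1) * Q) := by positivity
    omega
  have hr0 : 0 < r := by omega
  set X := r * (2 * A + 2) with hX
  have hmle : K + N + M₁ * (2 * N + 1) ≤ m := by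
    rw [hm, add_mul, one_mul]; omega
  have hm0 : 0 ≤ (M₁ : ℤ) * (2 * N + 1) := by positivity
  have hmW : 0 ≤ m * W := mul_nonneg (by omega) (by omega)
  have hKW : K ≤ K * W := le_mul_of_one_le_right hK.le hW
  have hHeq : H = 2 * (m * W) + 2 * (K * W) + 2 * W := by rw [hHdef]; ring
  have hQH : H ≤ Q * H := le_mul_of_one_le_left (by omega) (by omega)
  have hAX : 0 ≤ A * X := by positivity
  have hrA : 0 ≤ r * A ^ 2 := by positivity
  have hX0 : 0 ≤ X := by positivity
  have hXK : K ≤ X - -X := by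
    have : r * 2 ≤ r * (2 * A + 2) := mul_le_mul_of_nonneg_left (by omega) hr0.le
    omega
  have hQK : Q * K ≤ Q * H := mul_le_mul_of_nonneg_left (by omega) hQ.le
  have hQK0 : 0 < Q * K := by positivity
  -- the droplet grows upwards until it contains a rectangle of height `H`
  have h1 : Rect (-X) X 0 H ⊆ B := by
    have h1 := drop_grow_to hQ hK hA hN hrle hB le_rfl
      (seed_drop hQ hK hA (by omega) hbox)
      (Q * H - Q * K).toNat fun i hi z hz hz1 hz2 => by
        have e1 : |i * z.1| ≤ A * X := by
          rw [abs_mul]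
          exact mul_le_mul hi hz (abs_nonneg _) hA0.le
        have e2 : r * i ^ 2 ≤ r * A ^ 2 := by
          refine mul_le_mul_of_nonneg_left ?_ (by omega)
          exact sq_le_sq' (abs_le.mp hi).1 (abs_le.mp hi).2
        have e3 : 0 ≤ r * i ^ 2 := by positivity
        have e5 : A * (r * (2 * A + 2)) = A * X := rfl
        rw [abs_le] at e1
        refine (hH z (by omega) ?_).2 i hi
        have e4 : |Q * z.2| ≤ R := by rw [abs_le]; constructor <;> omega
        rw [abs_mul, abs_of_pos hQ] at e4
        exact (le_mul_of_one_le_left (abs_nonneg z.2) (by omega)).trans e4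
    refine (rect_sub_drop hQ hK hA (by omega) ?_).trans h1
    omega
  have hmono : ∀ l' : ℕ, l' < W.toNat → 0 ≤ m * l' ∧ m * l' ≤ m * W := by
    intro l' hl'
    exact ⟨mul_nonneg (by omega) (by omega), mul_le_mul_of_nonneg_left (by omega) (by omega)⟩
  -- the rectangle grows by `W` columns to the right and then to the left; the height `H` was
  -- chosen so that `2 W` rows are left
  have h2 := side_grow hQ hK hA hKN hmle hB hXK h1 W.toNat fun l' hl' => by
    have := hmono l' hl'
    refine (hH _ ?_ ?_).1 <;> simp only [abs_le] <;> constructor <;> omega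
  rw [Int.toNat_of_nonneg (by omega)] at h2
  have h3 := side_grow_left hQ hK hA hKN hmle hB (by omega) h2 W.toNat fun l' hl' => by
    have := hmono l' hl'
    refine (hH _ ?_ ?_).1 <;> simp only [abs_le] <;> constructor <;> omega
  rw [Int.toNat_of_nonneg (by omega)] at h3
  refine ⟨(0, 2 * (m * W) + W), fun z hz1 hz2 => h3 ⟨?_, ?_, ?_, ?_⟩⟩ <;>
    simp only [abs_le] at hz1 hz2 <;> omega

end Phases

/-- The growth of phase one, with a single constant for the range of the help. -/
lemma phase_one {Q K A N : ℤ} (hQ : 0 < Q) (hK : 0 < K) (hA : A = Q * K + 1) (hN : N = A * K) :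
    ∃ C : ℕ, ∀ B : Set Pt, Gr Q K B → ∀ M₁ M₂ : ℕ, 1 ≤ M₁ → 1 ≤ M₂ →
      (∀ z : Pt, |z.1| ≤ seedC Q K A * (scaleC Q K N * M₁) →
        |z.2| ≤ seedC Q K A * (scaleC Q K N * M₁) → z ∈ B) →
      (∀ z : Pt, |z.1| ≤ ((C * M₁ * M₂ : ℕ) : ℤ) → |z.2| ≤ ((C * M₁ * M₂ : ℕ) : ℤ) →
        HelpAll Q A N B M₁ z) →
      ∃ c : Pt, ∀ z : Pt, |z.1 - c.1| ≤ seedC Q K A * (scaleC Q K N * M₂) →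
        |z.2 - c.2| ≤ seedC Q K A * (scaleC Q K N * M₂) → z ∈ B := by
  have hA0 : 0 < A := by rw [hA]; positivity
  have hN0 : 0 < N := by rw [hN]; positivity
  set D := scaleC Q K N with hD
  set G := seedC Q K A with hG
  have hD0 : 1 ≤ D := by
    have : 0 < (2 * N + 1) * Q := by positivity
    simp only [hD, scaleC]; omega
  have hG0 : 1 ≤ G := by
    have : 0 < A * (2 * A + 2) := by positivity
    have : 0 < Q * K := by positivity
    simp only [hG, seedC]; omega
  set C : ℤ := Q * (2 * (2 * (2 * N + 1) + K + 1) * (G * D)) + 2 * (A * (D * (2 * A + 2))) +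
    D * A ^ 2 + D * (2 * A + 2) + G * D + K + N with hC
  have hC0 : 0 ≤ C := by
    have : 0 ≤ D := by omega
    have : 0 ≤ G := by omega
    positivity
  refine ⟨C.toNat, fun B hB M₁ M₂ h1 h2 hbox hH => ?_⟩
  have h1' : (1 : ℤ) ≤ M₁ := by exact_mod_cast h1
  have h2' : (1 : ℤ) ≤ M₂ := by exact_mod_cast h2
  have h12 : (M₁ : ℤ) ≤ M₁ * M₂ := le_mul_of_one_le_right (by omega) h2'
  have h21 : (M₂ : ℤ) ≤ M₁ * M₂ := le_mul_of_one_le_left (by omega) h1'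
  have h11 : 1 ≤ (M₁ : ℤ) * M₂ := by omega
  refine phase_one_aux hQ hK hA hN hB h1 (W := G * (D * M₂)) (r := D * M₁)
    (R := ((C.toNat * M₁ * M₂ : ℕ) : ℤ)) ?_ rfl rfl rfl ?_ hbox hH
  · have : 0 < G * (D * M₂) := by positivity
    omega
  · push_cast
    rw [Int.toNat_of_nonneg hC0]
    set P : ℤ := M₁ * M₂ with hP
    have hD0' : 0 ≤ D := by omega
    have hG0' : 0 ≤ G := by omega
    have t1 : Q * (2 * ((M₁ + 1) * (2 * N + 1) + K + 1) * (G * (D * M₂)))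
        ≤ Q * (2 * (2 * (2 * N + 1) + K + 1) * (G * D)) * P := by
      have e : ((M₁ : ℤ) + 1) * (2 * N + 1) + K + 1 ≤ (2 * (2 * N + 1) + K + 1) * M₁ := by
        nlinarith
      calc Q * (2 * ((M₁ + 1) * (2 * N + 1) + K + 1) * (G * (D * M₂)))
          ≤ Q * (2 * ((2 * (2 * N + 1) + K + 1) * M₁) * (G * (D * M₂))) := by gcongr
        _ = _ := by rw [hP]; ring
    have t2 : 2 * (A * (D * M₁ * (2 * A + 2))) ≤ 2 * (A * (D * (2 * A + 2))) * P := by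
      calc 2 * (A * (D * M₁ * (2 * A + 2))) ≤ 2 * (A * (D * P * (2 * A + 2))) := by gcongr
        _ = _ := by ring
    have t3 : D * M₁ * A ^ 2 ≤ D * A ^ 2 * P := by
      calc D * M₁ * A ^ 2 ≤ D * P * A ^ 2 := by gcongr
        _ = _ := by ring
    have t4 : D * M₁ * (2 * A + 2) ≤ D * (2 * A + 2) * P := by
      calc D * M₁ * (2 * A + 2) ≤ D * P * (2 * A + 2) := by gcongr
        _ = _ := by ring
    have t5 : G * (D * M₂) ≤ G * D * P := by
      calc G * (D * M₂) ≤ G * (D * P) := by gcongr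
        _ = _ := by ring
    have t6 : K ≤ K * P := le_mul_of_one_le_right hK.le h11
    have t7 : N ≤ N * P := le_mul_of_one_le_right hN0.le h11
    have e : C * M₁ * M₂ = C * P := by rw [hP]; ring
    rw [e, hC]
    linarith

/-! ### Probability of help and of seeds on the torus -/

section Torus

variable {n : ℕ} [NeZero n]

lemma torusIter_mono {𝒰 : Finset (Finset Pt)} {A : Set (ZMod n × ZMod n)} {s t : ℕ} (h : s ≤ t) :
    torusIter n 𝒰 s A ⊆ torusIter n 𝒰 t A := by
  induction t, h using Nat.le_induction with
  | base => exact subset_rfl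
  | succ t _ ih => exact ih.trans Set.subset_union_left

lemma subset_torusClosure (𝒰 : Finset (Finset Pt)) (A : Set (ZMod n × ZMod n)) :
    A ⊆ torusClosure n 𝒰 A :=
  fun _ hx => Set.mem_iUnion.mpr ⟨0, hx⟩

lemma torusClosure_step {𝒰 : Finset (Finset Pt)} {A : Set (ZMod n × ZMod n)} {X : Finset Pt}
    (hX : X ∈ 𝒰) {x : ZMod n × ZMod n} (h : ∀ v ∈ X, x + torusProj n v ∈ torusClosure n 𝒰 A) :
    x ∈ torusClosure n 𝒰 A := by
  choose! f hf using fun v hv => Set.mem_iUnion.mp (h v hv)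
  refine Set.mem_iUnion.mpr ⟨X.sup f + 1, Or.inr ⟨X, hX, fun v hv => ?_⟩⟩
  exact torusIter_mono (Finset.le_sup hv) (hf v hv)

/-- The projection onto the torus in the coordinates `g`. -/
def pj (n : ℕ) (g : Pt ≃+ Pt) : Pt →+ ZMod n × ZMod n where
  toFun z := torusProj n (g.symm z)
  map_zero' := by simp [torusProj]
  map_add' x y := by rw [map_add, torusProj_add]

lemma pj_apply (g : Pt ≃+ Pt) (v : Pt) : pj n g (g v) = torusProj n v := by
  simp [pj]

lemma pj_surjective (g : Pt ≃+ Pt) : Function.Surjective (pj n g) := by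
  intro x
  obtain ⟨v, rfl⟩ := torusProj_surjective n x
  exact ⟨g v, pj_apply g v⟩

lemma pj_per (g : Pt ≃+ Pt) (z : Pt) (k l : ℤ) : pj n g (z.1 + n * k, z.2 + n * l) = pj n g z := by
  have e : ((z.1 + n * k, z.2 + n * l) : Pt) = z + n • ((k, l) : Pt) := by
    ext <;> simp
  rw [e, map_add, map_nsmul]
  ext <;> simp

lemma pj_inj (g : Pt ≃+ Pt) {z z' : Pt} (h : pj n g z = pj n g z') (h1 : |z.1 - z'.1| < n)
    (h2 : |z.2 - z'.2| < n) : z = z' := by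
  have h0 : pj n g (z - z') = 0 := by rw [map_sub, h, sub_self]
  have h3 : torusProj n (g.symm (z - z')) = 0 := h0
  simp only [torusProj, Prod.mk_eq_zero] at h3
  obtain ⟨a, ha⟩ := (ZMod.intCast_zmod_eq_zero_iff_dvd _ _).mp h3.1
  obtain ⟨b, hb⟩ := (ZMod.intCast_zmod_eq_zero_iff_dvd _ _).mp h3.2
  have e : g.symm (z - z') = n • ((a, b) : Pt) := by
    refine Prod.ext (ha.trans ?_) (hb.trans ?_) <;> simp
  have e2 : z - z' = n • g (a, b) := by
    rw [← map_nsmul, ← e, g.apply_symm_apply]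
  have e3 : z.1 - z'.1 = n * (g (a, b)).1 := by
    have := congrArg Prod.fst e2
    simpa using this
  have e4 : z.2 - z'.2 = n * (g (a, b)).2 := by
    have := congrArg Prod.snd e2
    simpa using this
  have := Int.eq_zero_of_abs_lt_dvd ⟨_, e3⟩ h1
  have := Int.eq_zero_of_abs_lt_dvd ⟨_, e4⟩ h2
  ext <;> omega

/-- The initially infected sites of the plane, in the coordinates of `π` and seen from `t`. -/
def cfg (π : Pt →+ ZMod n × ZMod n) (ω : ZMod n × ZMod n → Bool) (t : ZMod n × ZMod n) : Set Pt :=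
  {z | ω (t + π z) = true}

/-- The image on the torus of the box of radius `L`, centred at `t`. -/
def tball (π : Pt →+ ZMod n × ZMod n) (t : ZMod n × ZMod n) (L : ℤ) : Set (ZMod n × ZMod n) :=
  {x | ∃ w : Pt, |w.1| ≤ L ∧ |w.2| ≤ L ∧ x = t + π w}

lemma Help.mono {N : ℤ} {B B' : Set Pt} {M : ℕ} {d z : Pt} (h : Help N B M d z) (hB : B ⊆ B') :
    Help N B' M d z :=
  let ⟨k, hk, hkB⟩ := h
  ⟨k, hk, fun w h1 h2 => hB (hkB w h1 h2)⟩

lemma HelpAll.mono {Q A N : ℤ} {B B' : Set Pt} {M : ℕ} {z : Pt} (h : HelpAll Q A N B M z)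
    (hB : B ⊆ B') : HelpAll Q A N B' M z :=
  ⟨h.1.mono hB, fun i hi => (h.2 i hi).mono hB⟩

variable (π : Pt →+ ZMod n × ZMod n)

lemma cfg_mono {ω ω' : ZMod n × ZMod n → Bool} (h : ∀ x, ω x = true → ω' x = true)
    (t : ZMod n × ZMod n) : cfg π ω t ⊆ cfg π ω' t := fun _ hz => h _ hz

lemma Help.shift {N : ℤ} {ω : ZMod n × ZMod n → Bool} {t : ZMod n × ZMod n} {M : ℕ} {d z : Pt}
    (h : Help N (cfg π ω (t + π z)) M d 0) : Help N (cfg π ω t) M d z := by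
  obtain ⟨k, hk, hkB⟩ := h
  refine ⟨k, hk, fun w h1 h2 => ?_⟩
  have := hkB w h1 h2
  simp only [cfg, Set.mem_ofPred_eq, Prod.fst_zero, Prod.snd_zero, zero_add] at this ⊢
  rw [add_assoc, ← map_add] at this
  convert this using 4
  ext <;> simp [add_assoc]

lemma help_dep {N L : ℤ} {E M : ℕ} {d z : Pt} (hN : 0 ≤ N) (hd : |d.1| ≤ E ∧ |d.2| ≤ E)
    (t : ZMod n × ZMod n) (h1 : |z.1| + M * ((2 * N + 1) * E) + N ≤ L)
    (h2 : |z.2| + M * ((2 * N + 1) * E) + N ≤ L) :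
    Dep (tball π t L) {ω | Help N (cfg π ω t) M d z} := by
  intro ω ω' h
  have key : ∀ k : ℕ, k < M → ∀ w : Pt, |w.1| ≤ N → |w.2| ≤ N →
      ω (t + π (z.1 + k * ((2 * N + 1) * d.1) + w.1, z.2 + k * ((2 * N + 1) * d.2) + w.2)) =
        ω' (t + π (z.1 + k * ((2 * N + 1) * d.1) + w.1, z.2 + k * ((2 * N + 1) * d.2) + w.2)) := by
    intro k hk w hw1 hw2
    have b : ∀ x : ℤ, |x| ≤ E → |k * ((2 * N + 1) * x)| ≤ M * ((2 * N + 1) * E) := by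
      intro x hx
      rw [abs_mul, abs_mul, abs_of_nonneg (show (0 : ℤ) ≤ k by omega),
        abs_of_nonneg (show 0 ≤ 2 * N + 1 by omega)]
      have hkM : (k : ℤ) ≤ M := by omega
      have : 0 ≤ 2 * N + 1 := by omega
      gcongr
    refine h _ ⟨_, ?_, ?_, rfl⟩
    · exact ((abs_add_three _ _ _).trans (by have := b _ hd.1; linarith))
    · exact ((abs_add_three _ _ _).trans (by have := b _ hd.2; linarith))
  simp only [Set.mem_ofPred_eq, Help, cfg]
  refine exists_congr fun k => and_congr_right fun hk => forall_congr' fun w =>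
    forall_congr' fun h1 => forall_congr' fun h2 => ?_
  rw [key k hk w h1 h2]

lemma helpAll_dep {Q A N L : ℤ} {E M : ℕ} {z : Pt} (hN : 0 ≤ N) (hQ : |Q| ≤ E) (hA : A ≤ E)
    (hE : 1 ≤ E) (t : ZMod n × ZMod n) (h1 : |z.1| + M * ((2 * N + 1) * E) + N ≤ L)
    (h2 : |z.2| + M * ((2 * N + 1) * E) + N ≤ L) :
    Dep (tball π t L) {ω | HelpAll Q A N (cfg π ω t) M z} := by
  intro ω ω' h
  refine and_congr (help_dep π hN ⟨?_, ?_⟩ t h1 h2 ω ω' h) (forall_congr' fun i =>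
    forall_congr' fun hi => help_dep π hN ⟨hQ, ?_⟩ t h1 h2 ω ω' h)
  · simp
  · simp only [abs_one]; exact_mod_cast hE
  · simp only [abs_neg]; omega

lemma tball_disjoint
    (hπ : ∀ z z' : Pt, π z = π z' → |z.1 - z'.1| < n → |z.2 - z'.2| < n → z = z')
    {L : ℤ} {z z' : Pt} (h1 : |z.1 - z'.1| + 2 * L < n)
    (h2 : |z.2 - z'.2| + 2 * L < n) (h : 2 * L < |z.1 - z'.1|) :
    Disjoint (tball π (π z) L) (tball π (π z') L) := by
  rw [Set.disjoint_left]
  rintro _ ⟨w, hw1, hw2, rfl⟩ ⟨w', hw1', hw2', he⟩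
  rw [← map_add, ← map_add] at he
  simp only [abs_le] at hw1 hw2 hw1' hw2'
  have := hπ _ _ he
    (by
      have := abs_le.mp (le_refl |z.1 - z'.1|)
      rw [abs_lt]
      simp only [Prod.fst_add]
      constructor <;> omega)
    (by
      have := abs_le.mp (le_refl |z.2 - z'.2|)
      rw [abs_lt]
      simp only [Prod.snd_add]
      constructor <;> omega)
  have e1 := congrArg Prod.fst this
  simp only [Prod.fst_add] at e1
  rcases abs_cases (z.1 - z'.1) with h3 | h3 <;> omega

/-- Help is missing with exponentially small probability. -/
lemma help_prob
    (hπ : ∀ z z' : Pt, π z = π z' → |z.1 - z'.1| < n → |z.2 - z'.2| < n → z = z')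
    {p : ℝ} (h0 : 0 ≤ p) (h1 : p ≤ 1) {N E M : ℕ} {d : Pt}
    (hd : |d.1| ≤ E ∧ |d.2| ≤ E) (hd1 : 1 ≤ |d.1| ∨ 1 ≤ |d.2|)
    (hn : M * ((2 * N + 1) * E) + 2 * N < n) (t : ZMod n × ZMod n) (z : Pt) :
    pr p {ω | Help N (cfg π ω t) M d z}ᶜ ≤ (1 - p ^ ((2 * N + 1) ^ 2)) ^ M := by
  classical
  let c : ℕ → Pt → Pt := fun k w =>
    (z.1 + k * ((2 * N + 1) * d.1) + w.1, z.2 + k * ((2 * N + 1) * d.2) + w.2)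
  let S : ℕ → Finset (ZMod n × ZMod n) := fun k => (box N).image fun w => t + π (c k w)
  -- the boxes of different steps are disjoint on the torus
  have hc : ∀ k < M, ∀ l < M, ∀ w ∈ box N, ∀ w' ∈ box N, π (c k w) = π (c l w') → k = l := by
    intro k hk l hl w hw w' hw' he
    obtain ⟨hw1, hw2⟩ := mem_box.mp hw
    obtain ⟨hw1', hw2'⟩ := mem_box.mp hw'
    rw [abs_le] at hw1 hw2 hw1' hw2'
    have e : ∀ x : ℤ, |x| ≤ E → |((k : ℤ) - l) * ((2 * N + 1) * x)| ≤ M * ((2 * N + 1) * E) := by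
      intro x hx
      rw [abs_mul, abs_mul, abs_of_nonneg (show (0 : ℤ) ≤ 2 * N + 1 by omega)]
      have : |(k : ℤ) - l| ≤ M := by rw [abs_le]; constructor <;> omega
      gcongr
    have hn' : (M : ℤ) * ((2 * N + 1) * E) + 2 * N < n := by exact_mod_cast hn
    have e1 := abs_le.mp (e _ hd.1)
    have e2 := abs_le.mp (e _ hd.2)
    have f1 : ((k : ℤ) - l) * ((2 * N + 1) * d.1)
      = k * ((2 * N + 1) * d.1) - l * ((2 * N + 1) * d.1) := by ring
    have f2 : ((k : ℤ) - l) * ((2 * N + 1) * d.2)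
      = k * ((2 * N + 1) * d.2) - l * ((2 * N + 1) * d.2) := by ring
    have hh := hπ _ _ he
      (by rw [abs_lt]; simp only [c]; constructor <;> omega)
      (by rw [abs_lt]; simp only [c]; constructor <;> omega)
    have g1 := congrArg Prod.fst hh
    have g2 := congrArg Prod.snd hh
    simp only [c] at g1 g2
    by_contra hkl
    have hkl' : 1 ≤ |(k : ℤ) - l| := Int.one_le_abs (by omega)
    have big : ∀ x : ℤ, 1 ≤ |x| → 2 * N + 1 ≤ |((k : ℤ) - l) * ((2 * N + 1) * x)| := by
      intro x hx
      rw [abs_mul, abs_mul, abs_of_nonneg (show (0 : ℤ) ≤ 2 * N + 1 by omega)]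
      calc (2 * N + 1 : ℤ) = 1 * ((2 * N + 1) * 1) := by ring
        _ ≤ _ := by gcongr
    rcases hd1 with hd1 | hd1
    · have := big _ hd1
      rcases abs_cases (((k : ℤ) - l) * ((2 * N + 1) * d.1)) with h | h <;> omega
    · have := big _ hd1
      rcases abs_cases (((k : ℤ) - l) * ((2 * N + 1) * d.2)) with h | h <;> omega
  have main := pr_none_le (q := p ^ ((2 * N + 1) ^ 2)) h0 h1 M (fun k => (S k : Set _))
    (fun k => {ω | ∀ x ∈ S k, ω x = true}) (fun k _ => dep_all (S k)) ?_ ?_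
  · refine (pr_mono h0 h1 fun ω hω => ?_).trans main
    intro k hk hk'
    refine hω ⟨k, hk, fun w hw1 hw2 => ?_⟩
    exact hk' _ (Finset.mem_image_of_mem _ (mem_box.mpr ⟨hw1, hw2⟩))
  · intro k hk l hl hkl
    rw [Finset.disjoint_coe, Finset.disjoint_left]
    intro x hx hx'
    obtain ⟨w, hw, rfl⟩ := Finset.mem_image.mp hx
    obtain ⟨w', hw', he⟩ := Finset.mem_image.mp hx'
    exact hkl (hc k hk l hl w hw w' hw' (add_left_cancel he).symm)
  · intro k _
    rw [pr_all]
    exact pow_le_pow_of_le_one h0 h1 (Finset.card_image_le.trans (card_box N).le)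

lemma helpAll_prob
    (hπ : ∀ z z' : Pt, π z = π z' → |z.1 - z'.1| < n → |z.2 - z'.2| < n → z = z')
    {p : ℝ} (h0 : 0 ≤ p) (h1 : p ≤ 1) {Q A N E M : ℕ} (hQ : 1 ≤ Q) (hE : Q + A ≤ E)
    (hn : M * ((2 * N + 1) * E) + 2 * N < n) {ι : Type*} (Z : Finset ι)
    (f : ι → (ZMod n × ZMod n) × Pt) :
    pr p {ω | ∀ i ∈ Z, HelpAll Q A N (cfg π ω (f i).1) M (f i).2}ᶜ ≤
      Z.card * ((2 * A + 2 : ℕ) * (1 - p ^ ((2 * N + 1) ^ 2)) ^ M) := by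
  classical
  let Ds : Finset Pt := insert (0, 1) ((Finset.Icc (-(A : ℤ)) A).image fun i => ((Q : ℤ), -i))
  have hDs : Ds.card ≤ 2 * A + 2 := by
    refine (Finset.card_insert_le _ _).trans ?_
    have := Finset.card_image_le (s := Finset.Icc (-(A : ℤ)) A) (f := fun i => ((Q : ℤ), -i))
    rw [Int.card_Icc] at this
    omega
  have hb : 0 ≤ (1 - p ^ ((2 * N + 1) ^ 2)) ^ M :=
    pow_nonneg (sub_nonneg.mpr (pow_le_one₀ h0 h1)) _
  have hsub : {ω | ∀ i ∈ Z, HelpAll Q A N (cfg π ω (f i).1) M (f i).2}ᶜ ⊆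
      ⋃ i ∈ Z, ⋃ d ∈ Ds, {ω | Help N (cfg π ω (f i).1) M d (f i).2}ᶜ := by
    intro ω hω
    simp only [Set.mem_compl_iff, Set.mem_ofPred_eq] at hω
    push Not at hω
    obtain ⟨i, hi, hω⟩ := hω
    simp only [Set.mem_iUnion]
    refine ⟨i, hi, ?_⟩
    by_contra hcon
    push Not at hcon
    have hc : ∀ d ∈ Ds, Help N (cfg π ω (f i).1) M d (f i).2 := fun d hd => by
      simpa using hcon d hd
    refine hω ⟨hc _ (Finset.mem_insert_self _ _), fun j hj => hc _ (Finset.mem_insert_of_mem ?_)⟩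
    exact Finset.mem_image.mpr ⟨j, Finset.mem_Icc.mpr (abs_le.mp hj), rfl⟩
  refine (pr_mono h0 h1 hsub).trans (pr_biUnion_le' h0 h1 Z _ _ fun i _ => ?_)
  refine (pr_biUnion_le' h0 h1 Ds _ ((1 - p ^ ((2 * N + 1) ^ 2)) ^ M) fun d hd => ?_).trans ?_
  · refine help_prob π hπ h0 h1 (E := E) ?_ ?_ hn _ _
    · rcases Finset.mem_insert.mp hd with rfl | hd
      · simp; omega
      · obtain ⟨i, hi, rfl⟩ := Finset.mem_image.mp hd
        rw [Finset.mem_Icc] at hi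
        simp only [abs_le]
        constructor <;> constructor <;> omega
    · rcases Finset.mem_insert.mp hd with rfl | hd
      · simp
      · obtain ⟨i, hi, rfl⟩ := Finset.mem_image.mp hd
        left
        simp only [Nat.abs_cast]
        exact_mod_cast hQ
  · gcongr

/-- Some of many far apart locations carries a fully infected box surrounded by help. -/
lemma seed_prob
    (hπ : ∀ z z' : Pt, π z = π z' → |z.1 - z'.1| < n → |z.2 - z'.2| < n → z = z')
    {p : ℝ} (h0 : 0 ≤ p) (h1 : p ≤ 1) {Q A N E M r R S J : ℕ} (hQ : 1 ≤ Q)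
    (hE : Q + A ≤ E) (hn : M * ((2 * N + 1) * E) + 2 * N < n)
    (hhalf : ((2 * R + 1 : ℕ) : ℝ) ^ 2 * ((2 * A + 2 : ℕ) * (1 - p ^ ((2 * N + 1) ^ 2)) ^ M) ≤ 1 / 2)
    (hS : r ≤ S ∧ R + M * ((2 * N + 1) * E) + N ≤ S) (hJ : (J + 1) * (2 * S + 1) ≤ n) :
    pr p {ω | ∃ t, (∀ z ∈ box r, ω (t + π z) = true) ∧
      ∀ z ∈ box R, HelpAll Q A N (cfg π ω t) M z}ᶜ ≤ (1 - p ^ ((2 * r + 1) ^ 2) / 2) ^ J := by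
  classical
  let full : ZMod n × ZMod n → Set (ZMod n × ZMod n → Bool) := fun t =>
    {ω | ∀ x ∈ (box r).image fun z => t + π z, ω x = true}
  let help : ZMod n × ZMod n → Set (ZMod n × ZMod n → Bool) := fun t =>
    {ω | ∀ z ∈ box R, HelpAll Q A N (cfg π ω t) M z}
  -- the locations, spaced so that the events they carry depend on disjoint sets of sites
  let u : ℕ → Pt := fun j => ((j : ℤ) * (2 * S + 1), 0)
  have main := pr_none_le (q := p ^ ((2 * r + 1) ^ 2) / 2) h0 h1 J
    (fun j => tball π (π (u j)) S) (fun j => full (π (u j)) ∩ help (π (u j))) ?_ ?_ ?_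
  · refine (pr_mono h0 h1 fun ω hω => ?_).trans main
    intro j hj hj'
    refine hω ⟨π (u j), fun z hz => hj'.1 _ (Finset.mem_image_of_mem _ hz), hj'.2⟩
  · intro j _
    refine Dep.inter ((dep_all _).mono ?_) ?_
    · intro x hx
      obtain ⟨z, hz, rfl⟩ := Finset.mem_image.mp (Finset.mem_coe.mp hx)
      obtain ⟨hz1, hz2⟩ := mem_box.mp hz
      exact ⟨z, by omega, by omega, rfl⟩
    · intro ω ω' h
      refine forall_congr' fun z => forall_congr' fun hz => ?_
      obtain ⟨hz1, hz2⟩ := mem_box.mp hz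
      have hS2 : (R : ℤ) + M * ((2 * N + 1) * E) + N ≤ S := by exact_mod_cast hS.2
      refine helpAll_dep π (E := E) (by omega) ?_ (by omega) (by omega) _ ?_ ?_ ω ω' h
      · simp only [Nat.abs_cast]; omega
      · omega
      · omega
  · intro k hk l hl hkl
    have hJ' : ((J : ℤ) + 1) * (2 * S + 1) ≤ n := by exact_mod_cast hJ
    have e : (u k).1 - (u l).1 = ((k : ℤ) - l) * (2 * S + 1) := by simp only [u]; ring
    have hS0 : (0 : ℤ) ≤ 2 * S + 1 := by omega
    have b1 : |(u k).1 - (u l).1| ≤ J * (2 * S + 1) := by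
      rw [e, abs_mul, abs_of_nonneg hS0]
      have : |(k : ℤ) - l| ≤ J := by rw [abs_le]; constructor <;> omega
      gcongr
    have b2 : 2 * (S : ℤ) + 1 ≤ |(u k).1 - (u l).1| := by
      rw [e, abs_mul, abs_of_nonneg hS0]
      exact le_mul_of_one_le_left hS0 (Int.one_le_abs (by omega))
    have b3 : (u k).2 - (u l).2 = 0 := by simp [u]
    have b4 : 0 ≤ (J : ℤ) * (2 * S + 1) := by positivity
    rw [add_mul, one_mul] at hJ'
    refine tball_disjoint π hπ (by omega) ?_ (by omega)
    rw [b3, abs_zero]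
    omega
  -- a full box is positively correlated with help around it, which has probability at least 1 / 2
  · intro j _
    refine le_trans ?_ (pr_all_inter_ge h0 h1 _ _ ?_)
    · have c1 : p ^ ((2 * r + 1) ^ 2) ≤ p ^ ((box r).image fun z => π (u j) + π z).card :=
        pow_le_pow_of_le_one h0 h1 (Finset.card_image_le.trans (card_box r).le)
      have c2 : 1 / 2 ≤ pr p (help (π (u j))) := by
        have := helpAll_prob π hπ h0 h1 hQ hE hn (box R) fun z => (π (u j), z)
        rw [pr_compl, card_box] at this
        push_cast at this hhalf
        linarith
      calc p ^ ((2 * r + 1) ^ 2) / 2 = p ^ ((2 * r + 1) ^ 2) * (1 / 2) := by ring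
        _ ≤ _ := by gcongr
    · intro ω ω' h hω z hz
      exact (hω z hz).mono (cfg_mono π h _)

end Torus

/-- A lower bound on the percolation probability, in terms of two scales `M₁`, `M₂` and of the
number `J` of possible locations of the seed. -/
lemma percProb_ge {𝒰 : Finset (Finset Pt)} (hU : UpdateFamily 𝒰)
    (h : ∃ u ∈ unitCircle, (stableSet 𝒰 ∩ {w | 0 ≤ dotRR u w}).Finite) :
    ∃ b C : ℕ, 1 ≤ b ∧ 1 ≤ C ∧ ∀ (n M₁ M₂ J : ℕ) (p : ℝ), 0 ≤ p → p ≤ 1 → 1 ≤ M₁ → 1 ≤ M₂ →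
      (J + 1) * (C * M₁ * M₂) ≤ n → C * ((M₁ : ℝ) * M₂) ^ 2 * (1 - p ^ b) ^ M₁ ≤ 1 / 2 →
      1 - (n : ℝ) ^ 2 * (C * (1 - p ^ b) ^ M₂) - (1 - p ^ (C * M₁ ^ 2) / 2) ^ J
        ≤ percProb n 𝒰 p := by
  classical
  obtain ⟨g, Q, K, hQ, hK, hg⟩ := normal_form hU h
  obtain ⟨A, hA⟩ : ∃ A : ℤ, A = Q * K + 1 := ⟨_, rfl⟩
  obtain ⟨N, hN⟩ : ∃ N : ℤ, N = A * K := ⟨_, rfl⟩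
  have hA0 : 0 < A := by rw [hA]; positivity
  have hN0 : 0 < N := by rw [hN]; positivity
  obtain ⟨c₁, hc₁⟩ := phase_one hQ hK hA hN
  have hD0 : 0 < seedC Q K A * scaleC Q K N := by unfold seedC scaleC; positivity
  obtain ⟨c₂, hc₂⟩ : ∃ c₂ : ℕ, (c₂ : ℤ) = seedC Q K A * scaleC Q K N :=
    ⟨_, Int.toNat_of_nonneg hD0.le⟩
  have hbox : ∀ M : ℕ, seedC Q K A * (scaleC Q K N * M) = ((c₂ * M : ℕ) : ℤ) := fun M => by
    push_cast; rw [hc₂]; ring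
  simp only [hbox] at hc₁
  have hc₂' : ∀ (B : Set Pt), Gr Q K B → ∀ M n : ℕ, 1 ≤ M → 1 ≤ n →
      (∀ (z : Pt) (k l : ℤ), (z.1 + n * k, z.2 + n * l) ∈ B → z ∈ B) →
      (∀ z : Pt, |z.1| ≤ seedC Q K A * (scaleC Q K N * M) →
        |z.2| ≤ seedC Q K A * (scaleC Q K N * M) → z ∈ B) →
      (∀ z, HelpAll Q A N B M z) → ∀ z, z ∈ B :=
    fun B hB M n => phase_two hQ hK hA hN hB
  simp only [hbox] at hc₂'
  clear hbox hc₂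
  lift Q to ℕ using hQ.le
  lift A to ℕ using hA0.le
  lift N to ℕ using hN0.le
  obtain ⟨c₃, hc₃⟩ : ∃ c₃, c₃ = (2 * N + 1) * (Q + A) := ⟨_, rfl⟩
  obtain ⟨C, hC⟩ : ∃ C, C = (2 * A + 2) * ((2 * c₁ + 1) ^ 2 + 1) + (2 * c₂ + 1) ^ 2
    + (2 * (c₁ + c₂ + c₃ + N) + 1) := ⟨_, rfl⟩
  refine ⟨(2 * N + 1) ^ 2, C, Nat.one_le_pow _ _ (by omega), by omega,
    fun n M₁ M₂ J p h0 h1 hM₁ hM₂ hJ hhalf => ?_⟩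
  have hM12 : 1 ≤ M₁ * M₂ := Nat.mul_pos hM₁ hM₂
  have hCpos : 1 ≤ C * M₁ * M₂ := by
    rw [mul_assoc]; exact Nat.mul_pos (by omega) hM12
  have hn1 : 1 ≤ n := hCpos.trans (le_trans (Nat.le_mul_of_pos_left _ (by omega)) hJ)
  have : NeZero n := ⟨by omega⟩
  have hCn : C * M₁ * M₂ ≤ n := le_trans (Nat.le_mul_of_pos_left _ (by omega)) hJ
  have h1M : M₁ ≤ M₁ * M₂ := Nat.le_mul_of_pos_right _ hM₂
  have h2M : M₂ ≤ M₁ * M₂ := Nat.le_mul_of_pos_left _ hM₁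
  have hMn : ∀ M, M ≤ M₁ * M₂ → M * ((2 * N + 1) * (Q + A)) + 2 * N < n := by
    intro M hM
    have a1 : M * c₃ ≤ M₁ * M₂ * c₃ := Nat.mul_le_mul_right _ hM
    have a2 : 2 * N + 1 ≤ (2 * N + 1) * (M₁ * M₂) := Nat.le_mul_of_pos_right _ hM12
    have a3 : (c₃ + (2 * N + 1)) * (M₁ * M₂) ≤ C * (M₁ * M₂) :=
      Nat.mul_le_mul_right _ (by rw [hC]; omega)
    have a4 : (c₃ + (2 * N + 1)) * (M₁ * M₂) = M₁ * M₂ * c₃ + (2 * N + 1) * (M₁ * M₂) := by ring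
    rw [mul_assoc] at hCn
    rw [← hc₃]
    omega
  have hπ := fun z z' : Pt => pj_inj (n := n) g (z := z) (z' := z')
  have hq0 : 0 ≤ 1 - p ^ ((2 * N + 1) ^ 2) := sub_nonneg.mpr (pow_le_one₀ h0 h1)
  -- help everywhere at the larger scale
  have hglob := helpAll_prob (pj n g) hπ h0 h1 (Q := Q) (A := A) (N := N) (by omega) le_rfl
    (hMn M₂ h2M) (Finset.univ : Finset (ZMod n × ZMod n)) fun t => (t, 0)
  -- some location carries a seed with help at the smaller scale around it
  have hseed := seed_prob (pj n g) hπ h0 h1 (Q := Q) (A := A) (N := N) (r := c₂ * M₁)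
    (R := c₁ * M₁ * M₂) (S := (c₁ + c₂ + c₃ + N) * (M₁ * M₂)) (J := J) (by omega) le_rfl
    (hMn M₁ h1M) ?_ ⟨?_, ?_⟩ ?_
  rotate_left
  · refine le_trans ?_ hhalf
    have e1 : ((2 * (c₁ * M₁ * M₂) + 1 : ℕ) : ℝ) ≤ (2 * c₁ + 1) * (M₁ * M₂) := by
      have : 2 * (c₁ * M₁ * M₂) + 1 ≤ (2 * c₁ + 1) * (M₁ * M₂) := by
        have : (2 * c₁ + 1) * (M₁ * M₂) = 2 * (c₁ * M₁ * M₂) + M₁ * M₂ := by ring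
        omega
      exact_mod_cast this
    have e2 : ((2 * A + 2 : ℕ) : ℝ) * (2 * c₁ + 1) ^ 2 ≤ C := by
      have : (2 * A + 2) * (2 * c₁ + 1) ^ 2 ≤ C := by
        rw [hC, mul_add]; omega
      exact_mod_cast this
    calc _ ≤ ((2 * c₁ + 1 : ℝ) * (M₁ * M₂)) ^ 2 *
          ((2 * A + 2 : ℕ) * (1 - p ^ ((2 * N + 1) ^ 2)) ^ M₁) := by gcongr
      _ = ((2 * A + 2 : ℕ) * (2 * c₁ + 1 : ℝ) ^ 2) * ((M₁ : ℝ) * M₂) ^ 2 *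
          (1 - p ^ ((2 * N + 1) ^ 2)) ^ M₁ := by ring
      _ ≤ _ := by gcongr
  · exact Nat.mul_le_mul (by omega) h1M
  · have a1 : M₁ * c₃ ≤ M₁ * M₂ * c₃ := Nat.mul_le_mul_right _ h1M
    have a2 : N ≤ N * (M₁ * M₂) := Nat.le_mul_of_pos_right _ hM12
    have a4 : (c₁ + c₂ + c₃ + N) * (M₁ * M₂)
      = c₁ * M₁ * M₂ + c₂ * (M₁ * M₂) + M₁ * M₂ * c₃ + N * (M₁ * M₂) := by ring
    rw [← hc₃]
    omega
  · refine le_trans (Nat.mul_le_mul_left _ ?_) hJ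
    calc 2 * ((c₁ + c₂ + c₃ + N) * (M₁ * M₂)) + 1
        ≤ (2 * (c₁ + c₂ + c₃ + N) + 1) * (M₁ * M₂) := by
          have : (2 * (c₁ + c₂ + c₃ + N) + 1) * (M₁ * M₂)
            = 2 * ((c₁ + c₂ + c₃ + N) * (M₁ * M₂)) + M₁ * M₂ := by ring
          omega
      _ ≤ C * (M₁ * M₂) := Nat.mul_le_mul_right _ (by rw [hC]; omega)
      _ = _ := by ring
  set F := {ω | ∃ t, (∀ z ∈ box (c₂ * M₁), ω (t + pj n g z) = true) ∧
      ∀ z ∈ box (c₁ * M₁ * M₂), HelpAll Q A N (cfg (pj n g) ω t) M₁ z} with hF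
  set G := {ω | ∀ t ∈ (Finset.univ : Finset (ZMod n × ZMod n)),
      HelpAll Q A N (cfg (pj n g) ω t) M₂ 0} with hG
  -- the seed at `t` grows by phase one to a seed at the larger scale, from which phase two infects
  -- the torus
  have hsub : (Gᶜ ∪ Fᶜ)ᶜ ⊆
      {ω : ZMod n × ZMod n → Bool | torusClosure n 𝒰 {x | ω x = true} = Set.univ} := by
    intro ω hω
    rw [Set.compl_union, compl_compl, compl_compl] at hω
    obtain ⟨hωG, t, hfull, hhelp⟩ := hω
    let B : ZMod n × ZMod n → Set Pt := fun t =>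
      {z | t + pj n g z ∈ torusClosure n 𝒰 {x | ω x = true}}
    have hcB : ∀ t, cfg (pj n g) ω t ⊆ B t := fun t z hz => subset_torusClosure _ _ hz
    have hGr : ∀ t, Gr Q K (B t) := by
      intro t p z hz
      obtain ⟨X, hX, hXz⟩ := hg p
      refine torusClosure_step hX fun v hv => ?_
      obtain ⟨b1, b2, b3, b4, b5⟩ := hXz v hv
      have := hz (g v) b1 b2 b3 b4 b5
      rw [add_assoc, ← pj_apply g v, ← map_add]
      exact this
    obtain ⟨c, hc⟩ := hc₁ (B t) (hGr t) M₁ M₂ hM₁ hM₂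
      (fun z hz1 hz2 => hcB t (hfull z (mem_box.mpr ⟨hz1, hz2⟩)))
      (fun z hz1 hz2 => (hhelp z (mem_box.mpr ⟨hz1, hz2⟩)).mono (hcB t))
    have hall := hc₂' _ (hGr (t + pj n g c)) M₂ n hM₂ hn1
      (fun z k l hz => by
        simp only [B, Set.mem_ofPred_eq, pj_per] at hz
        exact hz)
      (fun z hz1 hz2 => by
        have := hc (c + z) (by simpa using hz1) (by simpa using hz2)
        simp only [B, Set.mem_ofPred_eq, map_add] at this ⊢
        rwa [add_assoc])
      (fun z => by
        have h := hωG (t + pj n g c + pj n g z) (Finset.mem_univ _)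
        exact HelpAll.mono ⟨Help.shift _ h.1, fun i hi => Help.shift _ (h.2 i hi)⟩ (hcB _))
    refine Set.eq_univ_of_forall fun x => ?_
    obtain ⟨z, hz⟩ := pj_surjective g (x - (t + pj n g c))
    have := hall z
    simp only [B, Set.mem_ofPred_eq] at this
    rwa [hz, add_sub_cancel] at this
  rw [percProb_eq]
  refine le_trans ?_ (pr_mono h0 h1 hsub)
  rw [pr_compl]
  have hu := pr_union_le h0 h1 Gᶜ Fᶜ
  have hcard : ((Finset.univ : Finset (ZMod n × ZMod n)).card : ℝ) = (n : ℝ) ^ 2 := by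
    rw [Finset.card_univ, Fintype.card_prod, ZMod.card]
    push_cast; ring
  rw [hcard] at hglob
  have e1 : (n : ℝ) ^ 2 * ((2 * A + 2 : ℕ) * (1 - p ^ ((2 * N + 1) ^ 2)) ^ M₂)
      ≤ (n : ℝ) ^ 2 * (C * (1 - p ^ ((2 * N + 1) ^ 2)) ^ M₂) := by
    have : ((2 * A + 2 : ℕ) : ℝ) ≤ C := by
      have : 2 * A + 2 ≤ C := by
        rw [hC, mul_add]; omega
      exact_mod_cast this
    gcongr
  have e2 : (1 - p ^ ((2 * (c₂ * M₁) + 1) ^ 2) / 2) ^ J ≤ (1 - p ^ (C * M₁ ^ 2) / 2) ^ J := by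
    have i1 : p ^ (C * M₁ ^ 2) ≤ p ^ ((2 * (c₂ * M₁) + 1) ^ 2) := by
      refine pow_le_pow_of_le_one h0 h1 ?_
      calc (2 * (c₂ * M₁) + 1) ^ 2 ≤ ((2 * c₂ + 1) * M₁) ^ 2 :=
            Nat.pow_le_pow_left (by rw [add_mul, one_mul, mul_assoc]; omega) 2
        _ = (2 * c₂ + 1) ^ 2 * M₁ ^ 2 := by ring
        _ ≤ C * M₁ ^ 2 := Nat.mul_le_mul_right _ (by rw [hC]; omega)
    have i2 : p ^ ((2 * (c₂ * M₁) + 1) ^ 2) ≤ 1 := pow_le_one₀ h0 h1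
    refine pow_le_pow_left₀ (by linarith) (by linarith) J
  linarith

/-! ### Choice of the scales -/

lemma one_sub_pow_le {q : ℝ} (h1 : q ≤ 1) (M : ℕ) : (1 - q) ^ M ≤ Real.exp (-(M * q)) := by
  calc (1 - q) ^ M ≤ Real.exp (-q) ^ M :=
        pow_le_pow_left₀ (by linarith) (Real.one_sub_le_exp_neg q) M
    _ = _ := by
      rw [← Real.exp_nat_mul]
      congr 1
      ring

lemma eventually_small (C : ℝ) :
    ∃ Y : ℝ, ∀ y : ℝ, Y ≤ y → C * y ^ 28 * Real.exp (-(y / 2)) ≤ 1 / 2 := by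
  have h := (Real.tendsto_pow_mul_exp_neg_atTop_nhds_zero 28).comp
    (Filter.tendsto_id.atTop_div_const (show (0 : ℝ) < 2 by norm_num))
  have h2 := h.const_mul (C * 2 ^ 28)
  rw [mul_zero] at h2
  obtain ⟨Y, hY⟩ := Filter.eventually_atTop.mp (h2.eventually_le_const (show (0 : ℝ) < 1 / 2 by
    norm_num))
  refine ⟨Y, fun y hy => le_trans (le_of_eq ?_) (hY y hy)⟩
  simp only [Function.comp, id]
  ring

/-- With `y = (log n) ^ (1 / 8)`, the scales `M₁ = ⌊y ^ 2⌋`, `M₂ = M₁ ^ 6` and density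
`p = y ^ (-1 / b)` make percolation likely. -/
lemma numeric {b C : ℕ} (hb : 1 ≤ b) (hC : 1 ≤ C) :
    ∃ Y : ℝ, ∀ (n : ℕ) (y p : ℝ), Y ≤ y → (n : ℝ) = Real.exp (y ^ 8) → 0 ≤ p → p ≤ 1 →
      p ^ b = y⁻¹ →
      ∃ M₁ M₂ J : ℕ, 1 ≤ M₁ ∧ 1 ≤ M₂ ∧ (J + 1) * (C * M₁ * M₂) ≤ n ∧
        C * ((M₁ : ℝ) * M₂) ^ 2 * (1 - p ^ b) ^ M₁ ≤ 1 / 2 ∧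
        (n : ℝ) ^ 2 * (C * (1 - p ^ b) ^ M₂) ≤ 1 / 4 ∧ (1 - p ^ (C * M₁ ^ 2) / 2) ^ J ≤ 1 / 4 := by
  obtain ⟨Y, hY⟩ := eventually_small C
  refine ⟨max Y (C + 7), fun n y p hy hn h0 h1 hp => ?_⟩
  have hE1 := hY y ((le_max_left _ _).trans hy)
  have hyC := (le_max_right Y _).trans hy
  have hC' : (1 : ℝ) ≤ C := by exact_mod_cast hC
  have hy7 : 7 ≤ y := by linarith
  have hy0 : 0 < y := by linarith
  have hy1 : 1 ≤ y := by linarith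
  have hq1 : y⁻¹ ≤ 1 := inv_le_one_of_one_le₀ hy1
  obtain ⟨s, hs⟩ : ∃ s : ℕ, s = ⌊y ^ 2⌋₊ := ⟨_, rfl⟩
  have hsle : (s : ℝ) ≤ y ^ 2 := hs ▸ Nat.floor_le (by positivity)
  have hsge : y ^ 2 / 2 ≤ s := by
    have := Nat.sub_one_lt_floor (y ^ 2)
    rw [← hs] at this
    nlinarith
  have hs1 : 1 ≤ s := by
    have : (0 : ℝ) < s := lt_of_lt_of_le (by positivity) hsge
    exact_mod_cast this
  obtain ⟨J, hJ⟩ : ∃ J : ℕ, J = ⌊Real.exp (y ^ 8 / 2)⌋₊ := ⟨_, rfl⟩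
  have hJle : (J : ℝ) ≤ Real.exp (y ^ 8 / 2) := hJ ▸ Nat.floor_le (Real.exp_pos _).le
  have hy8 : y ≤ y ^ 8 := le_self_pow₀ hy1 (by norm_num)
  have hexp2 : 2 ≤ Real.exp (y ^ 8 / 2) := by
    have := Real.add_one_le_exp (y ^ 8 / 2)
    linarith
  have hJge : Real.exp (y ^ 8 / 2) / 2 ≤ J := by
    have := Nat.sub_one_lt_floor (Real.exp (y ^ 8 / 2))
    rw [← hJ] at this
    linarith
  have hexp : Real.exp (y ^ 8) = Real.exp (y ^ 8 / 2) * Real.exp (y ^ 8 / 2) := by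
    rw [← Real.exp_add]; ring_nf
  have hCy : 2 * C * y ^ 28 ≤ Real.exp (y / 2) := by
    rw [Real.exp_neg] at hE1
    have := mul_le_mul_of_nonneg_right hE1 (Real.exp_pos (y / 2)).le
    rw [mul_assoc, inv_mul_cancel₀ (Real.exp_pos _).ne'] at this
    linarith
  refine ⟨s, s ^ 6, J, hs1, Nat.one_le_pow _ _ hs1, ?_, ?_, ?_, ?_⟩
  · have e1 : (C : ℝ) * s * s ^ 6 ≤ C * y ^ 28 := by
      calc (C : ℝ) * s * s ^ 6 = C * s ^ 7 := by ring
        _ ≤ C * (y ^ 2) ^ 7 := by gcongr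
        _ = C * y ^ 14 := by ring
        _ ≤ C * y ^ 28 := by gcongr <;> norm_num
    have e2 : Real.exp (y / 2) ≤ Real.exp (y ^ 8 / 2) := Real.exp_le_exp.mpr (by linarith)
    have e3 : ((J : ℝ) + 1) * (C * s * s ^ 6) ≤ n := by
      calc ((J : ℝ) + 1) * (C * s * s ^ 6)
          ≤ (2 * Real.exp (y ^ 8 / 2)) * (Real.exp (y ^ 8 / 2) / 2) := by
            gcongr <;> linarith
        _ = n := by rw [hn, hexp]; ring
    exact_mod_cast e3
  · rw [hp]
    have e1 : (1 - y⁻¹) ^ s ≤ Real.exp (-(y / 2)) := by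
      refine (one_sub_pow_le hq1 s).trans (Real.exp_le_exp.mpr ?_)
      have : y ^ 2 / 2 * y⁻¹ ≤ s * y⁻¹ := by gcongr
      have e : y ^ 2 / 2 * y⁻¹ = y / 2 := by field_simp
      linarith
    refine le_trans ?_ hE1
    have e2 : ((s : ℝ) * (s ^ 6 : ℕ)) ^ 2 ≤ y ^ 28 := by
      push_cast
      calc ((s : ℝ) * s ^ 6) ^ 2 = s ^ 14 := by ring
        _ ≤ (y ^ 2) ^ 14 := by gcongr
        _ = y ^ 28 := by ring
    have : 0 ≤ 1 - y⁻¹ := by linarith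
    gcongr
  · rw [hp]
    have e1 : (1 - y⁻¹) ^ (s ^ 6) ≤ Real.exp (-(y ^ 11 / 64)) := by
      refine (one_sub_pow_le hq1 _).trans (Real.exp_le_exp.mpr ?_)
      push_cast
      have : (y ^ 2 / 2) ^ 6 * y⁻¹ ≤ s ^ 6 * y⁻¹ := by gcongr
      have e : (y ^ 2 / 2) ^ 6 * y⁻¹ = y ^ 11 / 64 := by field_simp; norm_num
      linarith
    have e2 : 2 * y ^ 8 + y / 2 ≤ y ^ 11 / 64 := by
      have h3 : (7 : ℝ) ^ 3 ≤ y ^ 3 := by gcongr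
      have : y ^ 8 * 7 ^ 3 ≤ y ^ 8 * y ^ 3 := by gcongr
      have e : y ^ 11 = y ^ 8 * y ^ 3 := by ring
      linarith
    have e3 : (C : ℝ) * Real.exp (-(y / 2)) ≤ 1 / 4 := by
      have h28 : (7 : ℝ) ^ 28 ≤ y ^ 28 := by gcongr
      have : (C * Real.exp (-(y / 2))) * 2 ≤ (C * Real.exp (-(y / 2))) * y ^ 28 := by
        gcongr
        exact le_trans (by norm_num) h28
      linarith
    calc (n : ℝ) ^ 2 * (C * (1 - y⁻¹) ^ (s ^ 6))
        ≤ Real.exp (y ^ 8) ^ 2 * (C * Real.exp (-(y ^ 11 / 64))) := by rw [hn]; gcongr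
      _ = C * Real.exp (2 * y ^ 8 - y ^ 11 / 64) := by
        rw [← Real.exp_nat_mul, sub_eq_add_neg, Real.exp_add]
        push_cast; ring
      _ ≤ C * Real.exp (-(y / 2)) := by
        gcongr
        linarith
      _ ≤ 1 / 4 := e3
  · have hpy : y⁻¹ ≤ p := hp ▸ pow_le_of_le_one h0 h1 (by omega)
    have hy1' : Real.exp (-y) ≤ y⁻¹ := by
      rw [Real.exp_neg]
      gcongr
      have := Real.add_one_le_exp y
      linarith
    have hP : Real.exp (-(C * y ^ 5)) ≤ p ^ (C * s ^ 2) := by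
      calc Real.exp (-(C * y ^ 5)) ≤ Real.exp (-(((C * s ^ 2 : ℕ) : ℝ) * y)) := by
            apply Real.exp_le_exp.mpr
            push_cast
            have : (C : ℝ) * s ^ 2 * y ≤ C * (y ^ 2) ^ 2 * y := by gcongr
            have e : (C : ℝ) * (y ^ 2) ^ 2 * y = C * y ^ 5 := by ring
            linarith
        _ = Real.exp (-y) ^ (C * s ^ 2) := by
            rw [← Real.exp_nat_mul]; congr 1; ring
        _ ≤ p ^ (C * s ^ 2) := pow_le_pow_left₀ (Real.exp_pos _).le (hy1'.trans hpy) _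
    have hP1 : p ^ (C * s ^ 2) ≤ 1 := pow_le_one₀ h0 h1
    have e5 : 8 ≤ Real.exp (y ^ 8 / 2) * Real.exp (-(C * y ^ 5)) := by
      rw [← Real.exp_add]
      have a1 : (7 : ℝ) ^ 2 ≤ y ^ 2 := by gcongr
      have a2 : y * 7 ^ 2 ≤ y * y ^ 2 := by gcongr
      have a3 : 1 ≤ y ^ 3 / 2 - C := by
        have : y ^ 3 = y * y ^ 2 := by ring
        linarith
      have a4 : y ≤ y ^ 5 := le_self_pow₀ hy1 (by norm_num)
      have a5 : y ^ 5 * 1 ≤ y ^ 5 * (y ^ 3 / 2 - C) := by gcongr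
      have a6 : y ^ 8 / 2 + -(C * y ^ 5) = y ^ 5 * (y ^ 3 / 2 - C) := by ring
      have := Real.add_one_le_exp (y ^ 8 / 2 + -(C * y ^ 5))
      linarith
    have e6 : 2 ≤ (J : ℝ) * (p ^ (C * s ^ 2) / 2) := by
      calc (2 : ℝ) ≤ (Real.exp (y ^ 8 / 2) / 2) * (Real.exp (-(C * y ^ 5)) / 2) := by linarith
        _ ≤ _ := by gcongr
    refine (one_sub_pow_le (by linarith) J).trans ?_
    calc Real.exp (-(J * (p ^ (C * s ^ 2) / 2))) ≤ Real.exp (-2) :=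
          Real.exp_le_exp.mpr (by linarith)
      _ ≤ 1 / 4 := by
        rw [Real.exp_neg, ← one_div]
        refine one_div_le_one_div_of_le (by norm_num) ?_
        have h := Real.exp_one_gt_d9
        have e : Real.exp 2 = Real.exp 1 * Real.exp 1 := by rw [← Real.exp_add]; norm_num
        rw [e]
        nlinarith

/-- Percolation is likely at a small negative power of `log n`. -/
lemma percProb_ge_half {𝒰 : Finset (Finset Pt)} (hU : UpdateFamily 𝒰)
    (h : ∃ u ∈ unitCircle, (stableSet 𝒰 ∩ {w | 0 ≤ dotRR u w}).Finite) :
    ∃ c : ℝ, 0 < c ∧ c ≤ 1 ∧ ∃ N : ℕ, ∀ n : ℕ, N ≤ n →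
      (Real.log n) ^ (-c) ∈ Set.Icc (0 : ℝ) 1 ∧ 1 / 2 ≤ percProb n 𝒰 ((Real.log n) ^ (-c)) := by
  obtain ⟨b, C, hb, hC, hmain⟩ := percProb_ge hU h
  obtain ⟨Y, hY⟩ := numeric hb hC
  have hb' : (1 : ℝ) ≤ b := by exact_mod_cast hb
  refine ⟨1 / (8 * b), by positivity, ?_, ⌈Real.exp ((max Y 1) ^ 8)⌉₊, fun n hn => ?_⟩
  · rw [div_le_one (by positivity)]
    linarith
  have hn1 : Real.exp ((max Y 1) ^ 8) ≤ n := (Nat.le_ceil _).trans (by exact_mod_cast hn)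
  have hn0 : (0 : ℝ) < n := (Real.exp_pos _).trans_le hn1
  have hl : (max Y 1) ^ 8 ≤ Real.log n := (Real.le_log_iff_exp_le hn0).mpr hn1
  have hm1 : 1 ≤ max Y 1 := le_max_right _ _
  have hl1 : 1 ≤ Real.log n := (one_le_pow₀ hm1).trans hl
  have hl0 : 0 ≤ Real.log n := by linarith
  have hp0 : 0 ≤ (Real.log n) ^ (-(1 / (8 * (b : ℝ)))) := Real.rpow_nonneg hl0 _
  have hp1 : (Real.log n) ^ (-(1 / (8 * (b : ℝ)))) ≤ 1 :=
    Real.rpow_le_one_of_one_le_of_nonpos hl1 (by rw [neg_nonpos]; positivity)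
  refine ⟨⟨hp0, hp1⟩, ?_⟩
  have hy8 : ((Real.log n) ^ (1 / 8 : ℝ)) ^ 8 = Real.log n := by
    rw [← Real.rpow_natCast, ← Real.rpow_mul hl0]
    norm_num
  have hYy : Y ≤ (Real.log n) ^ (1 / 8 : ℝ) := by
    refine (le_max_left Y 1).trans (le_of_pow_le_pow_left₀ (n := 8) (by norm_num)
      (Real.rpow_nonneg hl0 _) ?_)
    rw [hy8]
    exact hl
  have hpb : ((Real.log n) ^ (-(1 / (8 * (b : ℝ))))) ^ b = ((Real.log n) ^ (1 / 8 : ℝ))⁻¹ := by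
    rw [← Real.rpow_natCast, ← Real.rpow_mul hl0, ← Real.rpow_neg hl0]
    congr 1
    field_simp
  obtain ⟨M₁, M₂, J, h1, h2, h3, h4, h5, h6⟩ := hY n _ _ hYy
    (by rw [hy8, Real.exp_log hn0]) hp0 hp1 hpb
  have := hmain n M₁ M₂ J _ hp0 hp1 h1 h2 h3 h4
  linarith

end PolyLog

/-- polylogarithmic bounds on the critical probability for critical families. -/
theorem stmt11 (𝒰 : Finset (Finset Pt)) (hU : UpdateFamily 𝒰) (hcrit : Critical 𝒰) :
    ∃ c₁ c₂ : ℝ, c₂ ≤ c₁ ∧ 0 < c₂ ∧ ∃ N : ℕ, ∀ n : ℕ, N ≤ n →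
      (Real.log n) ^ (-c₁) ≤ pCrit n 𝒰 ∧ pCrit n 𝒰 ≤ (Real.log n) ^ (-c₂) := by
  obtain ⟨N₁, h₁⟩ := PolyLog.percProb_lt_half 𝒰 hcrit.2
  obtain ⟨c, hc0, hc1, N₂, h₂⟩ := PolyLog.percProb_ge_half hU hcrit.1
  refine ⟨3, c, by linarith, hc0, max N₁ N₂, fun n hn => ?_⟩
  have hmem := h₂ n ((le_max_right _ _).trans hn)
  constructor
  · refine le_csInf ⟨_, hmem⟩ fun p hp => ?_
    by_contra hlt
    exact absurd hp.2 (not_le.mpr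
      (h₁ n ((le_max_left _ _).trans hn) p hp.1.1 hp.1.2 (not_le.mp hlt)))
  · exact csInf_le ⟨0, fun p hp => hp.1.1⟩ hmem
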